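/- arXiv:1506.06688 — 3 statements merged into one kernel-verified Lean document; each statement's English description precedes it below -/
import Mathlib

section
/- Let M be a matrix with t ≥ 1 columns and u ≥ 1 rows and entries in {0, 1, −1} whose row-column graph G(M) is connected. Then the growth rates gr(Geom(M)) = lim_{n→∞} |Geom_n(M)|^{1/n} and gr(Grid(M)) = lim_{n→∞} |Grid_n(M)|^{1/n} both exist, and gr(Geom(M)) < gr(Grid(M)) if and only if G(M) contains a cycle (i.e., is not acyclic). -/
noncomputable section

open Filter

open scoped Classical

/-- The point `p` (0-based) of the permutation `σ` lies in the cell `(i, j)` of the gridding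
determined by the column dividers `c` and row dividers `r`. -/
def InCell {t u k : ℕ} (σ : Equiv.Perm (Fin k)) (c : Fin (t + 1) → ℕ) (r : Fin (u + 1) → ℕ)
    (i : Fin t) (j : Fin u) (p : Fin k) : Prop :=
  c i.castSucc ≤ (p : ℕ) ∧ (p : ℕ) < c i.succ ∧
    r j.castSucc ≤ (σ p : ℕ) ∧ (σ p : ℕ) < r j.succ

/-- `c`, `r` form an `M`-gridding of the permutation `σ`. -/
def IsGridding {t u k : ℕ} (M : Fin t → Fin u → ℤ) (σ : Equiv.Perm (Fin k))
    (c : Fin (t + 1) → ℕ) (r : Fin (u + 1) → ℕ) : Prop :=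
  Monotone c ∧ Monotone r ∧ c 0 = 0 ∧ c (Fin.last t) = k ∧ r 0 = 0 ∧ r (Fin.last u) = k ∧
    ∀ (i : Fin t) (j : Fin u),
      (M i j = 0 → ∀ p : Fin k, ¬ InCell σ c r i j p) ∧
        (M i j = 1 → ∀ p q : Fin k, InCell σ c r i j p → InCell σ c r i j q →
          p < q → σ p < σ q) ∧
          (M i j = -1 → ∀ p q : Fin k, InCell σ c r i j p → InCell σ c r i j q →
            p < q → σ q < σ p)

/-- Membership in the monotone grid class `Grid(M)`. -/
def InGridClass {t u : ℕ} (M : Fin t → Fin u → ℤ) {k : ℕ} (σ : Equiv.Perm (Fin k)) : Prop :=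
  ∃ (c : Fin (t + 1) → ℕ) (r : Fin (u + 1) → ℕ), IsGridding M σ c r

/-- `|Grid_n(M)|`, the number of permutations of length `n` in the grid class of `M`. -/
def gridCount {t u : ℕ} (M : Fin t → Fin u → ℤ) (n : ℕ) : ℕ :=
  Nat.card {σ : Equiv.Perm (Fin n) // InGridClass M σ}

/-- The standard figure `Λ_M ⊆ ℝ²` of a 0/±1 matrix `M`. -/
def stdFigure {t u : ℕ} (M : Fin t → Fin u → ℤ) : Set (ℝ × ℝ) :=
  {p : ℝ × ℝ | ∃ (i : Fin t) (j : Fin u) (s : ℝ), 0 < s ∧ s < 1 ∧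
    ((M i j = 1 ∧ p = (((i : ℕ) : ℝ) + s, ((j : ℕ) : ℝ) + s)) ∨
      (M i j = -1 ∧ p = (((i : ℕ) : ℝ) + s, ((j : ℕ) : ℝ) + 1 - s)))}

/-- Membership in the geometric grid class `Geom(M)`. -/
def InGeomClass {t u : ℕ} (M : Fin t → Fin u → ℤ) {n : ℕ} (σ : Equiv.Perm (Fin n)) : Prop :=
  ∃ f : Fin n → ℝ × ℝ, (∀ p, f p ∈ stdFigure M) ∧
    (∀ a b : Fin n, a < b → (f a).1 < (f b).1) ∧
    ∀ a b : Fin n, (f a).2 < (f b).2 ↔ σ a < σ b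

/-- `|Geom_n(M)|`. -/
def geomCount {t u : ℕ} (M : Fin t → Fin u → ℤ) (n : ℕ) : ℕ :=
  Nat.card {σ : Equiv.Perm (Fin n) // InGeomClass M σ}

/-- The row-column graph `G(M)`. -/
def rowColGraph {t u : ℕ} (M : Fin t → Fin u → ℤ) : SimpleGraph (Fin t ⊕ Fin u) :=
  SimpleGraph.fromRel fun x y =>
    ∃ (i : Fin t) (j : Fin u), x = Sum.inl i ∧ y = Sum.inr j ∧ M i j ≠ 0


/-! ### Part 0: comparison of growth rates up to polynomial factors -/

theorem poly_root_tendsto (K : ℝ) (hK : 1 ≤ K) (d : ℕ) :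
    Tendsto (fun n : ℕ => (K * ((n : ℝ) + 1) ^ d) ^ (1 / (n : ℝ))) atTop (nhds 1) := by
  have h1 : Tendsto (fun n : ℕ => K ^ (1 / (n : ℝ))) atTop (nhds 1) := by
    have := (tendsto_one_div_atTop_nhds_zero_nat (𝕜 := ℝ))
    have h2 := (Real.continuousAt_const_rpow (a := K) (b := 0) (by linarith)).tendsto.comp this
    simpa [Function.comp_def] using h2
  have h2 : Tendsto (fun n : ℕ => ((n : ℝ) + 1) ^ (1 / (n : ℝ))) atTop (nhds 1) := by
    have := (tendsto_rpow_div_mul_add (1 : ℝ) 1 (-1) (by norm_num)).comp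
      (tendsto_natCast_atTop_atTop.comp (tendsto_add_atTop_nat 1))
    refine this.congr fun n => ?_
    simp
  have h3 := h1.mul (h2.pow d)
  simp only [one_pow, mul_one] at h3
  refine h3.congr fun n => ?_
  have hn : (0:ℝ) ≤ (n:ℝ) + 1 := by positivity
  rw [Real.mul_rpow (by linarith) (by positivity), ← Real.rpow_natCast, ← Real.rpow_natCast,
    ← Real.rpow_mul hn, ← Real.rpow_mul hn, mul_comm (1 / (n : ℝ))]

theorem growth_compare (a b : ℕ → ℝ) (L : ℝ) (K : ℝ) (hK : 1 ≤ K) (d : ℕ)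
    (ha : ∀ n, 0 ≤ a n) (hb : ∀ n, 0 ≤ b n)
    (hL : Tendsto (fun n : ℕ => b n ^ (1 / (n : ℝ))) atTop (nhds L))
    (h1 : ∀ n : ℕ, a n ≤ K * ((n : ℝ) + 1) ^ d * b n)
    (h2 : ∀ n : ℕ, b n ≤ K * ((n : ℝ) + 1) ^ d * a n) :
    Tendsto (fun n : ℕ => a n ^ (1 / (n : ℝ))) atTop (nhds L) := by
  have hp := poly_root_tendsto K hK d
  have hpos : ∀ n : ℕ, 0 < K * ((n : ℝ) + 1) ^ d := fun n => by positivity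
  have hu := hp.mul hL
  have hl := hL.div hp one_ne_zero
  rw [one_mul] at hu
  rw [div_one] at hl
  refine tendsto_of_tendsto_of_tendsto_of_le_of_le hl hu (fun n => ?_) (fun n => ?_)
  · simp only [Pi.div_apply]
    rw [← Real.div_rpow (hb n) (hpos n).le]
    refine Real.rpow_le_rpow (div_nonneg (hb n) (hpos n).le) ?_ (by positivity)
    rw [div_le_iff₀ (hpos n), mul_comm]
    exact h2 n
  · show _ ≤ (K * ((n : ℝ) + 1) ^ d) ^ (1 / (n : ℝ)) * b n ^ (1 / (n : ℝ))
    rw [← Real.mul_rpow (hpos n).le (hb n)]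
    exact Real.rpow_le_rpow (ha n) (h1 n) (by positivity)

theorem growth_const (lam : ℝ) (h : 0 < lam) :
    Tendsto (fun n : ℕ => ((lam ^ 2) ^ n : ℝ) ^ (1 / (n : ℝ))) atTop (nhds (lam ^ 2)) := by
  refine (tendsto_const_nhds (x := lam ^ 2)).congr' ?_
  filter_upwards [eventually_ge_atTop 1] with n hn
  rw [one_div, Real.pow_rpow_inv_natCast (by positivity) (by omega)]


/-! ### Part 1: Perron eigenvector of a connected graph -/

theorem perron_graph {V : Type} [Fintype V] [Nontrivial V] (G : SimpleGraph V)
    (hG : G.Connected) :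
    ∃ (x : V → ℝ) (lam : ℝ), (∀ v, 0 < x v) ∧ 0 < lam ∧
      ∀ v, ∑ w with G.Adj v w, x w = lam * x v := by
  set A : Matrix V V ℝ := G.adjMatrix ℝ with hA
  have hAs : A.IsSymm := G.isSymm_adjMatrix
  have hAnn : ∀ v w, 0 ≤ A v w := fun v w => by
    rw [hA, SimpleGraph.adjMatrix_apply]; split_ifs <;> norm_num
  let F : (V → ℝ) → ℝ := fun x => dotProduct x (A.mulVec x)
  have hF : ∀ x, F x = ∑ v, ∑ w, x v * (A v w * x w) := fun x => by
    simp [F, dotProduct, Matrix.mulVec, Finset.mul_sum]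
  have hFc : Continuous F := by
    have : F = fun x => ∑ v, ∑ w, x v * (A v w * x w) := funext hF
    rw [this]; fun_prop
  let S : Set (V → ℝ) := {x | dotProduct x x = 1}
  have hSc : IsCompact S := by
    refine Metric.isCompact_of_isClosed_isBounded ?_ ?_
    · exact isClosed_eq (by simp only [dotProduct]; fun_prop) continuous_const
    · refine (Metric.isBounded_iff_subset_closedBall 0).2 ⟨1, fun x hx => ?_⟩
      rw [mem_closedBall_zero_iff, pi_norm_le_iff_of_nonneg zero_le_one]
      intro v
      have hx' : ∑ w, x w * x w = 1 := hx
      have h1 := Finset.single_le_sum (f := fun w => x w * x w)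
        (fun w _ => mul_self_nonneg _) (Finset.mem_univ v)
      simp only [hx'] at h1
      rw [Real.norm_eq_abs]
      exact abs_le_one_iff_mul_self_le_one.2 h1
  obtain ⟨v0⟩ := hG.nonempty
  have hSn : S.Nonempty := ⟨Pi.single v0 1, by simp [S]⟩
  obtain ⟨x0, hx0S, hx0⟩ := hSc.exists_isMaxOn hSn hFc.continuousOn
  set lam := F x0
  let y : V → ℝ := fun v => |x0 v|
  have hyS : dotProduct y y = 1 := by
    have : dotProduct x0 x0 = 1 := hx0S
    simpa [dotProduct, y] using this
  have hFy : lam ≤ F y := by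
    change F x0 ≤ F y
    rw [hF, hF]
    refine Finset.sum_le_sum fun v _ => Finset.sum_le_sum fun w _ => ?_
    calc x0 v * (A v w * x0 w) ≤ |x0 v * (A v w * x0 w)| := le_abs_self _
      _ = _ := by rw [abs_mul, abs_mul, abs_of_nonneg (hAnn v w)]
  have hFz : ∀ z : V → ℝ, F z ≤ lam * dotProduct z z := by
    intro z
    by_cases hz : z = 0
    · subst hz; simp [F]
    have hzz : 0 < dotProduct z z := by
      have h0 : 0 ≤ dotProduct z z := Finset.sum_nonneg fun i _ => mul_self_nonneg _
      exact lt_of_le_of_ne h0 (fun h => hz (dotProduct_self_eq_zero.1 h.symm))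
    set c := Real.sqrt (dotProduct z z) with hc
    have hcpos : 0 < c := Real.sqrt_pos.2 hzz
    have hc2 : c * c = dotProduct z z := Real.mul_self_sqrt hzz.le
    have hm : (c⁻¹ • z) ∈ S := by
      change dotProduct (c⁻¹ • z) (c⁻¹ • z) = 1
      rw [smul_dotProduct, dotProduct_smul, ← hc2]
      simp only [smul_eq_mul]; field_simp
    have h1 : F (c⁻¹ • z) ≤ lam := hx0 hm
    have h2 : F (c⁻¹ • z) = (c * c)⁻¹ * F z := by
      simp only [F, Matrix.mulVec_smul, smul_dotProduct, dotProduct_smul, smul_eq_mul]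
      field_simp
    rw [h2, hc2, inv_mul_le_iff₀ hzz] at h1
    linarith
  have hps : (lam • (1 : Matrix V V ℝ) - A).PosSemidef := by
    refine Matrix.PosSemidef.of_dotProduct_mulVec_nonneg ?_ fun z => ?_
    · rw [Matrix.IsHermitian, Matrix.conjTranspose_eq_transpose_of_trivial]
      simp [hAs.eq]
    · have := hFz z
      simp only [Matrix.sub_mulVec, Matrix.smul_mulVec, Matrix.one_mulVec, dotProduct_sub,
        dotProduct_smul, star_trivial, smul_eq_mul]
      simp only [F] at this
      linarith
  have hey : A.mulVec y = lam • y := by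
    have h0 : star y ⬝ᵥ (lam • (1 : Matrix V V ℝ) - A).mulVec y = 0 := by
      have := hFz y
      simp only [Matrix.sub_mulVec, Matrix.smul_mulVec, Matrix.one_mulVec, dotProduct_sub,
        dotProduct_smul, star_trivial, smul_eq_mul]
      rw [hyS] at this ⊢
      simp only [F] at this hFy
      linarith
    rw [hps.dotProduct_mulVec_zero_iff] at h0
    simp only [Matrix.sub_mulVec, Matrix.smul_mulVec, Matrix.one_mulVec] at h0
    exact (sub_eq_zero.1 h0).symm
  have hsum : ∀ v, ∑ w with G.Adj v w, y w = lam * y v := by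
    intro v
    have := congrFun hey v
    rw [SimpleGraph.adjMatrix_mulVec_apply] at this
    simp only [Pi.smul_apply, smul_eq_mul] at this
    rw [← this]
    refine Finset.sum_congr ?_ fun _ _ => rfl
    ext w; simp
  have hynn : ∀ v, 0 ≤ y v := fun v => abs_nonneg _
  have hstep : ∀ v w, G.Adj v w → 0 < y v → 0 < lam * y w := by
    intro v w hvw hv
    rw [← hsum w]
    refine lt_of_lt_of_le hv ?_
    exact Finset.single_le_sum (f := y) (fun i _ => hynn i) (by simp [hvw.symm])
  obtain ⟨v1, hv1⟩ : ∃ v, 0 < y v := by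
    by_contra! h
    have : y = 0 := funext fun v => le_antisymm (h v) (hynn v)
    rw [this] at hyS
    simp at hyS
  have hlampos : 0 < lam := by
    obtain ⟨w, hw⟩ := hG.preconnected.exists_adj_of_nontrivial v1
    have := hstep v1 w hw hv1
    rcases lt_trichotomy lam 0 with h | h | h
    · nlinarith [hynn w]
    · rw [h] at this; simp at this
    · exact h
  refine ⟨y, lam, fun v => ?_, hlampos, hsum⟩
  obtain ⟨p⟩ := hG.preconnected v1 v
  induction p with
  | nil => exact hv1
  | cons h _ ih => exact ih (pos_of_mul_pos_right (hstep _ _ h hv1) hlampos.le)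


/-! ### Part 2: words, sorting, and permutations -/

theorem card_monotone_le {κ : Type} [Fintype κ] [LinearOrder κ] (n : ℕ) :
    Nat.card {f : Fin n → κ // Monotone f} ≤ (n + 1) ^ Fintype.card κ := by
  have hlt : ∀ (f : Fin n → κ) (v : κ), (Finset.univ.filter fun i => f i ≤ v).card < n + 1 :=
    fun f v => Nat.lt_succ_of_le ((Finset.card_le_univ _).trans (by simp))
  let g : {f : Fin n → κ // Monotone f} → (κ → Fin (n + 1)) :=
    fun f v => ⟨(Finset.univ.filter fun i => f.1 i ≤ v).card, hlt f.1 v⟩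
  have hg : Function.Injective g := by
    rintro ⟨f, hf⟩ ⟨f', hf'⟩ h
    have hc : ∀ v, (Finset.univ.filter fun i => f i ≤ v).card =
        (Finset.univ.filter fun i => f' i ≤ v).card := fun v => by
      have := congrFun h v
      simpa [g] using this
    have key : ∀ (p : Fin n) v, f p ≤ v ↔ f' p ≤ v := by
      intro p v
      have aux : ∀ f : Fin n → κ, Monotone f →
          (f p ≤ v ↔ (p : ℕ) < (Finset.univ.filter fun i => f i ≤ v).card) := by
        intro f hf
        constructor
        · intro hp
          have hs : Finset.Iic p ⊆ Finset.univ.filter fun i => f i ≤ v := by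
            intro q hq
            simp only [Finset.mem_filter, Finset.mem_univ, true_and]
            exact (hf (Finset.mem_Iic.1 hq)).trans hp
          have := Finset.card_le_card hs
          rw [Fin.card_Iic] at this
          omega
        · intro hp
          by_contra hn
          have hs : (Finset.univ.filter fun i => f i ≤ v) ⊆ Finset.Iio p := by
            intro q hq
            simp only [Finset.mem_filter, Finset.mem_univ, true_and] at hq
            rw [Finset.mem_Iio]
            by_contra hqp
            exact hn ((hf (not_lt.1 hqp)).trans hq)
          have := Finset.card_le_card hs
          rw [Fin.card_Iio] at this
          omega
      rw [aux f hf, aux f' hf', hc]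
    apply Subtype.ext
    funext p
    exact le_antisymm ((key p _).2 le_rfl) ((key p _).1 le_rfl)
  have := Nat.card_le_card_of_injective g hg
  simpa using this

theorem perm_eq_one_of_fiber_mono {n : ℕ} {E : Type} (ω : Fin n → E) (ρ : Equiv.Perm (Fin n))
    (h1 : ∀ p, ω (ρ p) = ω p) (h2 : ∀ p q, p < q → ω p = ω q → ρ p < ρ q) : ρ = 1 := by
  ext1 p
  induction p using WellFoundedLT.induction with
  | ind p ih =>
    simp only [Equiv.Perm.coe_one, id_eq] at ih ⊢
    by_contra hne
    rcases lt_or_gt_of_ne hne with h | h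
    · have := ih _ h
      exact hne (ρ.injective this)
    · set q := ρ.symm p with hq
      have hqp : ρ q = p := by simp [hq]
      rcases lt_trichotomy q p with h' | h' | h'
      · have := ih _ h'
        rw [hqp] at this
        exact absurd this h'.ne'
      · rw [h'] at hqp; exact hne hqp
      · have hfib : ω p = ω q := by rw [← h1 q, hqp]
        have := h2 p q h' hfib
        rw [hqp] at this
        exact absurd (this.trans h) (lt_irrefl _)

/-- monotone (increasing or decreasing according to `s`) on the fibers of `ω` -/
def FiberMono {n : ℕ} {E : Type} (s : E → Prop) (ω : Fin n → E) (σ : Equiv.Perm (Fin n)) : Prop :=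
  ∀ p q, p < q → ω p = ω q → ((s (ω p) → σ p < σ q) ∧ (¬ s (ω p) → σ q < σ p))

theorem fiberMono_unique {n : ℕ} {E : Type} (s : E → Prop) (ω θ : Fin n → E)
    (σ σ' : Equiv.Perm (Fin n)) (h : ∀ p, θ (σ p) = ω p) (h' : ∀ p, θ (σ' p) = ω p)
    (hm : FiberMono s ω σ) (hm' : FiberMono s ω σ') : σ = σ' := by
  have hf : ∀ p, ω (σ'.symm (σ p)) = ω p := fun p => by
    rw [← h', Equiv.apply_symm_apply, h]
  have := perm_eq_one_of_fiber_mono ω (σ.trans σ'.symm) (fun p => by simpa using hf p) (by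
    intro p q hpq hω
    simp only [Equiv.trans_apply]
    by_contra hcon
    have hne : σ'.symm (σ p) ≠ σ'.symm (σ q) := fun h => hpq.ne (σ.injective (σ'.symm.injective h))
    have hlt : σ'.symm (σ q) < σ'.symm (σ p) := lt_of_le_of_ne (not_lt.1 hcon) hne.symm
    have hm1 := hm p q hpq hω
    have hm2 := hm' _ _ hlt (by rw [hf, hf, hω])
    rw [hf] at hm2
    simp only [Equiv.apply_symm_apply] at hm2
    by_cases hs : s (ω p)
    · exact absurd ((hm1.1 hs).trans (hm2.1 (hω ▸ hs))) (lt_irrefl _)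
    · exact absurd ((hm1.2 hs).trans (hm2.2 (hω ▸ hs))) (lt_irrefl _))
  ext1 p
  have h2 := congrArg (fun f => f p) this
  simp only [Equiv.trans_apply, Equiv.Perm.coe_one, id_eq] at h2
  rw [← h2, Equiv.apply_symm_apply, h2]

theorem fiberMono_exists {n : ℕ} {E : Type} (s : E → Prop) (ω θ : Fin n → E)
    (hc : ∀ e, Fintype.card {p // ω p = e} = Fintype.card {p // θ p = e}) :
    ∃ σ : Equiv.Perm (Fin n), (∀ p, θ (σ p) = ω p) ∧ FiberMono s ω σ := by
  have hF : ∀ e, ∃ F : {p // ω p = e} ≃ {p // θ p = e},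
      ∀ p q, p < q → ((s e → F p < F q) ∧ (¬ s e → F q < F p)) := by
    intro e
    let A := Fintype.orderIsoFinOfCardEq {p // ω p = e} rfl
    let B := Fintype.orderIsoFinOfCardEq {p // θ p = e} (hc e).symm
    by_cases hs : s e
    · exact ⟨A.symm.toEquiv.trans B.toEquiv, fun p q hpq => ⟨fun _ => by simpa using hpq,
        fun h => absurd hs h⟩⟩
    · exact ⟨(A.symm.toEquiv.trans Fin.revPerm).trans B.toEquiv,
        fun p q hpq => ⟨fun h => absurd h hs, fun _ => by simpa using hpq⟩⟩
  choose F hF using hF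
  let σ : Equiv.Perm (Fin n) := (Equiv.sigmaFiberEquiv ω).symm.trans
    ((Equiv.sigmaCongrRight F).trans (Equiv.sigmaFiberEquiv θ))
  have hσ : ∀ e (p : {p // ω p = e}), σ p.1 = (F e p).1 := by
    rintro e ⟨p, rfl⟩
    rfl
  refine ⟨σ, fun p => ?_, fun p q hpq hω => ?_⟩
  · rw [hσ (ω p) ⟨p, rfl⟩]; exact (F (ω p) ⟨p, rfl⟩).2
  · rw [hσ (ω p) ⟨p, rfl⟩, hσ (ω p) ⟨q, hω.symm⟩]
    exact hF (ω p) ⟨p, rfl⟩ ⟨q, hω.symm⟩ hpq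

theorem list_eq_of_sorted_filters {E κ : Type} [LinearOrder κ] (h : E → κ) (l l' : List E)
    (hl : l.Pairwise fun a b => h a ≤ h b) (hl' : l'.Pairwise fun a b => h a ≤ h b)
    (hf : ∀ v, l.filter (fun e => decide (h e = v)) = l'.filter (fun e => decide (h e = v))) :
    l = l' := by
  induction l generalizing l' with
  | nil =>
    cases l' with
    | nil => rfl
    | cons a l' => have := hf (h a); simp at this
  | cons a l ih =>
    cases l' with
    | nil => have := hf (h a); simp at this
    | cons a' l' =>
      rw [List.pairwise_cons] at hl hl'
      have hh : h a = h a' := by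
        rcases lt_trichotomy (h a) (h a') with hlt | he | hlt
        · exfalso
          have h1 := hf (h a)
          have h2 : a ∈ (a' :: l').filter (fun e => decide (h e = h a)) := by
            rw [← h1]; simp
          rw [List.mem_filter] at h2
          rcases List.mem_cons.1 h2.1 with h3 | h3
          · exact hlt.ne (by rw [h3])
          · exact absurd (hl'.1 a h3) (not_le.2 hlt)
        · exact he
        · exfalso
          have h1 := hf (h a')
          have h2 : a' ∈ (a :: l).filter (fun e => decide (h e = h a')) := by
            rw [h1]; simp
          rw [List.mem_filter] at h2
          rcases List.mem_cons.1 h2.1 with h3 | h3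
          · exact hlt.ne (by rw [h3])
          · exact absurd (hl.1 a' h3) (not_le.2 hlt)
      have h1 := hf (h a)
      rw [List.filter_cons_of_pos (by simp), List.filter_cons_of_pos (by simp [hh])] at h1
      have ha : a = a' := (List.cons.inj h1).1
      subst ha
      congr 1
      refine ih l' hl.2 hl'.2 fun v => ?_
      have h3 := hf v
      by_cases hv : h a = v
      · rw [List.filter_cons_of_pos (by simp [hv]), List.filter_cons_of_pos (by simp [hv])] at h3
        exact (List.cons.inj h3).2
      · rwa [List.filter_cons_of_neg (by simp [hv]), List.filter_cons_of_neg (by simp [hv])] at h3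

theorem ofFn_filter_eq {n : ℕ} {E : Type} (ω : Fin n → E) (P : E → Bool) :
    (List.ofFn ω).filter P = ((List.finRange n).filter (P ∘ ω)).map ω := by
  rw [List.ofFn_eq_map, List.filter_map]

theorem filter_perm_finRange {n : ℕ} {E : Type} (l : Fin n → E) (τ : Equiv.Perm (Fin n))
    (P : E → Bool) :
    (((List.finRange n).filter (P ∘ l ∘ τ)).map τ).Perm ((List.finRange n).filter (P ∘ l)) := by
  refine (List.perm_ext_iff_of_nodup ?_ ?_).2 ?_
  · exact ((List.nodup_finRange n).filter _).map τ.injective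
  · exact (List.nodup_finRange n).filter _
  · intro a
    simp only [List.mem_map, List.mem_filter, List.mem_finRange, true_and, Function.comp]
    constructor
    · rintro ⟨b, hb, rfl⟩; exact hb
    · intro ha; exact ⟨τ.symm a, by simpa using ha, by simp⟩

theorem ofFn_filter_mono {n : ℕ} {E : Type} (ω l : Fin n → E) (τ : Equiv.Perm (Fin n))
    (h : ∀ p, l (τ p) = ω p) (P : E → Bool)
    (hm : ∀ p q, p < q → P (ω p) = true → P (ω q) = true → τ p < τ q) :
    (List.ofFn ω).filter P = (List.ofFn l).filter P := by
  have hω : ω = l ∘ τ := funext fun p => (h p).symm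
  subst hω
  rw [ofFn_filter_eq, ofFn_filter_eq, ← List.map_map]
  congr 1
  refine (filter_perm_finRange l τ P).eq_of_pairwise (le := (· < ·))
    (fun a b _ _ h1 h2 => absurd (h1.trans h2) (lt_irrefl _)) ?_ ?_
  · rw [List.pairwise_map]
    have h0 := (List.pairwise_lt_finRange n).filter (P ∘ l ∘ τ)
    refine List.Pairwise.imp_of_mem ?_ h0
    intro a b ha hb hab
    simp only [List.mem_filter, List.mem_finRange, true_and, Function.comp] at ha hb
    exact hm a b hab ha hb
  · exact (List.pairwise_lt_finRange n).filter _

theorem ofFn_filter_anti {n : ℕ} {E : Type} (ω l : Fin n → E) (τ : Equiv.Perm (Fin n))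
    (h : ∀ p, l (τ p) = ω p) (P : E → Bool)
    (hm : ∀ p q, p < q → P (ω p) = true → P (ω q) = true → τ q < τ p) :
    (List.ofFn ω).filter P = ((List.ofFn l).filter P).reverse := by
  have hω : ω = l ∘ τ := funext fun p => (h p).symm
  subst hω
  rw [ofFn_filter_eq, ofFn_filter_eq, ← List.map_map, ← List.map_reverse]
  congr 1
  refine ((filter_perm_finRange l τ P).trans (List.reverse_perm _).symm).eq_of_pairwise
    (le := (· > ·)) (fun a b _ _ h1 h2 => absurd (h1.trans h2) (lt_irrefl _)) ?_ ?_
  · rw [List.pairwise_map]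
    have h0 := (List.pairwise_lt_finRange n).filter (P ∘ l ∘ τ)
    refine List.Pairwise.imp_of_mem ?_ h0
    intro a b ha hb hab
    simp only [List.mem_filter, List.mem_finRange, true_and, Function.comp] at ha hb
    exact hm a b hab ha hb
  · rw [List.pairwise_reverse]
    exact (List.pairwise_lt_finRange n).filter _


/-! ### Part 3: griddings as words; upper bound for the grid class -/

theorem exists_block {t k : ℕ} (c : Fin (t + 1) → ℕ) (h0 : c 0 = 0) (hl : c (Fin.last t) = k)
    (p : ℕ) (hp : p < k) : ∃ i : Fin t, c i.castSucc ≤ p ∧ p < c i.succ := by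
  by_contra! h
  have : ∀ i : Fin (t + 1), c i ≤ p := by
    intro i
    induction i using Fin.induction with
    | zero => omega
    | succ i ih => exact h i ih
  have := this (Fin.last t)
  omega

theorem block_mono {t : ℕ} (c : Fin (t + 1) → ℕ) (hc : Monotone c) (p q : ℕ) (hpq : p ≤ q)
    (i i' : Fin t) (h1 : c i.castSucc ≤ p) (h2 : q < c i'.succ) : i ≤ i' := by
  by_contra h
  have : i'.succ ≤ i.castSucc := by
    rw [Fin.le_def]; simp; omega
  have := hc this
  omega

theorem exists_dividers {t k : ℕ} (γ : Fin k → Fin t) (hγ : Monotone γ) :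
    ∃ c : Fin (t + 1) → ℕ, Monotone c ∧ c 0 = 0 ∧ c (Fin.last t) = k ∧
      ∀ (i : Fin t) (p : Fin k), (c i.castSucc ≤ (p : ℕ) ∧ (p : ℕ) < c i.succ) → γ p = i := by
  let c : Fin (t + 1) → ℕ := fun m => (Finset.univ.filter fun p : Fin k => (γ p : ℕ) < m).card
  have hlt : ∀ (m : Fin (t + 1)) (p : Fin k), (p : ℕ) < c m → (γ p : ℕ) < m := by
    intro m p hp
    by_contra hn
    have hs : (Finset.univ.filter fun p : Fin k => (γ p : ℕ) < m) ⊆ Finset.Iio p := by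
      intro q hq
      simp only [Finset.mem_filter, Finset.mem_univ, true_and] at hq
      rw [Finset.mem_Iio]
      by_contra hqp
      have : γ p ≤ γ q := hγ (not_lt.1 hqp)
      rw [Fin.le_def] at this
      omega
    have := Finset.card_le_card hs
    rw [Fin.card_Iio] at this
    simp only [c] at hp
    omega
  have hge : ∀ (m : Fin (t + 1)) (p : Fin k), (γ p : ℕ) < m → (p : ℕ) < c m := by
    intro m p hp
    have hs : Finset.Iic p ⊆ (Finset.univ.filter fun p : Fin k => (γ p : ℕ) < m) := by
      intro q hq
      simp only [Finset.mem_filter, Finset.mem_univ, true_and]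
      have : γ q ≤ γ p := hγ (Finset.mem_Iic.1 hq)
      rw [Fin.le_def] at this
      omega
    have := Finset.card_le_card hs
    rw [Fin.card_Iic] at this
    simp only [c]
    omega
  refine ⟨c, fun m m' hm => ?_, ?_, ?_, fun i p hp => ?_⟩
  · refine Finset.card_le_card fun q hq => ?_
    simp only [Finset.mem_filter, Finset.mem_univ, true_and] at hq ⊢
    rw [Fin.le_def] at hm
    omega
  · simp [c]
  · simp [c]
  · have h1 := hlt _ _ hp.2
    have h2 : ¬ ((γ p : ℕ) < i.castSucc) := fun h => by
      have := hge _ _ h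
      omega
    rw [Fin.val_succ] at h1
    rw [Fin.val_castSucc] at h2
    apply Fin.ext
    omega

/-- cell words describing a gridded permutation -/
def GridWords {t u n : ℕ} (M : Fin t → Fin u → ℤ) (σ : Equiv.Perm (Fin n))
    (ω θ : Fin n → Fin t × Fin u) : Prop :=
  Monotone (fun p => (ω p).1) ∧ Monotone (fun p => (θ p).2) ∧ (∀ p, θ (σ p) = ω p) ∧
    (∀ p, M (ω p).1 (ω p).2 ≠ 0) ∧ FiberMono (fun e => M e.1 e.2 = 1) ω σ

theorem inGridClass_iff {t u n : ℕ} (M : Fin t → Fin u → ℤ)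
    (hM : ∀ i j, M i j = 0 ∨ M i j = 1 ∨ M i j = -1) (σ : Equiv.Perm (Fin n)) :
    InGridClass M σ ↔ ∃ ω θ, GridWords M σ ω θ := by
  constructor
  · rintro ⟨c, r, hc, hr, hc0, hcl, hr0, hrl, hcell⟩
    have h1 : ∀ p : Fin n, ∃ i : Fin t, c i.castSucc ≤ (p : ℕ) ∧ (p : ℕ) < c i.succ :=
      fun p => exists_block c hc0 hcl p p.2
    have h2 : ∀ p : Fin n, ∃ i : Fin u, r i.castSucc ≤ (p : ℕ) ∧ (p : ℕ) < r i.succ :=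
      fun p => exists_block r hr0 hrl p p.2
    choose γ hγ using h1
    choose ρ hρ using h2
    have hin : ∀ p, InCell σ c r (γ p) (ρ (σ p)) p := fun p =>
      ⟨(hγ p).1, (hγ p).2, (hρ _).1, (hρ _).2⟩
    have hne : ∀ p, M (γ p) (ρ (σ p)) ≠ 0 := fun p h => (hcell _ _).1 h p (hin p)
    refine ⟨fun p => (γ p, ρ (σ p)), fun v => (γ (σ.symm v), ρ v), ?_, ?_, ?_, hne, ?_⟩
    · intro p q hpq
      exact block_mono c hc p q hpq _ _ (hγ p).1 (hγ q).2
    · intro p q hpq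
      exact block_mono r hr p q hpq _ _ (hρ p).1 (hρ q).2
    · intro p; simp
    · intro p q hpq he
      have he1 : γ p = γ q := (Prod.ext_iff.1 he).1
      have he2 : ρ (σ p) = ρ (σ q) := (Prod.ext_iff.1 he).2
      have hq := hin q
      rw [← he1, ← he2] at hq
      refine ⟨fun h => (hcell _ _).2.1 h p q (hin p) hq hpq, fun h => ?_⟩
      refine (hcell _ _).2.2 ?_ p q (hin p) hq hpq
      rcases hM (γ p) (ρ (σ p)) with h' | h' | h'
      · exact absurd h' (hne p)
      · exact absurd h' h
      · exact h'
  · rintro ⟨ω, θ, h1, h2, h3, h4, h5⟩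
    obtain ⟨c, hc, hc0, hcl, hcc⟩ := exists_dividers (fun p => (ω p).1) h1
    obtain ⟨r, hr, hr0, hrl, hrr⟩ := exists_dividers (fun p => (θ p).2) h2
    refine ⟨c, r, hc, hr, hc0, hcl, hr0, hrl, fun i j => ?_⟩
    have key : ∀ p, InCell σ c r i j p → ω p = (i, j) := by
      rintro p ⟨a1, a2, a3, a4⟩
      have b1 := hcc i p ⟨a1, a2⟩
      have b2 := hrr j (σ p) ⟨a3, a4⟩
      simp only [h3] at b2
      exact Prod.ext b1 b2
    refine ⟨fun h p hp => ?_, fun h p q hp hq hpq => ?_, fun h p q hp hq hpq => ?_⟩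
    · have := key p hp
      apply h4 p
      rw [this]; exact h
    · have e1 := key p hp
      have e2 := key q hq
      refine (h5 p q hpq (e1.trans e2.symm)).1 ?_
      rw [e1]; exact h
    · have e1 := key p hp
      have e2 := key q hq
      refine (h5 p q hpq (e1.trans e2.symm)).2 ?_
      rw [e1]
      simp only [h]
      decide

theorem sum_weight_le {E κ η : Type} [Fintype E] [Fintype κ] [Fintype η] [LinearOrder κ]
    (ε : E ≃ κ × η)
    (q : E → ℝ) (hq1 : ∀ i, ∑ j, q (ε.symm (i, j)) = 1) (n : ℕ) :
    ∑ ω : Fin n → E with Monotone (fun p => (ε (ω p)).1), ∏ p, q (ω p) ≤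
      ((n : ℝ) + 1) ^ Fintype.card κ := by
  have hcard := card_monotone_le (κ := κ) n
  rw [Nat.card_eq_fintype_card, Fintype.card_subtype] at hcard
  have hcard' : (((Finset.univ.filter fun γ : Fin n → κ => Monotone γ).card : ℕ) : ℝ) ≤
      ((n : ℝ) + 1) ^ Fintype.card κ := by exact_mod_cast hcard
  refine le_trans (le_of_eq ?_) hcard'
  rw [Finset.card_eq_sum_ones, Nat.cast_sum, Finset.sum_filter, Finset.sum_filter]
  rw [← Equiv.sum_comp ((Equiv.arrowCongr (Equiv.refl (Fin n)) ε).trans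
    (Equiv.arrowProdEquivProdArrow (Fin n) (fun _ => κ) (fun _ => η))).symm]
  rw [Fintype.sum_prod_type]
  refine Finset.sum_congr rfl fun γ _ => ?_
  by_cases hγ : Monotone γ
  · have : ∀ δ : Fin n → η, ∏ p, q (ε.symm (γ p, δ p)) = ∏ p, q (ε.symm (γ p, δ p)) :=
      fun _ => rfl
    have e := Finset.prod_univ_sum (fun _ : Fin n => (Finset.univ : Finset η))
      (fun p j => q (ε.symm (γ p, j)))
    rw [Fintype.piFinset_univ] at e
    simp only [hq1, Finset.prod_const_one] at e
    simp [Equiv.arrowProdEquivProdArrow, Equiv.arrowCongr, hγ, ← e]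
  · simp [Equiv.arrowProdEquivProdArrow, Equiv.arrowCongr, hγ]

theorem gridCount_upper {t u : ℕ} (M : Fin t → Fin u → ℤ)
    (hM : ∀ i j, M i j = 0 ∨ M i j = 1 ∨ M i j = -1)
    (xc : Fin t → ℝ) (xr : Fin u → ℝ) (lam : ℝ) (hc : ∀ i, 0 < xc i) (hr : ∀ j, 0 < xr j)
    (hlam : 0 < lam) (h1 : ∀ i, ∑ j with M i j ≠ 0, xr j = lam * xc i)
    (h2 : ∀ j, ∑ i with M i j ≠ 0, xc i = lam * xr j) (n : ℕ) :
    (gridCount M n : ℝ) ≤ ((n : ℝ) + 1) ^ (t + u) * (lam ^ 2) ^ n := by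
  let q1 : Fin t × Fin u → ℝ := fun e => if M e.1 e.2 ≠ 0 then xr e.2 / (lam * xc e.1) else 0
  let q2 : Fin t × Fin u → ℝ := fun e => if M e.1 e.2 ≠ 0 then xc e.1 / (lam * xr e.2) else 0
  have hq1 : ∀ e, 0 ≤ q1 e := fun e => by
    simp only [q1]; split_ifs
    · exact div_nonneg (hr _).le (mul_pos hlam (hc _)).le
    · exact le_rfl
  have hq2 : ∀ e, 0 ≤ q2 e := fun e => by
    simp only [q2]; split_ifs
    · exact div_nonneg (hc _).le (mul_pos hlam (hr _)).le
    · exact le_rfl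
  have hs1 := sum_weight_le (Equiv.refl (Fin t × Fin u)) q1 (fun i => by
    simp only [q1, Equiv.refl_symm, Equiv.refl_apply]
    rw [← Finset.sum_filter, ← Finset.sum_div, h1, div_self (mul_pos hlam (hc i)).ne']) n
  have hs2 := sum_weight_le (Equiv.prodComm (Fin t) (Fin u)) q2 (fun j => by
    simp only [q2, Equiv.prodComm_symm, Equiv.prodComm_apply, Prod.swap]
    rw [← Finset.sum_filter, ← Finset.sum_div, h2, div_self (mul_pos hlam (hr j)).ne']) n
  simp only [Equiv.refl_apply, Equiv.prodComm_apply, Prod.fst_swap, Fintype.card_fin] at hs1 hs2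
  let S1 := Finset.univ.filter fun ω : Fin n → Fin t × Fin u => Monotone fun p => (ω p).1
  let S2 := Finset.univ.filter fun ω : Fin n → Fin t × Fin u => Monotone fun p => (ω p).2
  have hex : ∀ σ : {σ : Equiv.Perm (Fin n) // InGridClass M σ},
      ∃ w : (Fin n → Fin t × Fin u) × (Fin n → Fin t × Fin u), GridWords M σ.1 w.1 w.2 := by
    intro σ
    obtain ⟨ω, θ, h'⟩ := (inGridClass_iff M hM σ.1).1 σ.2
    exact ⟨(ω, θ), h'⟩
  choose w hw using hex
  have hinj : Function.Injective w := by
    intro σ σ' h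
    have a := hw σ
    have b := hw σ'
    rw [← h] at b
    exact Subtype.ext (fiberMono_unique _ _ _ _ _ a.2.2.1 b.2.2.1 a.2.2.2.2 b.2.2.2.2)
  let f : (Fin n → Fin t × Fin u) × (Fin n → Fin t × Fin u) → ℝ :=
    fun w => (∏ p, q1 (w.1 p)) * ∏ p, q2 (w.2 p)
  have hf : ∀ w, 0 ≤ f w := fun w =>
    mul_nonneg (Finset.prod_nonneg fun _ _ => hq1 _) (Finset.prod_nonneg fun _ _ => hq2 _)
  have hval : ∀ σ, f (w σ) = ((lam ^ 2) ^ n)⁻¹ := by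
    intro σ
    obtain ⟨_, _, a3, a4, _⟩ := hw σ
    simp only [f]
    rw [← Equiv.prod_comp σ.1 (fun p => q2 ((w σ).2 p)), ← Finset.prod_mul_distrib]
    have : ∀ p, q1 ((w σ).1 p) * q2 ((w σ).2 (σ.1 p)) = (lam ^ 2)⁻¹ := by
      intro p
      rw [a3]
      have h := a4 p
      simp only [q1, q2, if_pos h]
      have := hc ((w σ).1 p).1
      have := hr ((w σ).1 p).2
      field_simp
    rw [Finset.prod_congr rfl fun p _ => this p]
    simp
  have hsum : ∑ σ, f (w σ) ≤ ((n : ℝ) + 1) ^ (t + u) := by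
    calc ∑ σ, f (w σ) = ∑ z ∈ Finset.univ.map ⟨w, hinj⟩, f z := by rw [Finset.sum_map]; rfl
      _ ≤ ∑ z ∈ S1 ×ˢ S2, f z := by
        refine Finset.sum_le_sum_of_subset_of_nonneg ?_ fun z _ _ => hf z
        intro z hz
        obtain ⟨σ, _, rfl⟩ := Finset.mem_map.1 hz
        have := hw σ
        simp only [S1, S2, Finset.mem_product, Finset.mem_filter, Finset.mem_univ, true_and]
        exact ⟨this.1, this.2.1⟩
      _ = (∑ ω ∈ S1, ∏ p, q1 (ω p)) * ∑ ω ∈ S2, ∏ p, q2 (ω p) := by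
        rw [Finset.sum_mul_sum, Finset.sum_product]
      _ ≤ ((n : ℝ) + 1) ^ t * ((n : ℝ) + 1) ^ u :=
        mul_le_mul hs1 hs2 (Finset.sum_nonneg fun _ _ => Finset.prod_nonneg fun _ _ => hq2 _)
          (by positivity)
      _ = _ := (pow_add _ _ _).symm
  rw [Finset.sum_congr rfl fun σ _ => hval σ, Finset.sum_const, nsmul_eq_mul, Finset.card_univ,
    ← Nat.card_eq_fintype_card, ← div_eq_mul_inv, div_le_iff₀ (by positivity)] at hsum
  exact hsum


/-! ### Part 4: lower bound for the grid class -/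

/-- walks in the row-column graph of length `2 n` from column `i` to column `k`, recorded as
lists of pairs of cells -/
def wlk {t u : ℕ} (M : Fin t → Fin u → ℤ) :
    ℕ → Fin t → Fin t → Finset (List ((Fin t × Fin u) × (Fin t × Fin u)))
  | 0, i, k => if i = k then {[]} else ∅
  | n + 1, i, k => (Finset.univ.filter fun ji : Fin u × Fin t =>
      M i ji.1 ≠ 0 ∧ M ji.2 ji.1 ≠ 0).biUnion
        fun ji => (wlk M n ji.2 k).image (List.cons ((i, ji.1), (ji.2, ji.1)))

theorem mem_wlk_zero {t u : ℕ} (M : Fin t → Fin u → ℤ) (i k : Fin t) (P) :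
    P ∈ wlk M 0 i k ↔ P = [] ∧ i = k := by
  rw [wlk]; split_ifs with h <;> simp [h]

theorem mem_wlk_succ {t u : ℕ} (M : Fin t → Fin u → ℤ) (n : ℕ) (i k : Fin t) (P) :
    P ∈ wlk M (n + 1) i k ↔ ∃ j i', M i j ≠ 0 ∧ M i' j ≠ 0 ∧ ∃ Q ∈ wlk M n i' k,
      P = ((i, j), (i', j)) :: Q := by
  rw [wlk]
  simp only [Finset.mem_biUnion, Finset.mem_filter, Finset.mem_univ, true_and, Finset.mem_image,
    Prod.exists]
  constructor
  · rintro ⟨j, i', ⟨h1, h2⟩, Q, hQ, rfl⟩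
    exact ⟨j, i', h1, h2, Q, hQ, rfl⟩
  · rintro ⟨j, i', h1, h2, Q, hQ, rfl⟩
    exact ⟨j, i', ⟨h1, h2⟩, Q, hQ, rfl⟩

theorem card_wlk_succ {t u : ℕ} (M : Fin t → Fin u → ℤ) (n : ℕ) (i k : Fin t) :
    (wlk M (n + 1) i k).card = ∑ ji : Fin u × Fin t with (M i ji.1 ≠ 0 ∧ M ji.2 ji.1 ≠ 0),
      (wlk M n ji.2 k).card := by
  rw [wlk, Finset.card_biUnion]
  · refine Finset.sum_congr rfl fun ji _ => ?_
    rw [Finset.card_image_of_injective _ List.cons_injective]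
  · rintro ⟨j, i'⟩ _ ⟨j2, i2⟩ _ hne
    simp only [Function.onFun, Finset.disjoint_left, Finset.mem_image, not_exists, not_and]
    rintro P ⟨Q, _, rfl⟩ Q' _ h
    apply hne
    simp only [List.cons.injEq, Prod.mk.injEq] at h
    simp [h.1.2.1, h.1.2.2]

theorem wlk_eigen {t u : ℕ} (M : Fin t → Fin u → ℤ)
    (xc : Fin t → ℝ) (xr : Fin u → ℝ) (lam : ℝ)
    (h1 : ∀ i, ∑ j with M i j ≠ 0, xr j = lam * xc i)
    (h2 : ∀ j, ∑ i with M i j ≠ 0, xc i = lam * xr j) (n : ℕ) (i : Fin t) :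
    ∑ k, ((wlk M n i k).card : ℝ) * xc k = (lam ^ 2) ^ n * xc i := by
  induction n generalizing i with
  | zero =>
    have : ∀ k, ((wlk M 0 i k).card : ℝ) * xc k = if i = k then xc k else 0 := by
      intro k; rw [wlk]; split_ifs <;> simp
    simp [this]
  | succ n ih =>
    simp only [card_wlk_succ, Nat.cast_sum, Finset.sum_mul]
    rw [Finset.sum_comm]
    simp only [ih]
    rw [Finset.sum_filter, Fintype.sum_prod_type]
    have h3 : ∀ j, (∑ i', if M i j ≠ 0 ∧ M i' j ≠ 0 then (lam ^ 2) ^ n * xc i' else 0) =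
        if M i j ≠ 0 then (lam ^ 2) ^ n * lam * xr j else 0 := by
      intro j
      by_cases h : M i j ≠ 0
      · simp only [h, ne_eq, not_false_eq_true, true_and, if_true]
        rw [← Finset.sum_filter, ← Finset.mul_sum, h2]
        ring
      · simp [h]
    rw [Finset.sum_congr rfl fun j _ => h3 j, ← Finset.sum_filter, ← Finset.mul_sum, h1]
    ring

theorem wlk_snoc {t u : ℕ} (M : Fin t → Fin u → ℤ) (n : ℕ) (i k k' : Fin t) (j : Fin u)
    (h1 : M k j ≠ 0) (h2 : M k' j ≠ 0) (Q) (hQ : Q ∈ wlk M n i k) :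
    Q ++ [((k, j), (k', j))] ∈ wlk M (n + 1) i k' := by
  induction n generalizing i Q with
  | zero =>
    rw [mem_wlk_zero] at hQ
    obtain ⟨rfl, rfl⟩ := hQ
    rw [mem_wlk_succ]
    exact ⟨j, k', h1, h2, [], by simp [mem_wlk_zero], rfl⟩
  | succ n ih =>
    rw [mem_wlk_succ] at hQ
    obtain ⟨j', i', h1', h2', Q, hQ, rfl⟩ := hQ
    rw [mem_wlk_succ]
    exact ⟨j', i', h1', h2', _, ih i' Q hQ, by simp⟩

theorem wlk_reverse {t u : ℕ} (M : Fin t → Fin u → ℤ) (n : ℕ) (i k : Fin t) (P)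
    (hP : P ∈ wlk M n i k) : P.reverse.map Prod.swap ∈ wlk M n k i := by
  induction n generalizing i P with
  | zero =>
    rw [mem_wlk_zero] at hP ⊢
    obtain ⟨rfl, rfl⟩ := hP
    simp
  | succ n ih =>
    rw [mem_wlk_succ] at hP
    obtain ⟨j', i', h1', h2', Q, hQ, rfl⟩ := hP
    have := wlk_snoc M n k i' i j' h2' h1' _ (ih i' Q hQ)
    simpa using this

theorem wlk_props {t u : ℕ} (M : Fin t → Fin u → ℤ) (n : ℕ) (i k : Fin t) (P)
    (hP : P ∈ wlk M n i k) : P.length = n ∧ (∀ e ∈ P.map Prod.fst, M e.1 e.2 ≠ 0) ∧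
      (∀ e ∈ P.map Prod.snd, M e.1 e.2 ≠ 0) := by
  induction n generalizing i P with
  | zero =>
    rw [mem_wlk_zero] at hP
    obtain ⟨rfl, rfl⟩ := hP
    simp
  | succ n ih =>
    rw [mem_wlk_succ] at hP
    obtain ⟨j', i', h1', h2', Q, hQ, rfl⟩ := hP
    obtain ⟨a, b, c⟩ := ih i' Q hQ
    refine ⟨by simp [a], ?_, ?_⟩
    · intro e he
      rw [List.map_cons, List.mem_cons] at he
      rcases he with rfl | he
      · exact h1'
      · exact b e he
    · intro e he
      rw [List.map_cons, List.mem_cons] at he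
      rcases he with rfl | he
      · exact h2'
      · exact c e he

theorem filter_cons_cancel {E : Type} (P : E → Bool) (a : E) (l l' : List E)
    (h : (a :: l).filter P = (a :: l').filter P) : l.filter P = l'.filter P := by
  by_cases ha : P a = true
  · rw [List.filter_cons_of_pos ha, List.filter_cons_of_pos ha] at h
    exact (List.cons.inj h).2
  · rwa [List.filter_cons_of_neg ha, List.filter_cons_of_neg ha] at h

theorem wlk_det {t u : ℕ} (M : Fin t → Fin u → ℤ) (n : ℕ) (i k k' : Fin t) (P P')
    (hP : P ∈ wlk M n i k) (hP' : P' ∈ wlk M n i k')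
    (h1 : ∀ v, (P.map Prod.fst).filter (fun e => decide (e.1 = v)) =
      (P'.map Prod.fst).filter (fun e => decide (e.1 = v)))
    (h2 : ∀ v, (P.map Prod.snd).filter (fun e => decide (e.2 = v)) =
      (P'.map Prod.snd).filter (fun e => decide (e.2 = v))) : P = P' := by
  induction n generalizing i P P' with
  | zero =>
    rw [mem_wlk_zero] at hP hP'
    rw [hP.1, hP'.1]
  | succ n ih =>
    rw [mem_wlk_succ] at hP hP'
    obtain ⟨j, i1, _, _, Q, hQ, rfl⟩ := hP
    obtain ⟨j', i1', _, _, Q', hQ', rfl⟩ := hP'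
    have hj : j = j' := by
      have := h1 i
      simp only [List.map_cons] at this
      rw [List.filter_cons_of_pos (by simp), List.filter_cons_of_pos (by simp)] at this
      exact (Prod.mk.inj (List.cons.inj this).1).2
    subst hj
    have hi : i1 = i1' := by
      have := h2 j
      simp only [List.map_cons] at this
      rw [List.filter_cons_of_pos (by simp), List.filter_cons_of_pos (by simp)] at this
      exact (Prod.mk.inj (List.cons.inj this).1).1
    subst hi
    congr 1
    exact ih i1 Q Q' hQ hQ' (fun v => filter_cons_cancel _ _ _ _ (h1 v))
      (fun v => filter_cons_cancel _ _ _ _ (h2 v))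

/-- stable sort by a key -/
def stSort {E κ : Type} [LinearOrder κ] (h : E → κ) (l : List E) : List E :=
  l.mergeSort (fun a b => decide (h a ≤ h b))

theorem stSort_perm {E κ : Type} [LinearOrder κ] (h : E → κ) (l : List E) :
    (stSort h l).Perm l := List.mergeSort_perm _ _

theorem stSort_sorted {E κ : Type} [LinearOrder κ] (h : E → κ) (l : List E) :
    (stSort h l).Pairwise fun a b => h a ≤ h b := by
  have := List.pairwise_mergeSort (le := fun a b : E => decide (h a ≤ h b))
    (by intro a b c; simp only [decide_eq_true_eq]; exact le_trans)
    (by intro a b; simp only [Bool.or_eq_true, decide_eq_true_eq]; exact le_total _ _) l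
  simpa [stSort] using this

theorem stSort_filter {E κ : Type} [LinearOrder κ] (h : E → κ) (l : List E) (v : κ) :
    (stSort h l).filter (fun e => decide (h e = v)) = l.filter (fun e => decide (h e = v)) := by
  have h1 : (l.filter (fun e => decide (h e = v))).Sublist (stSort h l) := by
    refine List.sublist_mergeSort
      (by intro a b c; simp only [decide_eq_true_eq]; exact le_trans)
      (by intro a b; simp only [Bool.or_eq_true, decide_eq_true_eq]; exact le_total _ _)
      ?_ List.filter_sublist
    rw [List.pairwise_iff_forall_sublist]
    intro a b hab
    have ha := hab.subset (by simp : a ∈ [a, b])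
    have hb := hab.subset (by simp : b ∈ [a, b])
    simp only [List.mem_filter, decide_eq_true_eq] at ha hb ⊢
    rw [ha.2, hb.2]
  have h2 := h1.filter (fun e => decide (h e = v))
  simp only [List.filter_filter, Bool.and_self] at h2
  exact (h2.eq_of_length (((stSort_perm h l).filter _).length_eq).symm).symm

/-- all lists of length `n` -/
def listsN (E : Type) [Fintype E] (n : ℕ) : Finset (List E) := (List.finite_length_eq E n).toFinset

theorem mem_listsN {E : Type} [Fintype E] (n : ℕ) (l : List E) :
    l ∈ listsN E n ↔ l.length = n := by simp [listsN]

/-- pairs of a column-sorted and a row-sorted word with the same letters -/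
def NP {t u : ℕ} (M : Fin t → Fin u → ℤ) (n : ℕ) :
    Finset (List (Fin t × Fin u) × List (Fin t × Fin u)) :=
  (listsN (Fin t × Fin u) n ×ˢ listsN (Fin t × Fin u) n).filter fun w =>
    w.1.Pairwise (fun a b => a.1 ≤ b.1) ∧ w.2.Pairwise (fun a b => a.2 ≤ b.2) ∧
      w.1.Perm w.2 ∧ ∀ e ∈ w.1, M e.1 e.2 ≠ 0

def CLs {t u : ℕ} (M : Fin t → Fin u → ℤ) (n : ℕ) (b : Multiset (Fin t × Fin u)) :
    Finset (List (Fin t × Fin u)) :=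
  (listsN (Fin t × Fin u) n).filter fun l => l.Pairwise (fun a b => a.1 ≤ b.1) ∧
    (l : Multiset (Fin t × Fin u)) = b ∧ ∀ e ∈ l, M e.1 e.2 ≠ 0

def RLs {t u : ℕ} (M : Fin t → Fin u → ℤ) (n : ℕ) (b : Multiset (Fin t × Fin u)) :
    Finset (List (Fin t × Fin u)) :=
  (listsN (Fin t × Fin u) n).filter fun l => l.Pairwise (fun a b => a.2 ≤ b.2) ∧
    (l : Multiset (Fin t × Fin u)) = b ∧ ∀ e ∈ l, M e.1 e.2 ≠ 0

def wlkF {t u : ℕ} (M : Fin t → Fin u → ℤ) (n : ℕ) (i k : Fin t)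
    (b b' : Multiset (Fin t × Fin u)) :
    Finset (List ((Fin t × Fin u) × (Fin t × Fin u))) :=
  (wlk M n i k).filter fun P => ((P.map Prod.fst : List (Fin t × Fin u)) : Multiset _) = b ∧
    ((P.map Prod.snd : List (Fin t × Fin u)) : Multiset _) = b'

theorem CLs_mul_RLs {t u : ℕ} (M : Fin t → Fin u → ℤ) (n : ℕ) (b : Multiset (Fin t × Fin u)) :
    (CLs M n b).card * (RLs M n b).card ≤ (NP M n).card := by
  rw [← Finset.card_product]
  refine Finset.card_le_card ?_
  rintro ⟨l, l'⟩ h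
  simp only [Finset.mem_product, CLs, RLs, Finset.mem_filter, NP] at h ⊢
  obtain ⟨⟨a1, a2, a3, a4⟩, b1, b2, b3, _⟩ := h
  exact ⟨⟨a1, b1⟩, a2, b2, Multiset.coe_eq_coe.1 (a3.trans b3.symm), a4⟩

theorem wlkF_le {t u : ℕ} (M : Fin t → Fin u → ℤ) (n : ℕ) (i k : Fin t)
    (b b' : Multiset (Fin t × Fin u)) :
    (wlkF M n i k b b').card ≤ (CLs M n b).card * (RLs M n b').card := by
  rw [← Finset.card_product]
  refine Finset.card_le_card_of_injOn
    (fun P => (stSort Prod.fst (P.map Prod.fst), stSort Prod.snd (P.map Prod.snd))) ?_ ?_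
  · intro P hP
    simp only [wlkF, Finset.coe_filter, Set.mem_ofPred_eq] at hP
    obtain ⟨h1, h2, h3⟩ := hP
    obtain ⟨c1, c2, c3⟩ := wlk_props M n i k P h1
    simp only [Finset.coe_product, Set.mem_prod, Finset.mem_coe, CLs, RLs, Finset.mem_filter,
      mem_listsN]
    refine ⟨⟨?_, stSort_sorted _ _, ?_, ?_⟩, ⟨?_, stSort_sorted _ _, ?_, ?_⟩⟩
    · rw [(stSort_perm _ _).length_eq, List.length_map, c1]
    · rw [← h2]; exact Multiset.coe_eq_coe.2 (stSort_perm _ _)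
    · intro e he; exact c2 e ((stSort_perm _ _).mem_iff.1 he)
    · rw [(stSort_perm _ _).length_eq, List.length_map, c1]
    · rw [← h3]; exact Multiset.coe_eq_coe.2 (stSort_perm _ _)
    · intro e he; exact c3 e ((stSort_perm _ _).mem_iff.1 he)
  · intro P hP P' hP' h
    simp only [wlkF, Finset.coe_filter, Set.mem_ofPred_eq] at hP hP'
    obtain ⟨e1, e2⟩ := Prod.mk.inj h
    refine wlk_det M n i k k P P' hP.1 hP'.1 (fun v => ?_) (fun v => ?_)
    · rw [← stSort_filter Prod.fst, e1, stSort_filter]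
    · rw [← stSort_filter Prod.snd, e2, stSort_filter]

theorem wlkF_rev_le {t u : ℕ} (M : Fin t → Fin u → ℤ) (n : ℕ) (i k : Fin t)
    (b b' : Multiset (Fin t × Fin u)) :
    (wlkF M n i k b b').card ≤ (wlkF M n k i b' b).card := by
  refine Finset.card_le_card_of_injOn (fun P => P.reverse.map Prod.swap) ?_ ?_
  · intro P hP
    simp only [wlkF, Finset.coe_filter, Set.mem_ofPred_eq] at hP ⊢
    obtain ⟨h1, h2, h3⟩ := hP
    refine ⟨wlk_reverse M n i k P h1, ?_, ?_⟩
    · rw [← h3, List.map_map, List.map_reverse]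
      exact Multiset.coe_eq_coe.2 (List.reverse_perm _)
    · rw [← h2, List.map_map, List.map_reverse]
      exact Multiset.coe_eq_coe.2 (List.reverse_perm _)
  · intro P _ P' _ h
    exact List.reverse_injective (List.map_injective_iff.2 Prod.swap_injective h)

theorem wlkF_le_NP {t u : ℕ} (M : Fin t → Fin u → ℤ) (n : ℕ) (i k : Fin t)
    (b b' : Multiset (Fin t × Fin u)) : (wlkF M n i k b b').card ≤ (NP M n).card := by
  rw [← Nat.mul_self_le_mul_self_iff]
  calc (wlkF M n i k b b').card * (wlkF M n i k b b').card
      ≤ ((CLs M n b).card * (RLs M n b').card) * ((CLs M n b').card * (RLs M n b).card) :=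
        Nat.mul_le_mul (wlkF_le M n i k b b')
          ((wlkF_rev_le M n i k b b').trans (wlkF_le M n k i b' b))
    _ = ((CLs M n b).card * (RLs M n b).card) * ((CLs M n b').card * (RLs M n b').card) := by ring
    _ ≤ _ := Nat.mul_le_mul (CLs_mul_RLs M n b) (CLs_mul_RLs M n b')

/-- multisets of size `n` -/
def msN (E : Type) [Fintype E] (n : ℕ) : Finset (Multiset E) :=
  (listsN E n).image (fun l : List E => (l : Multiset E))

theorem mem_msN (E : Type) [Fintype E] (n : ℕ) (b : Multiset E) :
    b ∈ msN E n ↔ ∃ l : List E, l.length = n ∧ (l : Multiset E) = b := by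
  simp [msN, mem_listsN]

theorem card_multisets_le (E : Type) [Fintype E] (n : ℕ) :
    (msN E n).card ≤ (n + 1) ^ Fintype.card E := by
  have : (msN E n).card ≤
      (Finset.univ : Finset (E → Fin (n + 1))).card := by
    refine Finset.card_le_card_of_injOn
      (fun b e => ⟨min (b.count e) n, by omega⟩) (fun _ _ => by simp) ?_
    intro b hb b' hb' h
    have key : ∀ b, b ∈ msN E n → ∀ e, b.count e ≤ n := by
      intro b hb e
      obtain ⟨l, hl, rfl⟩ := (mem_msN E n b).1 hb
      rw [Multiset.coe_count, ← hl]
      exact List.count_le_length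
    ext e
    have := congrFun h e
    simp only [Fin.mk.injEq] at this
    rwa [min_eq_left (key b hb e), min_eq_left (key b' hb' e)] at this
  simpa using this

theorem card_wlk_le {t u : ℕ} (M : Fin t → Fin u → ℤ) (n : ℕ) (i k : Fin t) :
    (wlk M n i k).card ≤ (n + 1) ^ (2 * (t * u)) * (NP M n).card := by
  set MS := msN (Fin t × Fin u) n with hMS
  have h := Finset.card_le_mul_card_image_of_maps_to (s := wlk M n i k) (t := MS ×ˢ MS)
    (f := fun P => (((P.map Prod.fst : List (Fin t × Fin u)) : Multiset (Fin t × Fin u)),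
      ((P.map Prod.snd : List (Fin t × Fin u)) : Multiset (Fin t × Fin u)))) (by
      intro P hP
      have := (wlk_props M n i k P hP).1
      rw [Finset.mem_product]
      exact ⟨(mem_msN _ _ _).2 ⟨_, by simpa using this, rfl⟩,
        (mem_msN _ _ _).2 ⟨_, by simpa using this, rfl⟩⟩)
    (NP M n).card (by
      rintro ⟨b, b'⟩ _
      refine le_trans (le_of_eq ?_) (wlkF_le_NP M n i k b b')
      rw [wlkF]
      congr 1
      ext P
      simp only [Finset.mem_filter, Prod.mk.injEq])
  refine h.trans ?_
  rw [mul_comm]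
  refine Nat.mul_le_mul_right _ ?_
  rw [Finset.card_product, two_mul, pow_add]
  have := card_multisets_le (Fin t × Fin u) n
  rw [Fintype.card_prod, Fintype.card_fin, Fintype.card_fin] at this
  exact Nat.mul_le_mul this this

theorem card_fiber_eq_count {n : ℕ} {E : Type} (ω : Fin n → E) (e : E) :
    Fintype.card {p // ω p = e} = (List.ofFn ω).countP (fun x => decide (x = e)) := by
  rw [List.countP_eq_length_filter, ofFn_filter_eq, List.length_map, Fintype.card_subtype,
    ← List.toFinset_card_of_nodup ((List.nodup_finRange n).filter _)]
  congr 1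
  ext p
  simp

theorem NP_le {t u : ℕ} (M : Fin t → Fin u → ℤ)
    (hM : ∀ i j, M i j = 0 ∨ M i j = 1 ∨ M i j = -1) (n : ℕ) :
    (NP M n).card ≤ gridCount M n * ((n + 1) ^ t * (n + 1) ^ u) := by
  have hex : ∀ w : NP M n, ∃ (σ : {σ : Equiv.Perm (Fin n) // InGridClass M σ})
      (ω θ : Fin n → Fin t × Fin u), GridWords M σ.1 ω θ ∧
        w.1 = (List.ofFn ω, List.ofFn θ) := by
    rintro ⟨⟨l, l'⟩, hw⟩
    simp only [NP, Finset.mem_filter, Finset.mem_product, mem_listsN] at hw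
    obtain ⟨⟨hl, hl'⟩, h1, h2, h3, h4⟩ := hw
    subst hl
    let ω : Fin l.length → Fin t × Fin u := fun p => l.get p
    let θ : Fin l.length → Fin t × Fin u := fun p => l'.get (p.cast hl'.symm)
    have eω : List.ofFn ω = l := List.ofFn_get l
    have eθ : List.ofFn θ = l' := by
      refine List.ext_getElem (by simp [hl']) fun k _ _ => by simp [θ]
    obtain ⟨σ, hσ, hm⟩ := fiberMono_exists (fun e => M e.1 e.2 = 1) ω θ (fun e => by
      rw [card_fiber_eq_count, card_fiber_eq_count, eω, eθ]
      exact h3.countP_eq _)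
    have hG : GridWords M σ ω θ := by
      refine ⟨?_, ?_, hσ, fun p => h4 _ (List.get_mem l p), hm⟩
      · rw [monotone_iff_forall_lt]
        intro p q hpq
        exact List.pairwise_iff_get.1 h1 p q hpq
      · rw [monotone_iff_forall_lt]
        intro p q hpq
        exact List.pairwise_iff_get.1 h2 _ _ (by simpa using hpq)
    exact ⟨⟨σ, (inGridClass_iff M hM σ).2 ⟨ω, θ, hG⟩⟩, ω, θ, hG, by rw [eω, eθ]⟩
  choose σ ω θ hG hw using hex
  let F : NP M n → {σ : Equiv.Perm (Fin n) // InGridClass M σ} ×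
      ({f : Fin n → Fin t // Monotone f} × {f : Fin n → Fin u // Monotone f}) :=
    fun w => (σ w, ⟨_, (hG w).1⟩, ⟨_, (hG w).2.1⟩)
  have hF : Function.Injective F := by
    intro w w' h
    simp only [F, Prod.mk.injEq, Subtype.mk.injEq] at h
    obtain ⟨e1, e2, e3⟩ := h
    have eω : ω w = ω w' := by
      funext p
      refine Prod.ext (congrFun e2 p) ?_
      rw [← (hG w).2.2.1, ← (hG w').2.2.1, e1]
      exact congrFun e3 _
    have eθ : θ w = θ w' := by
      funext p
      have a := (hG w).2.2.1 ((σ w).1.symm p)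
      have b := (hG w').2.2.1 ((σ w').1.symm p)
      rw [Equiv.apply_symm_apply] at a b
      rw [a, b, eω, e1]
    apply Subtype.ext
    rw [hw, hw, eω, eθ]
  have h := Nat.card_le_card_of_injective F hF
  rw [Nat.card_prod, Nat.card_prod, Nat.card_eq_fintype_card, Fintype.card_coe] at h
  refine h.trans (Nat.mul_le_mul le_rfl (Nat.mul_le_mul ?_ ?_))
  · simpa using card_monotone_le (κ := Fin t) n
  · simpa using card_monotone_le (κ := Fin u) n

theorem gridCount_lower {t u : ℕ} (ht : 1 ≤ t) (M : Fin t → Fin u → ℤ)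
    (hM : ∀ i j, M i j = 0 ∨ M i j = 1 ∨ M i j = -1)
    (xc : Fin t → ℝ) (xr : Fin u → ℝ) (lam : ℝ) (hc : ∀ i, 0 < xc i)
    (h1 : ∀ i, ∑ j with M i j ≠ 0, xr j = lam * xc i)
    (h2 : ∀ j, ∑ i with M i j ≠ 0, xc i = lam * xr j) :
    ∃ K : ℝ, 1 ≤ K ∧ ∀ n : ℕ, (lam ^ 2) ^ n ≤
      K * ((n : ℝ) + 1) ^ (2 * (t * u) + (t + u)) * gridCount M n := by
  let i : Fin t := ⟨0, ht⟩
  refine ⟨(∑ k, xc k) / xc i, ?_, fun n => ?_⟩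
  · rw [one_le_div (hc i)]
    exact Finset.single_le_sum (f := xc) (fun k _ => (hc k).le) (Finset.mem_univ i)
  · have he := wlk_eigen M xc xr lam h1 h2 n i
    have hb : ∀ k, ((wlk M n i k).card : ℝ) ≤
        ((n : ℝ) + 1) ^ (2 * (t * u) + (t + u)) * gridCount M n := by
      intro k
      have a := (card_wlk_le M n i k).trans (Nat.mul_le_mul le_rfl (NP_le M hM n))
      have a' : ((wlk M n i k).card : ℝ) ≤ ((n : ℝ) + 1) ^ (2 * (t * u)) *
          (gridCount M n * (((n : ℝ) + 1) ^ t * ((n : ℝ) + 1) ^ u)) := by exact_mod_cast a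
      refine a'.trans (le_of_eq ?_)
      rw [pow_add, pow_add]; ring
    have hs : ∑ k, ((wlk M n i k).card : ℝ) * xc k ≤
        ∑ k, (((n : ℝ) + 1) ^ (2 * (t * u) + (t + u)) * gridCount M n) * xc k :=
      Finset.sum_le_sum fun k _ => mul_le_mul_of_nonneg_right (hb k) (hc k).le
    rw [he, ← Finset.mul_sum] at hs
    have := hc i
    rw [div_mul_eq_mul_div, div_mul_eq_mul_div, le_div_iff₀ this]
    linarith

/-! ### Traces (words modulo commutation) on a graph -/

/-- Other endpoint of an edge. -/
def trOth {E V : Type} [DecidableEq V] (a b : E → V) (e : E) (v : V) : V :=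
  if a e = v then b e else a e

/-- The projections of a word to the vertices. -/
def trPhi {E V : Type} [DecidableEq V] (a b : E → V) (l : List E) : V → List E :=
  fun v => l.filter (fun e => decide (a e = v ∨ b e = v))

/-- Kleene star of a set of words. -/
def trStar {E : Type} (L : Set (List E)) : Set (List E) :=
  {x | ∃ Ls : List (List E), x = Ls.flatten ∧ ∀ y ∈ Ls, y ∈ L}

/-- Products of `i` words. -/
def trPow {E : Type} (L : Set (List E)) (i : ℕ) : Set (List E) :=
  {x | ∃ Ls : List (List E), x = Ls.flatten ∧ Ls.length = i ∧ ∀ y ∈ Ls, y ∈ L}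

/-- Language of heaps all of whose minimal pieces touch `v`. -/
def trP {E V : Type} [DecidableEq V] (a b : E → V) : ℕ → Finset V → V → Set (List E)
  | 0, _, _ => {[]}
  | k + 1, S, v => trStar
      ({l | ∃ e q, (a e = v ∨ b e = v) ∧ trOth a b e v ∈ S.erase v ∧
        q ∈ trP a b k (S.erase v) (trOth a b e v) ∧ l = e :: q} : Set (List E))

def trT {E V : Type} [DecidableEq V] (a b : E → V) (n : ℕ) : Set (V → List E) :=
  trPhi a b '' {l | l.length = n}

def trWt {E : Type} (z : ENNReal) (L : Set (List E)) : ENNReal := ∑' l : L, z ^ (l : List E).length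

theorem trPhi_append {E V : Type} [DecidableEq V] (a b : E → V) (l m : List E) (v : V) :
    trPhi a b (l ++ m) v = trPhi a b l v ++ trPhi a b m v := by
  simp [trPhi]

theorem trPhi_append_congr {E V : Type} [DecidableEq V] (a b : E → V) {l l' m m' : List E}
    (h : trPhi a b l = trPhi a b l') (h' : trPhi a b m = trPhi a b m') :
    trPhi a b (l ++ m) = trPhi a b (l' ++ m') := by
  funext v
  rw [trPhi_append, trPhi_append, h, h']

theorem trPhi_comm {E V : Type} [DecidableEq V] (a b : E → V) (e : E) (w : List E)
    (h : ∀ f ∈ w, ∀ v, (a f = v ∨ b f = v) → ¬ (a e = v ∨ b e = v)) :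
    trPhi a b (e :: w) = trPhi a b (w ++ [e]) := by
  funext v
  by_cases hv : a e = v ∨ b e = v
  · have : trPhi a b w v = [] := by
      unfold trPhi
      rw [List.filter_eq_nil_iff]
      intro f hf
      simp only [decide_eq_true_eq]
      intro hfv
      exact h f hf v hfv hv
    rw [trPhi_append, this]
    rw [show e :: w = [e] ++ w from rfl, trPhi_append, this]
    simp
  · rw [trPhi_append]
    rw [show e :: w = [e] ++ w from rfl, trPhi_append]
    have : trPhi a b [e] v = [] := by simp [trPhi, hv]
    rw [this]; simp

theorem trOth_ne {E V : Type} [DecidableEq V] (a b : E → V) (hab : ∀ e, a e ≠ b e) (e : E) (v : V) :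
    trOth a b e v ≠ v := by
  unfold trOth
  split_ifs with h
  · intro h'; exact hab e (h.trans h'.symm)
  · exact h

theorem tr_inc_oth {E V : Type} [DecidableEq V] (a b : E → V) (e : E) (v : V)
    (h : a e = v ∨ b e = v) (w : V) : (a e = w ∨ b e = w) ↔ (w = v ∨ w = trOth a b e v) := by
  unfold trOth
  grind

theorem trP_decomp {E V : Type} [DecidableEq V] (a b : E → V) (hab : ∀ e, a e ≠ b e) :
    ∀ (k : ℕ) (S : Finset V) (v : V), S.card ≤ k → v ∈ S → ∀ l : List E,
      (∀ e ∈ l, a e ∈ S ∧ b e ∈ S) → ∃ w p : List E,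
        (∀ e ∈ w, a e ∈ S.erase v ∧ b e ∈ S.erase v) ∧ p ∈ trP a b k S v ∧
        trPhi a b l = trPhi a b (w ++ p) := by
  intro k
  induction k with
  | zero =>
    intro S v hS hv
    have : S = ∅ := by simpa using hS
    simp [this] at hv
  | succ k ih =>
    intro S v hS hv l
    induction l with
    | nil =>
      intro _
      refine ⟨[], [], by simp, ?_, rfl⟩
      rw [trP]
      exact ⟨[], by simp, by simp⟩
    | cons e l ihl =>
      intro hl
      obtain ⟨w, p, hw, hp, hlp⟩ := ihl (fun f hf => hl f (List.mem_cons_of_mem _ hf))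
      by_cases hev : a e = v ∨ b e = v
      · have hc : (S.erase v).card ≤ k := by
          rw [Finset.card_erase_of_mem hv]; omega
        have hoS : trOth a b e v ∈ S.erase v := by
          refine Finset.mem_erase.2 ⟨trOth_ne a b hab e v, ?_⟩
          have := hl e (by simp)
          unfold trOth; split_ifs
          · exact this.2
          · exact this.1
        obtain ⟨w', q, hw', hq, hwq⟩ := ih (S.erase v) (trOth a b e v) hc hoS w hw
        refine ⟨w', (e :: q) ++ p, ?_, ?_, ?_⟩
        · intro f hf
          have := hw' f hf
          exact ⟨Finset.mem_of_mem_erase this.1, Finset.mem_of_mem_erase this.2⟩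
        · rw [trP] at hp ⊢
          obtain ⟨L, hL, hLm⟩ := hp
          refine ⟨(e :: q) :: L, by simp [hL], ?_⟩
          intro y hy
          rcases List.mem_cons.1 hy with rfl | hy
          · exact ⟨e, q, hev, hoS, hq, rfl⟩
          · exact hLm y hy
        · have h1 : trPhi a b (e :: l) = trPhi a b ([e] ++ ((w' ++ q) ++ p)) :=
            trPhi_append_congr a b (l := [e]) (l' := [e]) rfl
              (hlp.trans (trPhi_append_congr a b hwq rfl))
          rw [h1]
          have h2 : trPhi a b (e :: w') = trPhi a b (w' ++ [e]) := by
            apply trPhi_comm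
            intro f hf x hfx hex
            have hfS := hw' f hf
            rw [tr_inc_oth a b e v hev] at hex
            grind
          have h3 := trPhi_append_congr a b h2 (rfl : trPhi a b (q ++ p) = trPhi a b (q ++ p))
          simpa using h3
      · refine ⟨e :: w, p, ?_, hp, ?_⟩
        · intro f hf
          rcases List.mem_cons.1 hf with rfl | hf
          · have := hl f (by simp)
            push Not at hev
            exact ⟨Finset.mem_erase.2 ⟨hev.1, this.1⟩, Finset.mem_erase.2 ⟨hev.2, this.2⟩⟩
          · exact hw f hf
        · exact trPhi_append_congr a b (l := [e]) (l' := [e]) rfl hlp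

theorem trWt_image2 {E : Type} (z : ENNReal) (L M N : Set (List E))
    (hN : ∀ x ∈ N, ∃ p ∈ L, ∃ q ∈ M, p ++ q = x) (hN' : ∀ p ∈ L, ∀ q ∈ M, p ++ q ∈ N) :
    trWt z N ≤ trWt z L * trWt z M := by
  let F : L × M → N := fun p => ⟨p.1.1 ++ p.2.1, hN' _ p.1.2 _ p.2.2⟩
  have hF : Function.Surjective F := by
    rintro ⟨x, hx⟩
    obtain ⟨p, hp, q, hq, rfl⟩ := hN x hx
    exact ⟨(⟨p, hp⟩, ⟨q, hq⟩), rfl⟩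
  unfold trWt
  calc _ ≤ ∑' p, z ^ ((F p : List E)).length :=
        ENNReal.tsum_le_tsum_comp_of_surjective hF (fun l => z ^ (l : List E).length)
    _ = ∑' (p : L) (q : M), z ^ (p : List E).length * z ^ (q : List E).length := by
        rw [ENNReal.tsum_prod']
        simp [F, pow_add]
    _ = _ := by
        simp_rw [ENNReal.tsum_mul_left, ENNReal.tsum_mul_right]

theorem trWt_nil {E : Type} (z : ENNReal) : trWt z ({[]} : Set (List E)) = 1 := by
  unfold trWt
  rw [tsum_singleton ([] : List E) (fun l : List E => z ^ l.length)]
  simp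

theorem trWt_star {E : Type} (z : ENNReal) (L : Set (List E)) :
    trWt z (trStar L) ≤ (1 - trWt z L)⁻¹ := by
  have hp : ∀ i : ℕ, trWt z (trPow L i) ≤ trWt z L ^ i := by
    intro i
    induction i with
    | zero =>
      have : trPow L 0 = {[]} := by
        ext x
        simp only [trPow, Set.mem_ofPred_eq, Set.mem_singleton_iff]
        constructor
        · rintro ⟨Ls, rfl, h, -⟩
          simp [List.length_eq_zero_iff.1 h]
        · rintro rfl; exact ⟨[], by simp⟩
      rw [pow_zero, this, trWt_nil]
    | succ i ih =>
      rw [pow_succ']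
      refine (trWt_image2 z L (trPow L i) _ ?_ ?_).trans (mul_le_mul' le_rfl ih)
      · rintro x ⟨Ls, rfl, h, h'⟩
        cases Ls with
        | nil => simp at h
        | cons y Ls =>
          exact ⟨y, h' y (by simp), Ls.flatten, ⟨Ls, rfl, by simpa using h,
            fun w hw => h' w (by simp [hw])⟩, by simp⟩
      · rintro p hp q ⟨Ls, rfl, h, h'⟩
        refine ⟨p :: Ls, by simp, by simp [h], ?_⟩
        intro y hy
        rcases List.mem_cons.1 hy with rfl | hy
        · exact hp
        · exact h' y hy
  rw [← ENNReal.tsum_geometric]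
  have : trStar L = ⋃ i : ℕ, trPow L i := by
    ext x
    simp only [trStar, trPow, Set.mem_iUnion, Set.mem_ofPred_eq]
    constructor
    · rintro ⟨Ls, h, h'⟩; exact ⟨_, Ls, h, rfl, h'⟩
    · rintro ⟨_, Ls, h, _, h'⟩; exact ⟨Ls, h, h'⟩
  unfold trWt
  rw [this]
  exact (ENNReal.tsum_iUnion_le_tsum (fun l : List E => z ^ l.length) _).trans
    (ENNReal.tsum_le_tsum hp)

theorem trWt_step {E V : Type} [Fintype E] [DecidableEq V] (a b : E → V) (z : ℝ) (hz : 0 ≤ z)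
    (k : ℕ) (S : Finset V) (v : V) (r : E → ℝ) (hr : ∀ e, 0 ≤ r e)
    (h : ∀ e, (a e = v ∨ b e = v) → trOth a b e v ∈ S.erase v →
      trWt (ENNReal.ofReal z) (trP a b k (S.erase v) (trOth a b e v)) ≤ ENNReal.ofReal (r e))
    (hlt : z * ∑ e with ((a e = v ∨ b e = v) ∧ trOth a b e v ∈ S.erase v), r e < 1) :
    trWt (ENNReal.ofReal z) (trP a b (k + 1) S v) ≤ ENNReal.ofReal
      ((1 - z * ∑ e with ((a e = v ∨ b e = v) ∧ trOth a b e v ∈ S.erase v), r e)⁻¹) := by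
  set F := Finset.univ.filter (fun e => (a e = v ∨ b e = v) ∧ trOth a b e v ∈ S.erase v) with hF
  rw [trP]
  refine (trWt_star _ _).trans ?_
  rw [ENNReal.ofReal_inv_of_pos (by linarith), ENNReal.ofReal_sub _ (mul_nonneg hz
    (Finset.sum_nonneg (fun e _ => hr e))), ENNReal.ofReal_one]
  refine ENNReal.inv_le_inv.2 (tsub_le_tsub_left ?_ _)
  have hU : ({l | ∃ e q, (a e = v ∨ b e = v) ∧ trOth a b e v ∈ S.erase v ∧
        q ∈ trP a b k (S.erase v) (trOth a b e v) ∧ l = e :: q} : Set (List E)) =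
        ⋃ e ∈ F, (fun q => e :: q) '' (trP a b k (S.erase v) (trOth a b e v)) := by
    ext l
    simp only [Set.mem_ofPred_eq, Set.mem_iUnion, hF, Finset.mem_filter, Finset.mem_univ, true_and,
      Set.mem_image]
    constructor
    · rintro ⟨e, q, h1, h2, h3, rfl⟩; exact ⟨e, ⟨h1, h2⟩, q, h3, rfl⟩
    · rintro ⟨e, ⟨h1, h2⟩, q, h3, rfl⟩; exact ⟨e, q, h1, h2, h3, rfl⟩
  rw [hU, ENNReal.ofReal_mul hz, ENNReal.ofReal_sum_of_nonneg (fun e _ => hr e), Finset.mul_sum]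
  refine (ENNReal.tsum_biUnion_le (fun l : List E => ENNReal.ofReal z ^ l.length) F _).trans ?_
  refine Finset.sum_le_sum ?_
  intro e he
  simp only [hF, Finset.mem_filter, Finset.mem_univ, true_and] at he
  rw [tsum_image (fun l : List E => ENNReal.ofReal z ^ l.length)
    (fun x _ y _ hxy => by simpa using hxy)]
  simp only [List.length_cons, pow_succ']
  rw [ENNReal.tsum_mul_left]
  exact mul_le_mul' le_rfl (h e he.1 he.2)


theorem trOth_oth {E V : Type} [DecidableEq V] (a b : E → V) (hab : ∀ e, a e ≠ b e) (e : E) (v : V)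
    (h : a e = v ∨ b e = v) : trOth a b e (trOth a b e v) = v ∧
      (a e = trOth a b e v ∨ b e = trOth a b e v) := by
  have := hab e
  unfold trOth
  grind

theorem trBound_le {E V : Type} [Fintype E] [DecidableEq E] [DecidableEq V] (a b : E → V)
    (hab : ∀ e, a e ≠ b e) (x : V → ℝ) (hx : ∀ v, 0 < x v) (lam : ℝ) (hlam : 0 < lam)
    (hsub : ∀ v, ∑ e with (a e = v ∨ b e = v), x (trOth a b e v) ≤ lam * x v) :
    ∀ (k : ℕ) (S : Finset V) (v : V) (e₀ : E), (a e₀ = v ∨ b e₀ = v) → trOth a b e₀ v ∉ S →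
      trWt (ENNReal.ofReal ((lam ^ 2)⁻¹)) (trP a b k S v) ≤
        ENNReal.ofReal (lam * x v / x (trOth a b e₀ v)) := by
  intro k
  induction k with
  | zero =>
    intro S v e₀ he₀ hS
    rw [trP, trWt_nil, ← ENNReal.ofReal_one]
    apply ENNReal.ofReal_le_ofReal
    rw [le_div_iff₀ (hx _), one_mul]
    refine le_trans ?_ (hsub v)
    exact Finset.single_le_sum (f := fun e => x (trOth a b e v)) (fun e _ => (hx _).le) (by simpa using he₀)
  | succ k ih =>
    intro S v e₀ he₀ hS
    set u := trOth a b e₀ v with hu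
    have hxv := hx v
    have hxu := hx u
    have hsum : ∑ e with ((a e = v ∨ b e = v) ∧ trOth a b e v ∈ S.erase v),
        lam * x (trOth a b e v) / x v ≤ lam / x v * (lam * x v - x u) := by
      have : ∑ e with ((a e = v ∨ b e = v) ∧ trOth a b e v ∈ S.erase v), x (trOth a b e v) + x u
          ≤ lam * x v := by
        refine le_trans ?_ (hsub v)
        rw [← Finset.add_sum_erase (Finset.univ.filter (fun e => a e = v ∨ b e = v)) _ (a := e₀)
          (by simpa using he₀), add_comm]
        refine add_le_add le_rfl ?_
        refine Finset.sum_le_sum_of_subset_of_nonneg ?_ (fun e _ _ => (hx _).le)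
        intro e he
        simp only [Finset.mem_filter, Finset.mem_univ, true_and] at he
        simp only [Finset.mem_erase, Finset.mem_filter, Finset.mem_univ, true_and]
        refine ⟨?_, he.1⟩
        rintro rfl
        exact hS (Finset.mem_of_mem_erase he.2)
      calc _ = lam / x v * ∑ e with ((a e = v ∨ b e = v) ∧ trOth a b e v ∈ S.erase v),
            x (trOth a b e v) := by
            rw [Finset.mul_sum]; refine Finset.sum_congr rfl (fun e _ => by ring)
        _ ≤ _ := mul_le_mul_of_nonneg_left (by linarith) (by positivity)
    have hz : (lam ^ 2)⁻¹ * ∑ e with ((a e = v ∨ b e = v) ∧ trOth a b e v ∈ S.erase v),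
        lam * x (trOth a b e v) / x v ≤ 1 - x u / (lam * x v) := by
      calc _ ≤ (lam ^ 2)⁻¹ * (lam / x v * (lam * x v - x u)) :=
            mul_le_mul_of_nonneg_left hsum (by positivity)
        _ = _ := by field_simp
    have hpos : 0 < x u / (lam * x v) := by positivity
    refine (trWt_step a b _ (by positivity) k S v (fun e => lam * x (trOth a b e v) / x v)
      (fun e => by have := hx (trOth a b e v); positivity) ?_ (by linarith)).trans ?_
    · intro e he heS
      have := trOth_oth a b hab e v he
      have h2 := ih (S.erase v) (trOth a b e v) e this.2 (by rw [this.1]; simp)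
      rwa [this.1] at h2
    · apply ENNReal.ofReal_le_ofReal
      rw [show lam * x v / x u = (x u / (lam * x v))⁻¹ by rw [inv_div]]
      exact inv_anti₀ hpos (by linarith)

theorem trBound_lt {E V : Type} [Fintype E] [DecidableEq E] [DecidableEq V] (a b : E → V)
    (hab : ∀ e, a e ≠ b e) (x : V → ℝ) (hx : ∀ v, 0 < x v) (lam : ℝ) (hlam : 0 < lam)
    (hsub : ∀ v, ∑ e with (a e = v ∨ b e = v), x (trOth a b e v) ≤ lam * x v)
    (D : E → V → Prop) (hD : ∀ e v, D e v → ∃ e', e' ≠ e ∧ (a e' = v ∨ b e' = v) ∧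
      D e' (trOth a b e' v)) :
    ∀ (k : ℕ) (S : Finset V) (v : V) (e₀ : E), (a e₀ = v ∨ b e₀ = v) → trOth a b e₀ v ∉ S →
      D e₀ v → ∃ r : ℝ, 0 ≤ r ∧ r < lam * x v / x (trOth a b e₀ v) ∧
      trWt (ENNReal.ofReal ((lam ^ 2)⁻¹)) (trP a b k S v) ≤ ENNReal.ofReal r := by
  intro k
  induction k with
  | zero =>
    intro S v e₀ he₀ hS hDe
    obtain ⟨e', hne, he', -⟩ := hD _ _ hDe
    refine ⟨1, zero_le_one, ?_, by rw [trP, trWt_nil, ← ENNReal.ofReal_one]⟩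
    rw [lt_div_iff₀ (hx _), one_mul]
    refine lt_of_lt_of_le ?_ (hsub v)
    have h1 : ∑ e ∈ {e₀, e'}, x (trOth a b e v) ≤
      ∑ e with (a e = v ∨ b e = v), x (trOth a b e v) := by
      refine Finset.sum_le_sum_of_subset_of_nonneg ?_ (fun e _ _ => (hx _).le)
      intro e he
      simp only [Finset.mem_insert, Finset.mem_singleton] at he
      rcases he with rfl | rfl <;> simpa
    rw [Finset.sum_pair hne.symm] at h1
    have := hx (trOth a b e' v)
    linarith
  | succ k ih =>
    intro S v e₀ he₀ hS hDe
    obtain ⟨e', hne, he', hDe'⟩ := hD _ _ hDe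
    set u := trOth a b e₀ v with hu
    have hxv := hx v
    have hxu := hx u
    set F := Finset.univ.filter (fun e => (a e = v ∨ b e = v) ∧ trOth a b e v ∈ S.erase v) with hF
    have key : ∃ r : E → ℝ, (∀ e, 0 ≤ r e) ∧ (∀ e, (a e = v ∨ b e = v) → trOth a b e v ∈ S.erase v →
      trWt (ENNReal.ofReal ((lam ^ 2)⁻¹)) (trP a b k (S.erase v) (trOth a b e v)) ≤ ENNReal.ofReal (r e))
      ∧ ∑ e ∈ F, r e < lam / x v * (lam * x v - x u) := by
      have hIH : ∀ e, (a e = v ∨ b e = v) → trOth a b e v ∈ S.erase v →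
          trWt (ENNReal.ofReal ((lam ^ 2)⁻¹)) (trP a b k (S.erase v) (trOth a b e v)) ≤
          ENNReal.ofReal (lam / x v * x (trOth a b e v)) := by
        intro e he heS
        have := trOth_oth a b hab e v he
        have h2 := trBound_le a b hab x hx lam hlam hsub k (S.erase v) (trOth a b e v) e this.2
          (by rw [this.1]; simp)
        rw [this.1] at h2
        rwa [show lam / x v * x (trOth a b e v) = lam * x (trOth a b e v) / x v by ring]
      have hFsub : F ⊆ (Finset.univ.filter (fun e => a e = v ∨ b e = v)).erase e₀ := by
        intro e he
        simp only [hF, Finset.mem_filter, Finset.mem_univ, true_and] at he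
        simp only [Finset.mem_erase, Finset.mem_filter, Finset.mem_univ, true_and]
        refine ⟨?_, he.1⟩
        rintro rfl
        exact hS (Finset.mem_of_mem_erase he.2)
      have hs0 := hsub v
      rw [← Finset.add_sum_erase (Finset.univ.filter (fun e => a e = v ∨ b e = v)) _ (a := e₀)
          (by simpa using he₀)] at hs0
      by_cases he'S : trOth a b e' v ∈ S.erase v
      · have hoo := trOth_oth a b hab e' v he'
        obtain ⟨r', hr0, hr1, hr2⟩ := ih (S.erase v) (trOth a b e' v) e' hoo.2
          (by rw [hoo.1]; simp) hDe'
        rw [hoo.1] at hr1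
        refine ⟨Function.update (fun e => lam / x v * x (trOth a b e v)) e' r', ?_, ?_, ?_⟩
        · intro e
          by_cases h : e = e'
          · subst h; simpa using hr0
          · have := hx (trOth a b e v)
            simp [h]; positivity
        · intro e he heS
          by_cases h : e = e'
          · subst h; simpa using hr2
          · simpa [h] using hIH e he heS
        · have he'F : e' ∈ F := by simp only [hF, Finset.mem_filter, Finset.mem_univ, true_and]; exact ⟨he', he'S⟩
          have hlt : ∑ e ∈ F, Function.update (fun e => lam / x v * x (trOth a b e v)) e' r' e <
              ∑ e ∈ F, lam / x v * x (trOth a b e v) := by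
            refine Finset.sum_lt_sum ?_ ⟨e', he'F, ?_⟩
            · intro e _
              by_cases h : e = e'
              · subst h
                simp only [Function.update_self]
                rw [show lam / x v * x (trOth a b e v) = lam * x (trOth a b e v) / x v by ring]
                exact hr1.le
              · simp [h]
            · simp only [Function.update_self]
              rw [show lam / x v * x (trOth a b e' v) = lam * x (trOth a b e' v) / x v by ring]
              exact hr1
          refine hlt.trans_le ?_
          rw [← Finset.mul_sum]
          refine mul_le_mul_of_nonneg_left ?_ (by positivity)
          have := Finset.sum_le_sum_of_subset_of_nonneg (f := fun e => x (trOth a b e v)) hFsub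
            (fun e _ _ => (hx _).le)
          linarith
      · refine ⟨fun e => lam / x v * x (trOth a b e v), ?_, hIH, ?_⟩
        · intro e
          have := hx (trOth a b e v); positivity
        · rw [← Finset.mul_sum]
          refine mul_lt_mul_of_pos_left ?_ (by positivity)
          rw [← Finset.add_sum_erase _ _ (a := e') (by simp [hne, he'])] at hs0
          have hFsub' : F ⊆ ((Finset.univ.filter (fun e => a e = v ∨ b e = v)).erase e₀).erase e' := by
            intro e he
            refine Finset.mem_erase.2 ⟨?_, hFsub he⟩
            rintro rfl
            simp only [hF, Finset.mem_filter, Finset.mem_univ, true_and] at he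
            exact he'S he.2
          have := Finset.sum_le_sum_of_subset_of_nonneg (f := fun e => x (trOth a b e v)) hFsub'
            (fun e _ _ => (hx _).le)
          have := hx (trOth a b e' v)
          linarith
    obtain ⟨r, hr0, hr1, hr2⟩ := key
    have hz : (lam ^ 2)⁻¹ * ∑ e ∈ F, r e < 1 - x u / (lam * x v) := by
      calc _ < (lam ^ 2)⁻¹ * (lam / x v * (lam * x v - x u)) :=
            mul_lt_mul_of_pos_left hr2 (by positivity)
        _ = _ := by field_simp
    have hpos : 0 < x u / (lam * x v) := by positivity
    refine ⟨_, ?_, ?_, trWt_step a b _ (by positivity) k S v r hr0 hr1 (by linarith)⟩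
    · exact inv_nonneg.2 (by linarith)
    · rw [show lam * x v / x u = (x u / (lam * x v))⁻¹ by rw [inv_div]]
      exact inv_strictAnti₀ hpos (by linarith)

theorem trBound_fin {E V : Type} [Fintype E] [DecidableEq E] [DecidableEq V] (a b : E → V)
    (hab : ∀ e, a e ≠ b e) (x : V → ℝ) (hx : ∀ v, 0 < x v) (lam : ℝ) (hlam : 0 < lam)
    (hsub : ∀ v, ∑ e with (a e = v ∨ b e = v), x (trOth a b e v) ≤ lam * x v)
    (D : E → V → Prop) (hD : ∀ e v, D e v → ∃ e', e' ≠ e ∧ (a e' = v ∨ b e' = v) ∧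
      D e' (trOth a b e' v)) (hD' : ∀ v, ∃ e, (a e = v ∨ b e = v) ∧ D e (trOth a b e v))
    (k : ℕ) (S : Finset V) (v : V) :
      trWt (ENNReal.ofReal ((lam ^ 2)⁻¹)) (trP a b k S v) < ⊤ := by
  by_cases hout : ∃ e₀, (a e₀ = v ∨ b e₀ = v) ∧ trOth a b e₀ v ∉ S
  · obtain ⟨e₀, h1, h2⟩ := hout
    exact (trBound_le a b hab x hx lam hlam hsub k S v e₀ h1 h2).trans_lt ENNReal.ofReal_lt_top
  push Not at hout
  cases k with
  | zero => rw [trP, trWt_nil]; exact ENNReal.one_lt_top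
  | succ k =>
    obtain ⟨e', he', hDe'⟩ := hD' v
    have hxv := hx v
    set F := Finset.univ.filter (fun e => (a e = v ∨ b e = v) ∧ trOth a b e v ∈ S.erase v) with hF
    have hIH : ∀ e, (a e = v ∨ b e = v) → trOth a b e v ∈ S.erase v →
          trWt (ENNReal.ofReal ((lam ^ 2)⁻¹)) (trP a b k (S.erase v) (trOth a b e v)) ≤
          ENNReal.ofReal (lam / x v * x (trOth a b e v)) := by
      intro e he heS
      have := trOth_oth a b hab e v he
      have h2 := trBound_le a b hab x hx lam hlam hsub k (S.erase v) (trOth a b e v) e this.2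
          (by rw [this.1]; simp)
      rw [this.1] at h2
      rwa [show lam / x v * x (trOth a b e v) = lam * x (trOth a b e v) / x v by ring]
    have hoo := trOth_oth a b hab e' v he'
    obtain ⟨r', hr0, hr1, hr2⟩ := trBound_lt a b hab x hx lam hlam hsub D hD k (S.erase v)
      (trOth a b e' v) e' hoo.2 (by rw [hoo.1]; simp) hDe'
    rw [hoo.1] at hr1
    have he'F : e' ∈ F := by
      simp only [hF, Finset.mem_filter, Finset.mem_univ, true_and]
      exact ⟨he', Finset.mem_erase.2 ⟨trOth_ne a b hab e' v, hout e' he'⟩⟩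
    have hFsub : F ⊆ (Finset.univ.filter (fun e => a e = v ∨ b e = v)) := by
      intro e he
      simp only [hF, Finset.mem_filter, Finset.mem_univ, true_and] at he
      simp only [Finset.mem_filter, Finset.mem_univ, true_and]
      exact he.1
    have hlt : ∑ e ∈ F, Function.update (fun e => lam / x v * x (trOth a b e v)) e' r' e <
              ∑ e ∈ F, lam / x v * x (trOth a b e v) := by
      refine Finset.sum_lt_sum ?_ ⟨e', he'F, ?_⟩
      · intro e _
        by_cases h : e = e'
        · subst h
          simp only [Function.update_self]
          rw [show lam / x v * x (trOth a b e v) = lam * x (trOth a b e v) / x v by ring]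
          exact hr1.le
        · simp [h]
      · simp only [Function.update_self]
        rw [show lam / x v * x (trOth a b e' v) = lam * x (trOth a b e' v) / x v by ring]
        exact hr1
    have hz : (lam ^ 2)⁻¹ * ∑ e ∈ F, Function.update (fun e => lam / x v * x (trOth a b e v)) e' r' e < 1 := by
      have h2 : ∑ e ∈ F, lam / x v * x (trOth a b e v) ≤ lam / x v * (lam * x v) := by
        rw [← Finset.mul_sum]
        refine mul_le_mul_of_nonneg_left ?_ (by positivity)
        exact (Finset.sum_le_sum_of_subset_of_nonneg hFsub (fun e _ _ => (hx _).le)).trans (hsub v)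
      calc _ < (lam ^ 2)⁻¹ * (lam / x v * (lam * x v)) :=
            mul_lt_mul_of_pos_left (hlt.trans_le h2) (by positivity)
        _ = 1 := by field_simp
    refine (trWt_step a b _ (by positivity) k S v
      (Function.update (fun e => lam / x v * x (trOth a b e v)) e' r') ?_ ?_ hz).trans_lt
      ENNReal.ofReal_lt_top
    · intro e
      by_cases h : e = e'
      · subst h; simpa using hr0
      · have := hx (trOth a b e v)
        simp [h]; positivity
    · intro e he heS
      by_cases h : e = e'
      · subst h; simpa using hr2
      · simpa [h] using hIH e he heS


theorem trPhi_length {E V : Type} [DecidableEq V] [DecidableEq E] (a b : E → V) {l l' : List E}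
    (h : trPhi a b l = trPhi a b l') : l.length = l'.length := by
  apply List.Perm.length_eq
  rw [List.perm_iff_count]
  intro e
  have h1 : ∀ m : List E, m.count e = (trPhi a b m (a e)).count e := by
    intro m
    unfold trPhi
    rw [List.count_filter]
    simp
  rw [h1 l, h1 l', h]

theorem tr_normal {E V : Type} [DecidableEq V] (a b : E → V)
    (hab : ∀ e, a e ≠ b e) (z : ENNReal) (hfin : ∀ k S v, trWt z (trP a b k S v) < ⊤)
    (S : Finset V) : ∃ L : Set (List E), trWt z L < ⊤ ∧ ∀ l : List E,
      (∀ e ∈ l, a e ∈ S ∧ b e ∈ S) → ∃ l' ∈ L, trPhi a b l = trPhi a b l' := by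
  induction S using Finset.induction_on with
  | empty =>
    refine ⟨{[]}, by rw [trWt_nil]; exact ENNReal.one_lt_top, ?_⟩
    intro l hl
    cases l with
    | nil => exact ⟨[], rfl, rfl⟩
    | cons e l => exact absurd (hl e (by simp)).1 (by simp)
  | insert v S hv ih =>
    obtain ⟨L, hL, hL'⟩ := ih
    refine ⟨Set.image2 (· ++ ·) L (trP a b (insert v S).card (insert v S) v), ?_, ?_⟩
    · refine (trWt_image2 z L (trP a b (insert v S).card (insert v S) v) _ ?_ ?_).trans_lt
        (ENNReal.mul_lt_top hL (hfin _ _ _))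
      · rintro x ⟨p, hp, q, hq, rfl⟩; exact ⟨p, hp, q, hq, rfl⟩
      · intro p hp q hq; exact ⟨p, hp, q, hq, rfl⟩
    · intro l hl
      obtain ⟨w, p, hw, hp, h⟩ := trP_decomp a b hab _ (insert v S) v le_rfl (by simp) l hl
      rw [Finset.erase_insert hv] at hw
      obtain ⟨w', hw', h'⟩ := hL' w hw
      exact ⟨w' ++ p, ⟨w', hw', p, hp, rfl⟩, h.trans (trPhi_append_congr a b h' rfl)⟩

theorem trT_finite {E V : Type} [Finite E] [DecidableEq V] (a b : E → V) (n : ℕ) :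
    (trT a b n).Finite := (List.finite_length_eq E n).image _

theorem trT_pos {E V : Type} [Finite E] [Nonempty E] [DecidableEq V] (a b : E → V) (n : ℕ) :
    0 < (trT a b n).ncard := by
  rw [Set.ncard_pos (trT_finite a b n)]
  exact ⟨_, List.replicate n (Classical.arbitrary E), by simp, rfl⟩

theorem trT_add {E V : Type} [Finite E] [DecidableEq V] (a b : E → V) (m n : ℕ) :
    (trT a b (m + n)).ncard ≤ (trT a b m).ncard * (trT a b n).ncard := by
  have hsub : trT a b (m + n) ⊆
      (fun p : (V → List E) × (V → List E) => fun v => p.1 v ++ p.2 v) '' (trT a b m ×ˢ trT a b n) := by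
    rintro _ ⟨l, hl, rfl⟩
    have hl' : l.length = m + n := hl
    refine ⟨(trPhi a b (l.take m), trPhi a b (l.drop m)), ⟨⟨_, ?_, rfl⟩, ⟨_, ?_, rfl⟩⟩, ?_⟩
    · simp [hl']
    · simp [hl']
    · funext v
      simp only
      rw [← trPhi_append, List.take_append_drop]
  have hfin := (trT_finite a b m).prod (trT_finite a b n)
  rw [← Set.ncard_prod]
  exact (Set.ncard_le_ncard hsub (hfin.image _)).trans (Set.ncard_image_le hfin)

theorem tr_sum_lt {E V : Type} [Finite E] [DecidableEq E] [Fintype V] [DecidableEq V] [Nonempty E]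
    (a b : E → V)
    (hab : ∀ e, a e ≠ b e) (z : ENNReal) (hfin : ∀ k S v, trWt z (trP a b k S v) < ⊤) :
    ∃ n : ℕ, n ≠ 0 ∧ ((trT a b n).ncard : ENNReal) * z ^ n < 1 := by
  obtain ⟨L, hL, hL'⟩ := tr_normal a b hab z hfin Finset.univ
  have hL'' : ∀ l : List E, ∃ l' ∈ L, trPhi a b l = trPhi a b l' := fun l => hL' l (by simp)
  have hch : ∀ p : (Σ n : ℕ, trT a b n), ∃ l : L, trPhi a b (l : List E) = p.2.1 ∧ l.1.length = p.1 := by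
    rintro ⟨n, φ, l, hl, rfl⟩
    obtain ⟨l', h1, h2⟩ := hL'' l
    exact ⟨⟨l', h1⟩, h2.symm, (trPhi_length a b h2.symm).trans hl⟩
  choose G hG1 hG2 using hch
  have hGinj : Function.Injective G := by
    rintro ⟨n, φ⟩ ⟨m, ψ⟩ h
    have h1 := hG2 ⟨n, φ⟩
    have h2 := hG2 ⟨m, ψ⟩
    have h3 := hG1 ⟨n, φ⟩
    have h4 := hG1 ⟨m, ψ⟩
    rw [h] at h1 h3
    have : n = m := h1.symm.trans h2
    subst this
    have : φ = ψ := Subtype.ext (h3.symm.trans h4)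
    rw [this]
  have hle : ∑' n : ℕ, ((trT a b n).ncard : ENNReal) * z ^ n ≤ trWt z L := by
    have h1 := ENNReal.tsum_comp_le_tsum_of_injective hGinj (fun l : L => z ^ (l : List E).length)
    refine le_trans (le_of_eq ?_) h1
    rw [ENNReal.tsum_sigma']
    refine tsum_congr (fun n => ?_)
    have : ∀ φ : trT a b n, z ^ (G ⟨n, φ⟩ : List E).length = z ^ n := fun φ => by rw [hG2]
    simp_rw [this]
    have hF := trT_finite a b n
    rw [ENNReal.tsum_set_const, ← hF.cast_ncard_eq]
    simp
  by_contra hcon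
  push Not at hcon
  have h1 : ∀ n : ℕ, 1 ≤ ((trT a b n).ncard : ENNReal) * z ^ n := by
    intro n
    by_cases hn : n = 0
    · subst hn
      have := trT_pos a b 0
      simp only [pow_zero, mul_one]
      exact_mod_cast this
    · exact hcon n hn
  have h2 : (⊤ : ENNReal) ≤ ∑' n : ℕ, ((trT a b n).ncard : ENNReal) * z ^ n := by
    refine le_trans (le_of_eq ?_) (ENNReal.tsum_le_tsum h1)
    rw [ENNReal.tsum_const]; simp
  exact absurd (h2.trans hle) (not_le.2 hL)

theorem trT_main {E V : Type} [Fintype E] [DecidableEq E] [Fintype V] [DecidableEq V] [Nonempty E]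
    (a b : E → V) (hab : ∀ e, a e ≠ b e) :
    ∃ L : ℝ, Tendsto (fun n : ℕ => ((trT a b n).ncard : ℝ) ^ (1 / (n : ℝ))) atTop (nhds L) ∧
      ∀ (x : V → ℝ) (_ : ∀ v, 0 < x v) (lam : ℝ) (_ : 0 < lam)
        (_ : ∀ v, ∑ e with (a e = v ∨ b e = v), x (trOth a b e v) ≤ lam * x v)
        (D : E → V → Prop) (_ : ∀ e v, D e v → ∃ e', e' ≠ e ∧ (a e' = v ∨ b e' = v) ∧
          D e' (trOth a b e' v)) (_ : ∀ v, ∃ e, (a e = v ∨ b e = v) ∧ D e (trOth a b e v)),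
        L < lam ^ 2 := by
  have hpos : ∀ n, (0 : ℝ) < (trT a b n).ncard := fun n => by exact_mod_cast trT_pos a b n
  have hsub : Subadditive (fun n => Real.log (trT a b n).ncard) := by
    intro m n
    simp only
    rw [← Real.log_mul (hpos m).ne' (hpos n).ne']
    apply Real.log_le_log (hpos _)
    exact_mod_cast trT_add a b m n
  have hbdd : BddBelow (Set.range fun n : ℕ => Real.log (trT a b n).ncard / n) := by
    refine ⟨0, ?_⟩
    rintro _ ⟨n, rfl⟩
    have : (1 : ℝ) ≤ (trT a b n).ncard := by exact_mod_cast trT_pos a b n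
    have := Real.log_nonneg this
    positivity
  have hrw : ∀ n : ℕ, ((trT a b n).ncard : ℝ) ^ (1 / (n : ℝ)) =
      Real.exp (Real.log (trT a b n).ncard / n) := by
    intro n
    rw [Real.rpow_def_of_pos (hpos n), mul_one_div]
  refine ⟨Real.exp hsub.lim, ?_, ?_⟩
  · simp_rw [hrw]
    exact (Real.continuous_exp.tendsto _).comp (hsub.tendsto_lim hbdd)
  · intro x hx lam hlam hs D hD hD'
    obtain ⟨n, hn, hlt⟩ := tr_sum_lt a b hab (ENNReal.ofReal ((lam ^ 2)⁻¹))
      (fun k S v => trBound_fin a b hab x hx lam hlam hs D hD hD' k S v)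
    have hlt' : ((trT a b n).ncard : ℝ) < (lam ^ 2) ^ n := by
      have hz : (0:ℝ) ≤ (lam ^ 2)⁻¹ := by positivity
      rw [← ENNReal.ofReal_pow hz, ← ENNReal.ofReal_natCast, ← ENNReal.ofReal_mul (by positivity),
        ← ENNReal.ofReal_one, ENNReal.ofReal_lt_ofReal_iff one_pos, inv_pow,
        mul_inv_lt_iff₀ (by positivity), one_mul] at hlt
      exact hlt
    have h1 := hsub.lim_le_div hbdd hn
    have hn' : (0 : ℝ) < n := by positivity
    have h2 : Real.log (trT a b n).ncard / n < Real.log (lam ^ 2) := by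
      rw [div_lt_iff₀ hn', mul_comm, ← Real.log_pow]
      exact Real.log_lt_log (hpos n) hlt'
    calc Real.exp hsub.lim < Real.exp (Real.log (lam ^ 2)) := Real.exp_lt_exp.2 (h1.trans_lt h2)
      _ = _ := Real.exp_log (by positivity)


/-! ### Part 6: the geometric class and words up to commutation -/

/-- key giving the linear order of times along an axis -/
def gk {E κ : Type} {n : ℕ} (h : E → κ) (s : κ → Bool) (l : Fin n → E) (k : Fin n) : κ ×ₗ Fin n :=
  toLex (h (l k), if s (h (l k)) then k else k.rev)

theorem gk_injective {E κ : Type} {n : ℕ} (h : E → κ) (s : κ → Bool) (l : Fin n → E) :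
    Function.Injective (gk h s l) := by
  intro k k' hk
  have h1 := (Prod.mk.inj (toLex.injective hk)).1
  have h2 := (Prod.mk.inj (toLex.injective hk)).2
  rw [← h1] at h2
  split_ifs at h2
  · exact h2
  · exact Fin.rev_injective h2

theorem gk_sort {E κ : Type} [LinearOrder κ] {n : ℕ} (h : E → κ) (s : κ → Bool) (l : Fin n → E) :
    ∃ τ : Equiv.Perm (Fin n), StrictMono (fun p => gk h s l (τ p)) := by
  refine ⟨Tuple.sort (gk h s l), ?_⟩
  have h1 : Monotone (gk h s l ∘ Tuple.sort (gk h s l)) := Tuple.monotone_sort _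
  exact h1.strictMono_of_injective ((gk_injective h s l).comp (Equiv.injective _))

theorem gk_key_mono {E κ : Type} [LinearOrder κ] {n : ℕ} (h : E → κ) (s : κ → Bool) (l : Fin n → E)
    (τ : Equiv.Perm (Fin n)) (hτ : StrictMono (fun p => gk h s l (τ p))) :
    Monotone (fun p => h (l (τ p))) := by
  intro p q hpq
  have := hτ.monotone hpq
  simp only [gk, Prod.Lex.toLex_le_toLex] at this
  rcases this with h | h
  · exact h.le
  · exact h.1.le

theorem gk_same {E κ : Type} [LinearOrder κ] {n : ℕ} (h : E → κ) (s : κ → Bool) (l : Fin n → E)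
    (τ : Equiv.Perm (Fin n)) (hτ : StrictMono (fun p => gk h s l (τ p))) (p q : Fin n)
    (hpq : p < q) (he : h (l (τ p)) = h (l (τ q))) :
    (s (h (l (τ p))) = true → τ p < τ q) ∧ (s (h (l (τ p))) = false → τ q < τ p) := by
  have := hτ hpq
  simp only [gk, Prod.Lex.toLex_lt_toLex] at this
  rcases this with h | ⟨_, h⟩
  · exact absurd he h.ne
  · rw [← he] at h
    refine ⟨fun hs => ?_, fun hs => ?_⟩
    · simpa [hs] using h
    · simpa [hs] using h

theorem gk_filter {E κ : Type} [LinearOrder κ] {n : ℕ} (h : E → κ) (s : κ → Bool) (l : Fin n → E)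
    (τ : Equiv.Perm (Fin n)) (hτ : StrictMono (fun p => gk h s l (τ p))) (v : κ) :
    (List.ofFn fun p => l (τ p)).filter (fun e => decide (h e = v)) =
      if s v then (List.ofFn l).filter (fun e => decide (h e = v))
      else ((List.ofFn l).filter (fun e => decide (h e = v))).reverse := by
  by_cases hs : s v = true
  · rw [if_pos hs]
    refine ofFn_filter_mono _ l τ (fun _ => rfl) _ fun p q hpq hp hq => ?_
    simp only [decide_eq_true_eq] at hp hq
    exact (gk_same h s l τ hτ p q hpq (hp.trans hq.symm)).1 (by rw [hp]; exact hs)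
  · rw [if_neg hs]
    refine ofFn_filter_anti _ l τ (fun _ => rfl) _ fun p q hpq hp hq => ?_
    simp only [decide_eq_true_eq] at hp hq
    exact (gk_same h s l τ hτ p q hpq (hp.trans hq.symm)).2 (by rw [hp]; simpa using hs)

theorem gk_word_eq {E κ : Type} [LinearOrder κ] {n : ℕ} (h : E → κ) (s : κ → Bool)
    (l l' : Fin n → E)
    (τ τ' : Equiv.Perm (Fin n)) (hτ : StrictMono (fun p => gk h s l (τ p)))
    (hτ' : StrictMono (fun p => gk h s l' (τ' p)))
    (hf : ∀ v, (List.ofFn l).filter (fun e => decide (h e = v)) =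
      (List.ofFn l').filter (fun e => decide (h e = v))) :
    (fun p => l (τ p)) = (fun p => l' (τ' p)) := by
  apply List.ofFn_injective
  refine list_eq_of_sorted_filters h _ _ ?_ ?_ fun v => ?_
  · rw [List.pairwise_ofFn]
    intro p q hpq
    exact gk_key_mono h s l τ hτ hpq.le
  · rw [List.pairwise_ofFn]
    intro p q hpq
    exact gk_key_mono h s l' τ' hτ' hpq.le
  · rw [gk_filter h s l τ hτ, gk_filter h s l' τ' hτ', hf]

theorem gk_filter_eq {E κ : Type} [LinearOrder κ] {n : ℕ} (h : E → κ) (s : κ → Bool)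
    (l l' : Fin n → E)
    (τ τ' : Equiv.Perm (Fin n)) (hτ : StrictMono (fun p => gk h s l (τ p)))
    (hτ' : StrictMono (fun p => gk h s l' (τ' p)))
    (hf : (fun p => l (τ p)) = (fun p => l' (τ' p))) (v : κ) :
    (List.ofFn l).filter (fun e => decide (h e = v)) =
      (List.ofFn l').filter (fun e => decide (h e = v)) := by
  have h1 := gk_filter h s l τ hτ v
  have h2 := gk_filter h s l' τ' hτ' v
  rw [hf, h2] at h1
  split_ifs at h1
  · exact h1.symm
  · exact (List.reverse_injective h1).symm

/-- `σ` is drawn by the word `l` -/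
def GeomW {E κ₁ κ₂ : Type} [LinearOrder κ₁] [LinearOrder κ₂] {n : ℕ} (h₁ : E → κ₁) (s₁ : κ₁ → Bool)
    (h₂ : E → κ₂) (s₂ : κ₂ → Bool) (l : Fin n → E) (τ ρ σ : Equiv.Perm (Fin n)) : Prop :=
  StrictMono (fun p => gk h₁ s₁ l (τ p)) ∧ StrictMono (fun p => gk h₂ s₂ l (ρ p)) ∧
    ∀ p, ρ (σ p) = τ p

theorem GeomW.fiberMono {E κ₁ κ₂ : Type} [LinearOrder κ₁] [LinearOrder κ₂] {n : ℕ} {h₁ : E → κ₁}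
    {s₁ : κ₁ → Bool} {h₂ : E → κ₂} {s₂ : κ₂ → Bool} {l : Fin n → E} {τ ρ σ : Equiv.Perm (Fin n)}
    (hG : GeomW h₁ s₁ h₂ s₂ l τ ρ σ) :
    FiberMono (fun e => s₁ (h₁ e) = s₂ (h₂ e)) (fun p => l (τ p)) σ := by
  obtain ⟨a1, a2, a3⟩ := hG
  intro p q hpq he
  simp only at he
  have c1 := gk_same h₁ s₁ l τ a1 p q hpq (by rw [he])
  have hne : σ p ≠ σ q := fun h => hpq.ne (σ.injective h)
  rcases lt_or_gt_of_ne hne with hlt | hlt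
  · have c2 := gk_same h₂ s₂ l ρ a2 _ _ hlt (by rw [a3, a3, he])
    simp only [a3] at c2
    refine ⟨fun _ => hlt, fun hs => ?_⟩
    exfalso
    cases hb : s₁ (h₁ (l (τ p))) <;> cases hb' : s₂ (h₂ (l (τ p))) <;>
      simp only [hb, hb'] at c1 c2 hs <;> simp at c1 c2 hs
    · exact absurd (c1.trans c2) (lt_irrefl _)
    · exact absurd (c1.trans c2) (lt_irrefl _)
  · have c2 := gk_same h₂ s₂ l ρ a2 _ _ hlt (by rw [a3, a3, he])
    simp only [a3, ← he] at c2
    refine ⟨fun hs => ?_, fun _ => hlt⟩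
    exfalso
    cases hb : s₁ (h₁ (l (τ p))) <;> cases hb' : s₂ (h₂ (l (τ p))) <;>
      simp only [hb, hb'] at c1 c2 hs <;> simp at c1 c2 hs
    · exact absurd (c1.trans c2) (lt_irrefl _)
    · exact absurd (c1.trans c2) (lt_irrefl _)

theorem GeomW.unique {E κ₁ κ₂ : Type} [LinearOrder κ₁] [LinearOrder κ₂] {n : ℕ} {h₁ : E → κ₁}
    {s₁ : κ₁ → Bool} {h₂ : E → κ₂} {s₂ : κ₂ → Bool} {l : Fin n → E} {τ ρ σ : Equiv.Perm (Fin n)}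
    (hG : GeomW h₁ s₁ h₂ s₂ l τ ρ σ) {l' : Fin n → E} {τ' ρ' σ' : Equiv.Perm (Fin n)}
    (hG' : GeomW h₁ s₁ h₂ s₂ l' τ' ρ' σ')
    (hf1 : ∀ v, (List.ofFn l).filter (fun e => decide (h₁ e = v)) =
      (List.ofFn l').filter (fun e => decide (h₁ e = v)))
    (hf2 : ∀ v, (List.ofFn l).filter (fun e => decide (h₂ e = v)) =
      (List.ofFn l').filter (fun e => decide (h₂ e = v))) : σ = σ' := by
  have e1 := gk_word_eq h₁ s₁ l l' τ τ' hG.1 hG'.1 hf1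
  have e2 := gk_word_eq h₂ s₂ l l' ρ ρ' hG.2.1 hG'.2.1 hf2
  have m' := hG'.fiberMono
  rw [← e1] at m'
  refine fiberMono_unique _ (fun p => l (τ p)) (fun p => l (ρ p)) σ σ' (fun p => ?_)
    (fun p => ?_) hG.fiberMono m'
  · rw [hG.2.2]
  · have a : l (ρ (σ' p)) = l' (ρ' (σ' p)) := congrFun e2 (σ' p)
    have b : l (τ p) = l' (τ' p) := congrFun e1 p
    rw [a, b, hG'.2.2]

theorem GeomW.filters {E κ₁ κ₂ : Type} [LinearOrder κ₁] [LinearOrder κ₂] {n : ℕ} {h₁ : E → κ₁}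
    {s₁ : κ₁ → Bool} {h₂ : E → κ₂} {s₂ : κ₂ → Bool} {l : Fin n → E} {τ ρ σ : Equiv.Perm (Fin n)}
    (hG : GeomW h₁ s₁ h₂ s₂ l τ ρ σ) {l' : Fin n → E} {τ' ρ' : Equiv.Perm (Fin n)}
    (hG' : GeomW h₁ s₁ h₂ s₂ l' τ' ρ' σ)
    (hinj : ∀ e e', h₁ e = h₁ e' → h₂ e = h₂ e' → e = e')
    (e1 : ∀ p, h₁ (l (τ p)) = h₁ (l' (τ' p))) (e2 : ∀ p, h₂ (l (ρ p)) = h₂ (l' (ρ' p))) :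
    (∀ v, (List.ofFn l).filter (fun e => decide (h₁ e = v)) =
      (List.ofFn l').filter (fun e => decide (h₁ e = v))) ∧
    (∀ v, (List.ofFn l).filter (fun e => decide (h₂ e = v)) =
      (List.ofFn l').filter (fun e => decide (h₂ e = v))) := by
  have c1 : ∀ p, l (τ p) = l' (τ' p) := by
    intro p
    refine hinj _ _ (e1 p) ?_
    rw [← hG.2.2, ← hG'.2.2, e2]
  have c2 : ∀ p, l (ρ p) = l' (ρ' p) := by
    intro p
    have := c1 (σ.symm p)
    rw [← hG.2.2, ← hG'.2.2, Equiv.apply_symm_apply] at this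
    exact this
  exact ⟨gk_filter_eq h₁ s₁ l l' τ τ' hG.1 hG'.1 (funext c1),
    gk_filter_eq h₂ s₂ l l' ρ ρ' hG.2.1 hG'.2.1 (funext c2)⟩

theorem GeomW.exists {E κ₁ κ₂ : Type} [LinearOrder κ₁] [LinearOrder κ₂] {n : ℕ} (h₁ : E → κ₁)
    (s₁ : κ₁ → Bool) (h₂ : E → κ₂) (s₂ : κ₂ → Bool) (l : Fin n → E) :
    ∃ τ ρ σ, GeomW h₁ s₁ h₂ s₂ l τ ρ σ := by
  obtain ⟨τ, hτ⟩ := gk_sort h₁ s₁ l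
  obtain ⟨ρ, hρ⟩ := gk_sort h₂ s₂ l
  exact ⟨τ, ρ, τ.trans ρ.symm, hτ, hρ, fun p => by simp⟩


/-- half cells -/
abbrev GE {t u : ℕ} (M : Fin t → Fin u → ℤ) : Type :=
  {e : (Fin t × Fin u) × Bool // M e.1.1 e.1.2 ≠ 0}

def kc {t u : ℕ} {M : Fin t → Fin u → ℤ} (e : GE M) : Fin t ×ₗ Bool := toLex (e.1.1.1, e.1.2)

def kr {t u : ℕ} {M : Fin t → Fin u → ℤ} (e : GE M) : Fin u ×ₗ Bool :=
  toLex (e.1.1.2, if M e.1.1.1 e.1.1.2 = 1 then e.1.2 else !e.1.2)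

def ori {m : ℕ} (v : Fin m ×ₗ Bool) : Bool := (ofLex v).2

/-- coordinate of a point in a half-strip at distance `d` from the middle -/
def crd {m : ℕ} (v : Fin m ×ₗ Bool) (d : ℝ) : ℝ :=
  (((ofLex v).1 : ℕ) : ℝ) + 1 / 2 + if (ofLex v).2 then d else -d

theorem key_lt_iff {m : ℕ} (v w : Fin m ×ₗ Bool) :
    v < w ↔ (ofLex v).1 < (ofLex w).1 ∨
      ((ofLex v).1 = (ofLex w).1 ∧ (ofLex v).2 = false ∧ (ofLex w).2 = true) := by
  rw [Prod.Lex.lt_iff, Bool.lt_iff]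

theorem crd_le_of_key_lt {m : ℕ} (v w : Fin m ×ₗ Bool) (d d' : ℝ) (hd : 0 ≤ d) (hd' : 0 ≤ d')
    (h1 : d < 1 / 2) (h1' : d' < 1 / 2) (h : v < w) : crd v d ≤ crd w d' := by
  rw [key_lt_iff] at h
  rcases h with h | ⟨h, h2, h3⟩
  · have : (((ofLex v).1 : ℕ) : ℝ) + 1 ≤ (((ofLex w).1 : ℕ) : ℝ) := by exact_mod_cast h
    simp only [crd]
    split_ifs <;> linarith
  · simp only [crd, h, h2, h3]
    simp
    linarith

theorem crd_lt_of_key_lt {m : ℕ} (v w : Fin m ×ₗ Bool) (d d' : ℝ) (hd : 0 < d) (hd' : 0 < d')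
    (h1 : d < 1 / 2) (h1' : d' < 1 / 2) (h : v < w) : crd v d < crd w d' := by
  rw [key_lt_iff] at h
  rcases h with h | ⟨h, h2, h3⟩
  · have : (((ofLex v).1 : ℕ) : ℝ) + 1 ≤ (((ofLex w).1 : ℕ) : ℝ) := by exact_mod_cast h
    simp only [crd]
    split_ifs <;> linarith
  · simp only [crd, h, h2, h3]
    simp
    linarith

theorem gk_lt_of_crd_lt {E : Type} {m n : ℕ} (h : E → Fin m ×ₗ Bool) (l : Fin n → E)
    (d : Fin n → ℝ) (hd0 : ∀ k, 0 ≤ d k) (hd1 : ∀ k, d k < 1 / 2) (hm : Monotone d)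
    (k k' : Fin n) (hlt : crd (h (l k)) (d k) < crd (h (l k')) (d k')) :
    gk h ori l k < gk h ori l k' := by
  by_contra hcon
  rw [not_lt] at hcon
  simp only [gk, Prod.Lex.toLex_le_toLex] at hcon
  rcases hcon with hc | ⟨he, hc⟩
  · exact absurd (crd_le_of_key_lt _ _ _ _ (hd0 _) (hd0 _) (hd1 _) (hd1 _) hc) (not_le.2 hlt)
  · rw [he] at hc hlt
    cases hb : ori (h (l k))
    · have hb' : (ofLex (h (l k))).2 = false := hb
      simp [hb, crd, hb'] at hc hlt
      have := hm hc; linarith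
    · have hb' : (ofLex (h (l k))).2 = true := hb
      simp [hb, crd, hb'] at hc hlt
      have := hm hc; linarith

theorem crd_lt_of_gk_lt {E : Type} {m n : ℕ} (h : E → Fin m ×ₗ Bool) (l : Fin n → E)
    (d : Fin n → ℝ) (hd0 : ∀ k, 0 < d k) (hd1 : ∀ k, d k < 1 / 2) (hm : StrictMono d)
    (k k' : Fin n) (hlt : gk h ori l k < gk h ori l k') :
    crd (h (l k)) (d k) < crd (h (l k')) (d k') := by
  simp only [gk, Prod.Lex.toLex_lt_toLex] at hlt
  rcases hlt with hc | ⟨he, hc⟩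
  · exact crd_lt_of_key_lt _ _ _ _ (hd0 _) (hd0 _) (hd1 _) (hd1 _) hc
  · rw [he] at hc ⊢
    cases hb : ori (h (l k'))
    · have hb' : (ofLex (h (l k'))).2 = false := hb
      simp [hb, crd, hb'] at hc ⊢
      have := hm hc; linarith
    · have hb' : (ofLex (h (l k'))).2 = true := hb
      simp [hb, crd, hb'] at hc ⊢
      have := hm hc; linarith

theorem stdFigure_mem {t u : ℕ} (M : Fin t → Fin u → ℤ)
    (hM : ∀ i j, M i j = 0 ∨ M i j = 1 ∨ M i j = -1) (e : GE M) (d : ℝ) (h0 : 0 ≤ d)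
    (h1 : d < 1 / 2) : (crd (kc e) d, crd (kr e) d) ∈ stdFigure M := by
  obtain ⟨⟨⟨i, j⟩, b⟩, he⟩ := e
  simp only at he
  refine ⟨i, j, 1 / 2 + (if b then d else -d), ?_, ?_, ?_⟩
  · split_ifs <;> linarith
  · split_ifs <;> linarith
  · rcases hM i j with h | h | h
    · exact absurd h he
    · left
      refine ⟨h, ?_⟩
      simp only [crd, kc, kr, h, ofLex_toLex, if_true]
      cases b <;> ext <;> simp <;> ring
    · right
      refine ⟨h, ?_⟩
      have : ¬ ((-1 : ℤ) = 1) := by decide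
      simp only [crd, kc, kr, h, ofLex_toLex, if_neg this]
      cases b <;> ext <;> simp <;> ring

theorem exists_of_stdFigure {t u : ℕ} (M : Fin t → Fin u → ℤ) (z : ℝ × ℝ) (hz : z ∈ stdFigure M) :
    ∃ (e : GE M) (d : ℝ), 0 ≤ d ∧ d < 1 / 2 ∧ z = (crd (kc e) d, crd (kr e) d) := by
  obtain ⟨i, j, s, hs0, hs1, h⟩ := hz
  have hne : M i j ≠ 0 := by
    rcases h with h | h <;> rw [h.1] <;> decide
  have hm1 : ¬ ((-1 : ℤ) = 1) := by decide
  by_cases hs : 1 / 2 ≤ s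
  · refine ⟨⟨((i, j), true), hne⟩, s - 1 / 2, by linarith, by linarith, ?_⟩
    rcases h with ⟨h, rfl⟩ | ⟨h, rfl⟩
    · simp only [crd, kc, kr, h, ofLex_toLex, if_true]
      ext <;> simp <;> ring
    · simp only [crd, kc, kr, h, ofLex_toLex, if_neg hm1]
      ext <;> simp <;> ring
  · refine ⟨⟨((i, j), false), hne⟩, 1 / 2 - s, by linarith, by linarith, ?_⟩
    rcases h with ⟨h, rfl⟩ | ⟨h, rfl⟩
    · simp only [crd, kc, kr, h, ofLex_toLex, if_true]
      ext <;> simp <;> ring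
    · simp only [crd, kc, kr, h, ofLex_toLex, if_neg hm1]
      ext <;> simp <;> ring

theorem inGeomClass_iff {t u n : ℕ} (M : Fin t → Fin u → ℤ)
    (hM : ∀ i j, M i j = 0 ∨ M i j = 1 ∨ M i j = -1) (σ : Equiv.Perm (Fin n)) :
    InGeomClass M σ ↔ ∃ (l : Fin n → GE M) (τ ρ : Equiv.Perm (Fin n)),
      GeomW kc ori kr ori l τ ρ σ := by
  constructor
  · rintro ⟨f, hf, hx, hy⟩
    choose e d hd0 hd1 hed using fun p => exists_of_stdFigure M (f p) (hf p)
    let π := Tuple.sort d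
    have hπ : Monotone (fun k => d (π k)) := Tuple.monotone_sort d
    refine ⟨fun k => e (π k), π.symm, σ.symm.trans π.symm, ?_, ?_, fun p => by simp⟩
    · intro p q hpq
      refine gk_lt_of_crd_lt kc _ (fun k => d (π k)) (fun k => hd0 _) (fun k => hd1 _) hπ _ _ ?_
      have := hx p q hpq
      rw [hed p, hed q] at this
      simpa using this
    · intro v w hvw
      refine gk_lt_of_crd_lt kr _ (fun k => d (π k)) (fun k => hd0 _) (fun k => hd1 _) hπ _ _ ?_
      have := (hy (σ.symm v) (σ.symm w)).2 (by simpa using hvw)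
      rw [hed, hed] at this
      simpa using this
  · rintro ⟨l, τ, ρ, h1, h2, h3⟩
    let d : Fin n → ℝ := fun k => ((k : ℕ) + 1 : ℝ) / (2 * ((n : ℝ) + 1))
    have hd0 : ∀ k, 0 < d k := fun k => by simp only [d]; positivity
    have hd1 : ∀ k, d k < 1 / 2 := fun k => by
      simp only [d]
      rw [div_lt_div_iff₀ (by positivity) (by norm_num)]
      have : ((k : ℕ) : ℝ) < n := by exact_mod_cast k.2
      linarith
    have hd : StrictMono d := fun k k' h => by
      simp only [d]
      rw [div_lt_div_iff_of_pos_right (by positivity)]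
      have : ((k : ℕ) : ℝ) < (k' : ℕ) := by exact_mod_cast h
      linarith
    have hymono : ∀ v w, v < w → crd (kr (l (ρ v))) (d (ρ v)) < crd (kr (l (ρ w))) (d (ρ w)) :=
      fun v w hvw => crd_lt_of_gk_lt kr l d hd0 hd1 hd _ _ (h2 hvw)
    refine ⟨fun p => (crd (kc (l (τ p))) (d (τ p)), crd (kr (l (τ p))) (d (τ p))),
      fun p => stdFigure_mem M hM _ _ (hd0 _).le (hd1 _), fun p q hpq => ?_, fun p q => ?_⟩
    · exact crd_lt_of_gk_lt kc l d hd0 hd1 hd _ _ (h1 hpq)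
    · simp only [← h3]
      constructor
      · intro h
        by_contra hcon
        rcases eq_or_lt_of_le (not_lt.1 hcon) with h' | h'
        · rw [h'] at h; exact lt_irrefl _ h
        · exact lt_irrefl _ (h.trans (hymono _ _ h'))
      · exact hymono _ _

theorem kckr_inj {t u : ℕ} {M : Fin t → Fin u → ℤ} (e e' : GE M) (h1 : kc e = kc e')
    (h2 : kr e = kr e') : e = e' := by
  obtain ⟨⟨⟨i, j⟩, b⟩, he⟩ := e
  obtain ⟨⟨⟨i', j'⟩, b'⟩, he'⟩ := e'
  simp only [kc, kr, EmbeddingLike.apply_eq_iff_eq, Prod.mk.injEq] at h1 h2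
  simp [h1.1, h1.2, h2.1]

/-- endpoints of a half cell in the double cover of the row-column graph -/
def ga {t u : ℕ} {M : Fin t → Fin u → ℤ} (e : GE M) : (Fin t × Bool) ⊕ (Fin u × Bool) :=
  Sum.inl (ofLex (kc e))

def gb {t u : ℕ} {M : Fin t → Fin u → ℤ} (e : GE M) : (Fin t × Bool) ⊕ (Fin u × Bool) :=
  Sum.inr (ofLex (kr e))

theorem trPhi_eq_iff {t u : ℕ} (M : Fin t → Fin u → ℤ) (l l' : List (GE M)) :
    trPhi ga gb l = trPhi ga gb l' ↔
      (∀ v, l.filter (fun e => decide (kc e = v)) = l'.filter (fun e => decide (kc e = v))) ∧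
      (∀ v, l.filter (fun e => decide (kr e = v)) = l'.filter (fun e => decide (kr e = v))) := by
  have h1 : ∀ (l : List (GE M)) (v : Fin t ×ₗ Bool), trPhi ga gb l (Sum.inl (ofLex v)) =
      l.filter (fun e => decide (kc e = v)) := by
    intro l v
    unfold trPhi
    refine List.filter_congr fun e _ => ?_
    simp [ga, gb]
  have h2 : ∀ (l : List (GE M)) (v : Fin u ×ₗ Bool), trPhi ga gb l (Sum.inr (ofLex v)) =
      l.filter (fun e => decide (kr e = v)) := by
    intro l v
    unfold trPhi
    refine List.filter_congr fun e _ => ?_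
    simp [ga, gb]
  constructor
  · intro h
    exact ⟨fun v => by rw [← h1, ← h1, h], fun v => by rw [← h2, ← h2, h]⟩
  · rintro ⟨a, b⟩
    funext v
    rcases v with v | v
    · have := a (toLex v)
      rwa [← h1, ← h1, ofLex_toLex] at this
    · have := b (toLex v)
      rwa [← h2, ← h2, ofLex_toLex] at this

theorem geomCount_le {t u : ℕ} (M : Fin t → Fin u → ℤ)
    (hM : ∀ i j, M i j = 0 ∨ M i j = 1 ∨ M i j = -1) (n : ℕ) :
    geomCount M n ≤ (trT (ga (M := M)) gb n).ncard := by
  choose l τ ρ hG using fun σ : {σ : Equiv.Perm (Fin n) // InGeomClass M σ} =>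
    (inGeomClass_iff M hM σ.1).1 σ.2
  let F : {σ : Equiv.Perm (Fin n) // InGeomClass M σ} → trT (ga (M := M)) gb n :=
    fun σ => ⟨trPhi ga gb (List.ofFn (l σ)), _, by simp, rfl⟩
  have hF : Function.Injective F := by
    intro σ σ' h
    have h' := Subtype.ext_iff.1 h
    simp only [F] at h'
    rw [trPhi_eq_iff] at h'
    exact Subtype.ext ((hG σ).unique (hG σ') h'.1 h'.2)
  have := (trT_finite (ga (M := M)) gb n).to_subtype
  have h := Nat.card_le_card_of_injective F hF
  rwa [Nat.card_coe_set_eq] at h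

theorem le_geomCount {t u : ℕ} (M : Fin t → Fin u → ℤ)
    (hM : ∀ i j, M i j = 0 ∨ M i j = 1 ∨ M i j = -1) (n : ℕ) :
    (trT (ga (M := M)) gb n).ncard ≤ geomCount M n * ((n + 1) ^ (t * 2) * (n + 1) ^ (u * 2)) := by
  have hex : ∀ w : trT (ga (M := M)) gb n, ∃ l : Fin n → GE M, trPhi ga gb (List.ofFn l) = w.1 := by
    rintro ⟨_, l, hl, rfl⟩
    have hl' : l.length = n := hl
    subst hl'
    exact ⟨fun p => l.get p, by rw [List.ofFn_get]⟩
  choose l hl using hex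
  choose τ ρ σ hG using fun w => GeomW.exists kc ori kr ori (l w)
  let F : trT (ga (M := M)) gb n → {σ : Equiv.Perm (Fin n) // InGeomClass M σ} ×
      ({f : Fin n → Fin t ×ₗ Bool // Monotone f} × {f : Fin n → Fin u ×ₗ Bool // Monotone f}) :=
    fun w => (⟨σ w, (inGeomClass_iff M hM _).2 ⟨_, _, _, hG w⟩⟩,
      ⟨_, gk_key_mono _ _ _ _ (hG w).1⟩, ⟨_, gk_key_mono _ _ _ _ (hG w).2.1⟩)
  have hF : Function.Injective F := by
    intro w w' h
    simp only [F, Prod.mk.injEq, Subtype.mk.injEq] at h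
    obtain ⟨e1, e2, e3⟩ := h
    have hG' := hG w'
    rw [← e1] at hG'
    have := (hG w).filters hG' kckr_inj (fun p => congrFun e2 p) (fun p => congrFun e3 p)
    rw [← trPhi_eq_iff, hl, hl] at this
    exact Subtype.ext this
  have h := Nat.card_le_card_of_injective F hF
  rw [Nat.card_prod, Nat.card_prod, Nat.card_coe_set_eq] at h
  refine h.trans (Nat.mul_le_mul le_rfl (Nat.mul_le_mul ?_ ?_))
  · have := card_monotone_le (κ := Fin t ×ₗ Bool) n
    simpa using this
  · have := card_monotone_le (κ := Fin u ×ₗ Bool) n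
    simpa using this


/-! ### Part 7: non-backtracking rays -/

def IsRay {V : Type} (G : SimpleGraph V) (f : ℕ → V) : Prop :=
  (∀ n, G.Adj (f n) (f (n + 1))) ∧ ∀ n, f n ≠ f (n + 2)

theorem IsRay.shift {V : Type} {G : SimpleGraph V} {f : ℕ → V} (h : IsRay G f) :
    IsRay G (fun n => f (n + 1)) := ⟨fun n => h.1 (n + 1), fun n => h.2 (n + 1)⟩

theorem IsRay.path {V : Type} {G : SimpleGraph V} (hG : G.IsAcyclic) (k : ℕ) :
    ∀ f : ℕ → V, IsRay G f → ∃ p : G.Walk (f 0) (f k), p.IsPath ∧ p.length = k ∧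
      ∀ m ≤ k, p.getVert m = f m := by
  induction k with
  | zero =>
    intro f hf
    exact ⟨SimpleGraph.Walk.nil, by simp, rfl, fun m hm => by simp [Nat.le_zero.1 hm]⟩
  | succ k ih =>
    intro f hf
    obtain ⟨p, hp, hl, hv⟩ := ih _ hf.shift
    refine ⟨SimpleGraph.Walk.cons (hf.1 0) p, ?_, by simp [hl], ?_⟩
    · rw [SimpleGraph.Walk.cons_isPath_iff]
      refine ⟨hp, fun hmem => ?_⟩
      have h1 := hG.eq_snd_of_adj_start hp (hf.1 0).symm hmem
      rcases Nat.eq_zero_or_pos k with rfl | hk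
      · have h0 := SimpleGraph.Walk.getVert_of_length_le p (i := 1) (by omega)
        rw [SimpleGraph.Walk.snd, h0] at h1
        exact (hf.1 0).ne h1
      · rw [SimpleGraph.Walk.snd, hv 1 hk] at h1
        exact hf.2 0 h1
    · intro m hm
      rcases m with _ | m
      · simp
      · rw [SimpleGraph.Walk.getVert_cons_succ]
        exact hv m (by omega)

theorem IsRay.not_acyclic {V : Type} [Fintype V] {G : SimpleGraph V} {f : ℕ → V} (h : IsRay G f) :
    ¬ G.IsAcyclic := by
  intro hG
  obtain ⟨p, hp, hl, _⟩ := IsRay.path hG (Fintype.card V) f h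
  have := hp.length_lt
  omega

theorem exists_ray_of_cycle {V : Type} {G : SimpleGraph V} {v : V} (c : G.Walk v v)
    (hc : c.IsCycle) : ∃ f, IsRay G f ∧ f 0 = v := by
  have h3 := hc.three_le_length
  have hadj : ∀ n, G.Adj (c.getVert (n % c.length)) (c.getVert ((n + 1) % c.length)) := by
    intro n
    have hlt : n % c.length < c.length := Nat.mod_lt _ (by omega)
    have := c.adj_getVert_succ hlt
    rcases Nat.lt_or_ge (n % c.length + 1) c.length with h | h
    · rwa [Nat.add_mod, Nat.mod_eq_of_lt (show 1 < c.length by omega), Nat.mod_eq_of_lt h]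
    · have he : n % c.length + 1 = c.length := by omega
      rw [Nat.add_mod, Nat.mod_eq_of_lt (show 1 < c.length by omega), he, Nat.mod_self,
        c.getVert_zero]
      rwa [he, c.getVert_length] at this
  refine ⟨fun n => c.getVert (n % c.length), ⟨hadj, fun n hn => ?_⟩, by simp⟩
  have hlt : n % c.length < c.length := Nat.mod_lt _ (by omega)
  have hlt' : (n + 2) % c.length < c.length := Nat.mod_lt _ (by omega)
  have := hc.getVert_injOn' (Set.mem_ofPred.2 (by omega)) (Set.mem_ofPred.2 (by omega)) hn
  rw [Nat.add_mod, Nat.mod_eq_of_lt (show 2 < c.length by omega)] at this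
  rcases Nat.lt_or_ge (n % c.length + 2) c.length with h | h
  · rw [Nat.mod_eq_of_lt h] at this; omega
  · rw [Nat.mod_eq_sub_mod h,
      Nat.mod_eq_of_lt (show n % c.length + 2 - c.length < c.length by omega)] at this
    omega

theorem exists_ray {V : Type} {G : SimpleGraph V} (hG : G.Connected) (hc : ¬ G.IsAcyclic) (v : V) :
    ∃ f, IsRay G f ∧ f 0 = v := by
  simp only [SimpleGraph.IsAcyclic, not_forall, not_not] at hc
  obtain ⟨r, c, hc⟩ := hc
  obtain ⟨p⟩ := hG.preconnected v r
  induction p with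
  | nil => exact exists_ray_of_cycle c hc
  | @cons a b r h p ih =>
    obtain ⟨f, hf, h0⟩ := ih c hc
    by_cases h1 : f 1 = a
    · exact ⟨_, hf.shift, h1⟩
    · refine ⟨fun n => if n = 0 then a else f (n - 1), ⟨fun n => ?_, fun n => ?_⟩, by simp⟩
      · rcases n with _ | n
        · simpa [h0] using h
        · simpa using hf.1 n
      · rcases n with _ | n
        · simpa using fun h => h1 h.symm
        · simpa using hf.2 n

theorem exists_signs {V : Type} {G : SimpleGraph V} (hG : G.Connected) (hc : G.IsAcyclic)
    (s : V → V → ℤ) (hs : ∀ v w, s v w = s w v)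
    (hs1 : ∀ v w, G.Adj v w → s v w * s v w = 1) :
    ∃ ε : V → ℤ, (∀ v, ε v * ε v = 1) ∧ ∀ v w, G.Adj v w → s v w = ε v * ε w := by
  obtain ⟨r⟩ := hG.nonempty
  have hp : ∀ v, ∃ p : G.Walk r v, p.IsPath := fun v => (hG.preconnected r v).exists_isPath
  choose p hp using hp
  let sg : ∀ v, G.Walk r v → ℤ := fun v q => (q.darts.map fun d => s d.fst d.snd).prod
  have hsg : ∀ v w (q : G.Walk r v) (h : G.Adj v w), sg w (q.concat h) = sg v q * s v w := by
    intro v w q h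
    simp [sg, SimpleGraph.Walk.darts_concat]
  have hsq : ∀ v (q : G.Walk r v), sg v q * sg v q = 1 := by
    intro v q
    simp only [sg]
    induction q.darts with
    | nil => simp
    | cons d l ih =>
      simp only [List.map_cons, List.prod_cons]
      have := hs1 _ _ d.adj
      calc _ = (s d.fst d.snd * s d.fst d.snd) * ((l.map fun d => s d.fst d.snd).prod *
          (l.map fun d => s d.fst d.snd).prod) := by ring
        _ = 1 := by rw [this, ih]; rfl
  refine ⟨fun v => sg v (p v), fun v => hsq v _, fun v w h => ?_⟩
  by_cases hw : w ∈ (p v).support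
  · simp only
    rw [hc.path_concat (hp w) (hp v) h.symm hw, hsg, hs w v,
      mul_right_comm, hsq, one_mul]
  · have hv := hc.mem_support_of_ne_mem_support_of_adj_of_isPath (hp w) (hp v) h.symm hw
    simp only
    rw [hc.path_concat (hp v) (hp w) h hv, hsg, ← mul_assoc, hsq, one_mul]


/-! ### Part 8: acyclic matrices -/

theorem rowCol_adj {t u : ℕ} (M : Fin t → Fin u → ℤ) (i : Fin t) (j : Fin u) :
    (rowColGraph M).Adj (Sum.inl i) (Sum.inr j) ↔ M i j ≠ 0 := by
  simp [rowColGraph, SimpleGraph.fromRel_adj]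

theorem rowCol_adj' {t u : ℕ} (M : Fin t → Fin u → ℤ) (i : Fin t) (j : Fin u) :
    (rowColGraph M).Adj (Sum.inr j) (Sum.inl i) ↔ M i j ≠ 0 := by
  rw [SimpleGraph.adj_comm, rowCol_adj]

theorem rowCol_adj_ll {t u : ℕ} (M : Fin t → Fin u → ℤ) (i i' : Fin t) :
    ¬ (rowColGraph M).Adj (Sum.inl i) (Sum.inl i') := by
  simp [rowColGraph, SimpleGraph.fromRel_adj]

theorem rowCol_adj_rr {t u : ℕ} (M : Fin t → Fin u → ℤ) (j j' : Fin u) :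
    ¬ (rowColGraph M).Adj (Sum.inr j) (Sum.inr j') := by
  simp [rowColGraph, SimpleGraph.fromRel_adj]

/-- abstract scheduling: in an acyclic graph the two families of linear orders are compatible -/
theorem exists_schedule {V : Type} [Fintype V] (G : SimpleGraph V) (hG : G.IsAcyclic) (n : ℕ)
    (line : Bool → Fin n → V) (key : Bool → Fin n → ℤ)
    (hadj : ∀ b p, G.Adj (line b p) (line (!b) p))
    (hcons : ∀ b p q, line b p = line b q → line (!b) p = line (!b) q → key b p < key b q →
      key (!b) p < key (!b) q) :
    ∃ d : Fin n → ℕ, (∀ p, d p < n) ∧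
      ∀ b p q, line b p = line b q → key b p < key b q → d p < d q := by
  let R : Fin n → Fin n → Prop := fun p q => ∃ b, line b p = line b q ∧ key b p < key b q
  have hwf : WellFounded R := by
    rw [WellFounded.wellFounded_iff_has_min]
    intro S hS
    by_contra hcon
    push Not at hcon
    -- minimal elements on lines
    have hmin : ∀ b, ∀ p ∈ S, ∃ q ∈ S, line b q = line b p ∧ key b q ≤ key b p ∧
        ∀ z ∈ S, line b z = line b q → key b q ≤ key b z := by
      intro b p hp
      obtain ⟨q, hq, hq'⟩ := Set.exists_min_image {q | q ∈ S ∧ line b q = line b p} (key b)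
        (Set.toFinite _) ⟨p, hp, rfl⟩
      exact ⟨q, hq.1, hq.2, hq' p ⟨hp, rfl⟩, fun z hz hzq => hq' z ⟨hz, hzq.trans hq.2⟩⟩
    let St : Type := {s : Bool × Fin n // s.2 ∈ S ∧
      ∀ z ∈ S, line s.1 z = line s.1 s.2 → key s.1 s.2 ≤ key s.1 z}
    have hstep : ∀ s : St, ∃ s' : St, s'.1.1 = !s.1.1 ∧
        line (!s.1.1) s'.1.2 = line (!s.1.1) s.1.2 ∧ line s.1.1 s'.1.2 ≠ line s.1.1 s.1.2 := by
      rintro ⟨⟨b, p⟩, hp, hpm⟩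
      simp only at hp hpm
      obtain ⟨z, hz, c, hc1, hc2⟩ := hcon p hp
      have hcb : c = !b := by
        by_contra hne
        have : c = b := by cases b <;> cases c <;> simp_all
        subst this
        exact absurd (hpm z hz hc1) (not_le.2 hc2)
      subst hcb
      obtain ⟨q, hq, hq1, hq2, hq3⟩ := hmin (!b) z hz
      refine ⟨⟨(!b, q), hq, hq3⟩, rfl, hq1.trans hc1, fun h => ?_⟩
      simp only at h
      have := hcons (!b) q p (hq1.trans hc1) (by simpa using h) (lt_of_le_of_lt hq2 hc2)
      simp only [Bool.not_not] at this
      exact absurd (hpm q hq h) (not_le.2 this)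
    choose nx hnx1 hnx2 hnx3 using hstep
    obtain ⟨p0, hp0⟩ := hS
    obtain ⟨q0, hq0, _, _, hq0'⟩ := hmin true p0 hp0
    let s0 : St := ⟨(true, q0), hq0, hq0'⟩
    let sq : ℕ → St := fun k => nx^[k] s0
    have hsq : ∀ k, sq (k + 1) = nx (sq k) := fun k => Function.iterate_succ_apply' _ _ _
    have key1 : ∀ s : St, line (nx s).1.1 (nx s).1.2 = line (!s.1.1) s.1.2 := fun s => by
      rw [hnx1, hnx2]
    have hray : IsRay G (fun k => line (sq k).1.1 (sq k).1.2) := by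
      refine ⟨fun k => ?_, fun k => ?_⟩
      · simp only
        rw [hsq, key1]
        exact hadj _ _
      · simp only
        rw [hsq (k + 1), key1, hsq k, hnx1, Bool.not_not]
        exact (hnx3 _).symm
    exact hray.not_acyclic hG
  have hwf' : WellFounded (Relation.TransGen R) := hwf.transGen
  have hirr : ∀ p, ¬ Relation.TransGen R p p := fun p h => hwf'.irrefl.irrefl p h
  refine ⟨fun p => (Finset.univ.filter fun q => Relation.TransGen R q p).card, fun p => ?_, ?_⟩
  · have : (Finset.univ.filter fun q => Relation.TransGen R q p) ⊂ Finset.univ := by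
      rw [Finset.ssubset_univ_iff]
      intro h
      have := Finset.mem_univ p
      rw [← h] at this
      exact hirr p (by simpa using this)
    simpa using Finset.card_lt_card this
  · intro b p q h1 h2
    have hR : R p q := ⟨b, h1, h2⟩
    apply Finset.card_lt_card
    rw [Finset.ssubset_iff_of_subset]
    · exact ⟨p, by simpa using Relation.TransGen.single hR, by simpa using hirr p⟩
    · intro z hz
      simp only [Finset.mem_filter, Finset.mem_univ, true_and] at hz ⊢
      exact hz.tail hR

/-- one coordinate of the placement -/
theorem place_lt (m n : ℕ) (idx : Fin n → Fin m) (ε : Fin n → ℤ) (hε : ∀ p, ε p * ε p = 1)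
    (hεi : ∀ p q, idx p = idx q → ε p = ε q)
    (val : Fin n → ℕ) (D : Fin n → ℝ) (hD0 : ∀ p, 0 < D p) (hD1 : ∀ p, D p < 1)
    (hidx : ∀ p q, val p < val q → idx p ≤ idx q)
    (hD : ∀ p q, idx p = idx q → ε p * (val p : ℤ) < ε q * (val q : ℤ) → D p < D q)
    (p q : Fin n) (h : val p < val q) :
    (((idx p : ℕ) : ℝ) + if ε p = 1 then D p else 1 - D p) <
      ((idx q : ℕ) : ℝ) + if ε q = 1 then D q else 1 - D q := by
  have b1 := hD0 p
  have b2 := hD1 p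
  have b3 := hD0 q
  have b4 := hD1 q
  rcases (hidx p q h).lt_or_eq with hlt | he
  · have h1 : ((idx p : ℕ) : ℝ) + 1 ≤ (idx q : ℕ) := by exact_mod_cast hlt
    split_ifs <;> linarith
  · have e := hεi p q he
    rw [he, ← e]
    have hv : (val p : ℤ) < val q := by exact_mod_cast h
    rcases mul_self_eq_one_iff.1 (hε p) with h1 | h1
    · have := hD p q he (by rw [← e, h1]; linarith)
      rw [if_pos h1, if_pos h1]; linarith
    · have := hD q p he.symm (by rw [← e, h1]; linarith)
      have h1' : ¬ ε p = 1 := by rw [h1]; decide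
      rw [if_neg h1', if_neg h1']; linarith

theorem inGeomClass_of_acyclic {t u n : ℕ} (M : Fin t → Fin u → ℤ)
    (hM : ∀ i j, M i j = 0 ∨ M i j = 1 ∨ M i j = -1) (hconn : (rowColGraph M).Connected)
    (hac : (rowColGraph M).IsAcyclic) (σ : Equiv.Perm (Fin n)) (hσ : InGridClass M σ) :
    InGeomClass M σ := by
  obtain ⟨ω, θ, h1, h2, h3, h4, h5⟩ := (inGridClass_iff M hM σ).1 hσ
  obtain ⟨ε, hε1, hε2⟩ := exists_signs hconn hac
    (fun v w => match v, w with
      | Sum.inl i, Sum.inr j => M i j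
      | Sum.inr j, Sum.inl i => M i j
      | _, _ => 0)
    (by rintro (v | v) (w | w) <;> rfl)
    (by
      rintro (v | v) (w | w) h
      · exact absurd h (rowCol_adj_ll M v w)
      · rw [rowCol_adj] at h
        rcases hM v w with h' | h' | h'
        · exact absurd h' h
        · simp [h']
        · simp [h']
      · rw [rowCol_adj'] at h
        rcases hM w v with h' | h' | h'
        · exact absurd h' h
        · simp [h']
        · simp [h']
      · exact absurd h (rowCol_adj_rr M v w))
  have hεM : ∀ p, M (ω p).1 (ω p).2 = ε (Sum.inl (ω p).1) * ε (Sum.inr (ω p).2) := fun p =>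
    hε2 (Sum.inl (ω p).1) (Sum.inr (ω p).2) ((rowCol_adj M _ _).2 (h4 p))
  -- same cell
  have hcell : ∀ p q, ω p = ω q →
      (ε (Sum.inl (ω p).1) * (p : ℕ) < ε (Sum.inl (ω p).1) * (q : ℕ) ↔
        ε (Sum.inr (ω p).2) * (σ p : ℕ) < ε (Sum.inr (ω p).2) * (σ q : ℕ)) := by
    intro p q hpq
    have hm := hεM p
    have A : ∀ p q, ω p = ω q → p < q → (M (ω p).1 (ω p).2 = 1 → (σ p : ℕ) < σ q) ∧
        (¬ M (ω p).1 (ω p).2 = 1 → (σ q : ℕ) < σ p) := fun p q h h' => h5 p q h' h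
    rcases lt_trichotomy p q with h | h | h
    · have h' : (p : ℕ) < q := h
      have B := A p q hpq h
      rcases mul_self_eq_one_iff.1 (hε1 (Sum.inl (ω p).1)) with a | a <;>
      rcases mul_self_eq_one_iff.1 (hε1 (Sum.inr (ω p).2)) with b | b <;>
      rw [a, b] at hm <;> rw [a, b] <;> simp [hm] at B <;> omega
    · subst h; simp
    · have h' : (q : ℕ) < p := h
      have B := A q p hpq.symm h
      rw [← hpq] at B
      rcases mul_self_eq_one_iff.1 (hε1 (Sum.inl (ω p).1)) with a | a <;>
      rcases mul_self_eq_one_iff.1 (hε1 (Sum.inr (ω p).2)) with b | b <;>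
      rw [a, b] at hm <;> rw [a, b] <;> simp [hm] at B <;> omega
  obtain ⟨d, hdn, hd⟩ := exists_schedule (rowColGraph M) hac n
    (fun b p => match b with
      | true => Sum.inl (ω p).1
      | false => Sum.inr (ω p).2)
    (fun b p => match b with
      | true => ε (Sum.inl (ω p).1) * (p : ℕ)
      | false => ε (Sum.inr (ω p).2) * (σ p : ℕ))
    (by
      rintro (_ | _) p
      · exact (rowCol_adj' M _ _).2 (h4 p)
      · exact (rowCol_adj M _ _).2 (h4 p))
    (by
      rintro (_ | _) p q a b c
      · have a' : (ω p).2 = (ω q).2 := Sum.inr_injective a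
        have b' : (ω p).1 = (ω q).1 := Sum.inl_injective b
        have hpq : ω p = ω q := Prod.ext b' a'
        have := hcell p q hpq
        simp only [Bool.not_false] at c ⊢
        rw [← hpq] at c ⊢
        exact this.2 c
      · have a' : (ω p).1 = (ω q).1 := Sum.inl_injective a
        have b' : (ω p).2 = (ω q).2 := Sum.inr_injective b
        have hpq : ω p = ω q := Prod.ext a' b'
        have := hcell p q hpq
        simp only [Bool.not_true] at c ⊢
        rw [← hpq] at c ⊢
        exact this.1 c)
  let D : Fin n → ℝ := fun p => ((d p : ℝ) + 1) / ((n : ℝ) + 1)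
  have hD0 : ∀ p, 0 < D p := fun p => by simp only [D]; positivity
  have hD1 : ∀ p, D p < 1 := fun p => by
    simp only [D]
    rw [div_lt_one (by positivity)]
    have : (d p : ℝ) < n := by exact_mod_cast hdn p
    linarith
  have hDm : ∀ p q, d p < d q → D p < D q := fun p q h => by
    simp only [D]
    rw [div_lt_div_iff_of_pos_right (by positivity)]
    have : (d p : ℝ) < d q := by exact_mod_cast h
    linarith
  have hx := place_lt t n (fun p => (ω p).1) (fun p => ε (Sum.inl (ω p).1)) (fun p => hε1 _)
    (fun p q h => by rw [h]) (fun p => (p : ℕ)) D hD0 hD1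
    (fun p q h => h1 (le_of_lt h))
    (fun p q h h' => hDm _ _ (hd true p q (congrArg Sum.inl h) h'))
  have hy := place_lt u n (fun p => (ω p).2) (fun p => ε (Sum.inr (ω p).2)) (fun p => hε1 _)
    (fun p q h => by rw [h]) (fun p => (σ p : ℕ)) D hD0 hD1
    (fun p q h => by
      have : σ p ≤ σ q := le_of_lt h
      have := h2 this
      simpa only [h3] using this)
    (fun p q h h' => hDm _ _ (hd false p q (congrArg Sum.inr h) h'))
  refine ⟨fun p => (((ω p).1 : ℕ) + (if ε (Sum.inl (ω p).1) = 1 then D p else 1 - D p),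
    ((ω p).2 : ℕ) + (if ε (Sum.inr (ω p).2) = 1 then D p else 1 - D p)), fun p => ?_, fun p q h => ?_,
    fun p q => ⟨fun h => ?_, fun h => ?_⟩⟩
  · have b1 := hD0 p
    have b2 := hD1 p
    refine ⟨(ω p).1, (ω p).2, (if ε (Sum.inl (ω p).1) = 1 then D p else 1 - D p), ?_, ?_, ?_⟩
    · split_ifs <;> linarith
    · split_ifs <;> linarith
    · have hm := hεM p
      have hne : ¬ ((-1 : ℤ) = 1) := by decide
      rcases mul_self_eq_one_iff.1 (hε1 (Sum.inl (ω p).1)) with a | a <;>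
      rcases mul_self_eq_one_iff.1 (hε1 (Sum.inr (ω p).2)) with b | b <;>
      rw [a, b] at hm
      · left; exact ⟨by rw [hm]; rfl, by beta_reduce; rw [a, b]⟩
      · right; exact ⟨by rw [hm]; rfl, by
          beta_reduce; rw [a, b, if_pos rfl, if_neg hne]; ext <;> simp; ring⟩
      · right; exact ⟨by rw [hm]; rfl, by
          beta_reduce; rw [a, b, if_pos rfl, if_neg hne]; ext <;> simp; ring⟩
      · left; exact ⟨by rw [hm]; rfl, by beta_reduce; rw [a, b]⟩
  · exact hx p q h
  · by_contra hcon
    rcases eq_or_lt_of_le (not_lt.1 hcon) with h' | h'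
    · have := σ.injective h'
      subst this
      exact lt_irrefl _ h
    · exact lt_irrefl _ (h.trans (hy q p h'))
  · exact hy p q h

theorem gridCount_le_geomCount {t u : ℕ} (M : Fin t → Fin u → ℤ)
    (hM : ∀ i j, M i j = 0 ∨ M i j = 1 ∨ M i j = -1) (hconn : (rowColGraph M).Connected)
    (hac : (rowColGraph M).IsAcyclic) (n : ℕ) : gridCount M n ≤ geomCount M n :=
  Nat.card_le_card_of_injective
    (fun σ : {σ : Equiv.Perm (Fin n) // InGridClass M σ} =>
      (⟨σ.1, inGeomClass_of_acyclic M hM hconn hac σ.1 σ.2⟩ :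
        {σ : Equiv.Perm (Fin n) // InGeomClass M σ}))
    (fun _ _ h => Subtype.ext (congrArg (fun z => z.1) h))


/-! ### Part 9: assembly -/

def gproj {t u : ℕ} (v : (Fin t × Bool) ⊕ (Fin u × Bool)) : Fin t ⊕ Fin u :=
  Sum.map Prod.fst Prod.fst v

theorem eigen_of_perron {t u : ℕ} (M : Fin t → Fin u → ℤ) (x : Fin t ⊕ Fin u → ℝ) (lam : ℝ)
    (hx : ∀ v, ∑ w with (rowColGraph M).Adj v w, x w = lam * x v) :
    (∀ i, ∑ j with M i j ≠ 0, x (Sum.inr j) = lam * x (Sum.inl i)) ∧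
      (∀ j, ∑ i with M i j ≠ 0, x (Sum.inl i) = lam * x (Sum.inr j)) := by
  constructor
  · intro i
    rw [← hx, Finset.sum_filter, Finset.sum_filter, Fintype.sum_sum_type]
    simp [rowCol_adj, rowCol_adj_ll]
  · intro j
    rw [← hx, Finset.sum_filter, Finset.sum_filter, Fintype.sum_sum_type]
    simp [rowCol_adj', rowCol_adj_rr]

theorem trOth_inl {t u : ℕ} {M : Fin t → Fin u → ℤ} (e : GE M) (v : Fin t × Bool)
    (h : ga e = Sum.inl v) : trOth ga gb e (Sum.inl v) = gb e := by
  unfold trOth; rw [if_pos h]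

theorem trOth_inr {t u : ℕ} {M : Fin t → Fin u → ℤ} (e : GE M) (v : Fin u × Bool) :
    trOth ga gb e (Sum.inr v) = ga e := by
  unfold trOth; rw [if_neg (by simp [ga])]

theorem half_exists {t u : ℕ} {M : Fin t → Fin u → ℤ} (i : Fin t) (j : Fin u) (h : M i j ≠ 0)
    (s : Bool) : ∃ e : GE M, e.1.1 = (i, j) ∧ gb e = Sum.inr (j, s) := by
  by_cases h1 : M i j = 1
  · exact ⟨⟨((i, j), s), h⟩, rfl, by simp [gb, kr, h1]⟩
  · exact ⟨⟨((i, j), !s), h⟩, rfl, by simp [gb, kr, h1]⟩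

theorem half_lift {t u : ℕ} {M : Fin t → Fin u → ℤ} (v : (Fin t × Bool) ⊕ (Fin u × Bool))
    (w : Fin t ⊕ Fin u) (h : (rowColGraph M).Adj (gproj v) w) :
    ∃ e : GE M, (ga e = v ∨ gb e = v) ∧ gproj (trOth ga gb e v) = w ∧
      trOth ga gb e (trOth ga gb e v) = v := by
  rcases v with ⟨i, s⟩ | ⟨j, s⟩
  · rcases w with w | j
    · exact absurd h (rowCol_adj_ll M i w)
    · have h' := (rowCol_adj M i j).1 h
      have hg : ga (⟨((i, j), s), h'⟩ : GE M) = Sum.inl (i, s) := rfl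
      refine ⟨⟨((i, j), s), h'⟩, Or.inl hg, ?_, ?_⟩
      · rw [trOth_inl _ _ hg]; rfl
      · rw [trOth_inl _ _ hg]; exact trOth_inr _ _
  · rcases w with i | w
    · have h' := (rowCol_adj' M i j).1 h
      obtain ⟨e, he, hg⟩ := half_exists i j h' s
      refine ⟨e, Or.inr hg, ?_, ?_⟩
      · rw [trOth_inr]
        simp [ga, kc, gproj, he]
      · rw [trOth_inr]
        exact (trOth_inl _ _ rfl).trans hg
    · exact absurd h (rowCol_adj_rr M j w)

theorem half_sum {t u : ℕ} {M : Fin t → Fin u → ℤ} (x : Fin t ⊕ Fin u → ℝ) (lam : ℝ)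
    (h1 : ∀ i, ∑ j with M i j ≠ 0, x (Sum.inr j) = lam * x (Sum.inl i))
    (h2 : ∀ j, ∑ i with M i j ≠ 0, x (Sum.inl i) = lam * x (Sum.inr j))
    (v : (Fin t × Bool) ⊕ (Fin u × Bool)) :
    ∑ e : GE M with (ga e = v ∨ gb e = v), x (gproj (trOth ga gb e v)) = lam * x (gproj v) := by
  rcases v with ⟨i, s⟩ | ⟨j, s⟩
  · have hmem : ∀ e : GE M, (ga e = Sum.inl (i, s) ∨ gb e = Sum.inl (i, s)) ↔
        (e.1.1.1 = i ∧ e.1.2 = s) := by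
      intro e
      simp [ga, gb, kc]
    change _ = lam * x (Sum.inl i)
    rw [← h1 i]
    refine Finset.sum_nbij (fun e => e.1.1.2) ?_ ?_ ?_ ?_
    · intro e he
      simp only [Finset.mem_filter, Finset.mem_univ, true_and, hmem] at he ⊢
      have := e.2
      rwa [he.1] at this
    · rintro ⟨⟨⟨a, b⟩, c⟩, he0⟩ he ⟨⟨⟨a', b'⟩, c'⟩, he0'⟩ he' hb
      simp only [Finset.coe_filter, Set.mem_ofPred_eq, Finset.mem_univ, true_and, hmem] at he he' hb
      simp [he.1, he.2, he'.1, he'.2, hb]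
    · intro j hj
      simp only [Finset.coe_filter, Set.mem_ofPred_eq, Finset.mem_univ, true_and] at hj
      refine ⟨⟨((i, j), s), hj⟩, ?_, rfl⟩
      simp only [Finset.coe_filter, Set.mem_ofPred_eq, Finset.mem_univ, true_and, hmem, and_self]
    · intro e he
      simp only [Finset.mem_filter, Finset.mem_univ, true_and] at he
      have hg : ga e = Sum.inl (i, s) := by
        rcases he with h | h
        · exact h
        · simp [gb] at h
      rw [trOth_inl _ _ hg]; rfl
  · have hmem : ∀ e : GE M, (ga e = Sum.inr (j, s) ∨ gb e = Sum.inr (j, s)) ↔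
        gb e = Sum.inr (j, s) := by
      intro e
      simp [ga]
    change _ = lam * x (Sum.inr j)
    rw [← h2 j]
    refine Finset.sum_nbij (fun e => e.1.1.1) ?_ ?_ ?_ ?_
    · intro e he
      simp only [Finset.mem_filter, Finset.mem_univ, true_and, hmem] at he ⊢
      have := e.2
      have hj : e.1.1.2 = j := congrArg Prod.fst (Sum.inr_injective he)
      rwa [hj] at this
    · rintro e he e' he' hb
      simp only [Finset.coe_filter, Set.mem_ofPred_eq, Finset.mem_univ, true_and, hmem] at he he' hb
      have hk : kr e = kr e' := ofLex.injective (Sum.inr_injective (he.trans he'.symm))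
      refine kckr_inj _ _ ?_ hk
      obtain ⟨⟨⟨a, b⟩, c⟩, he0⟩ := e
      obtain ⟨⟨⟨a', b'⟩, c'⟩, he0'⟩ := e'
      simp only at hb
      subst hb
      simp only [kr, EmbeddingLike.apply_eq_iff_eq, Prod.mk.injEq] at hk
      obtain ⟨hk1, hk2⟩ := hk
      subst hk1
      have : c = c' := by
        split_ifs at hk2
        · exact hk2
        · exact Bool.not_inj hk2
      simp [kc, this]
    · intro i hi
      simp only [Finset.coe_filter, Set.mem_ofPred_eq, Finset.mem_univ, true_and] at hi
      obtain ⟨e, he, hg⟩ := half_exists i j hi s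
      refine ⟨e, ?_, by simp [he]⟩
      simp only [Finset.coe_filter, Set.mem_ofPred_eq, Finset.mem_univ, true_and, hmem, hg]
    · intro e he
      rw [trOth_inr]; rfl

/-- If `G(M)` is connected, then the growth rates of `Geom(M)` and `Grid(M)` both exist, and
the former is strictly smaller iff `G(M)` contains a cycle. -/
theorem geom_lt_grid_iff_cyclic {t u : ℕ} (ht : 1 ≤ t) (hu : 1 ≤ u)
    (M : Fin t → Fin u → ℤ) (hM : ∀ i j, M i j = 0 ∨ M i j = 1 ∨ M i j = -1)
    (hconn : (rowColGraph M).Connected) :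
    ∃ gGeom gGrid : ℝ,
      Tendsto (fun n : ℕ => (geomCount M n : ℝ) ^ (1 / (n : ℝ))) atTop (nhds gGeom) ∧
      Tendsto (fun n : ℕ => (gridCount M n : ℝ) ^ (1 / (n : ℝ))) atTop (nhds gGrid) ∧
      (gGeom < gGrid ↔ ¬ (rowColGraph M).IsAcyclic) := by
  have hnt : Nontrivial (Fin t ⊕ Fin u) :=
    ⟨⟨Sum.inl ⟨0, ht⟩, Sum.inr ⟨0, hu⟩, by simp⟩⟩
  obtain ⟨x, lam, hx0, hlam, hx⟩ := perron_graph (rowColGraph M) hconn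
  obtain ⟨h1, h2⟩ := eigen_of_perron M x lam hx
  have hne : Nonempty (GE M) := by
    obtain ⟨w, hw⟩ := hconn.preconnected.exists_adj_of_nontrivial (Sum.inl ⟨0, ht⟩)
    obtain ⟨e, _⟩ := half_lift (M := M) (Sum.inl (⟨0, ht⟩, true)) w hw
    exact ⟨e⟩
  obtain ⟨L, hL, hLlt⟩ := trT_main (ga (M := M)) gb (fun e => by simp [ga, gb])
  have hgeom : Tendsto (fun n : ℕ => (geomCount M n : ℝ) ^ (1 / (n : ℝ))) atTop (nhds L) := by
    refine growth_compare _ (fun n => ((trT (ga (M := M)) gb n).ncard : ℝ)) L 1 le_rfl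
      (t * 2 + u * 2) (fun n => by positivity) (fun n => by positivity) hL (fun n => ?_)
      (fun n => ?_)
    · have a : (geomCount M n : ℝ) ≤ (trT (ga (M := M)) gb n).ncard := by
        exact_mod_cast geomCount_le M hM n
      have b : (1 : ℝ) ≤ ((n : ℝ) + 1) ^ (t * 2 + u * 2) :=
        one_le_pow₀ (by linarith [Nat.cast_nonneg (α := ℝ) n])
      rw [one_mul]
      refine a.trans (le_mul_of_one_le_left (by positivity) b)
    · have a : ((trT (ga (M := M)) gb n).ncard : ℝ) ≤
          geomCount M n * (((n : ℝ) + 1) ^ (t * 2) * ((n : ℝ) + 1) ^ (u * 2)) := by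
        exact_mod_cast le_geomCount M hM n
      rw [← pow_add] at a
      linarith
  obtain ⟨K, hK, hlow⟩ := gridCount_lower ht M hM (fun i => x (Sum.inl i)) (fun j => x (Sum.inr j))
    lam (fun i => hx0 _) h1 h2
  have hup := gridCount_upper M hM (fun i => x (Sum.inl i)) (fun j => x (Sum.inr j))
    lam (fun i => hx0 _) (fun j => hx0 _) hlam h1 h2
  have hgrid : Tendsto (fun n : ℕ => (gridCount M n : ℝ) ^ (1 / (n : ℝ))) atTop
      (nhds (lam ^ 2)) := by
    refine growth_compare _ (fun n => (lam ^ 2) ^ n) (lam ^ 2) K hK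
      (2 * (t * u) + (t + u)) (fun n => by positivity) (fun n => by positivity)
      (growth_const lam hlam) (fun n => ?_) hlow
    refine (hup n).trans (mul_le_mul_of_nonneg_right ?_ (by positivity))
    have hn1 : (1 : ℝ) ≤ (n : ℝ) + 1 := by linarith [Nat.cast_nonneg (α := ℝ) n]
    have b : ((n : ℝ) + 1) ^ (t + u) ≤ ((n : ℝ) + 1) ^ (2 * (t * u) + (t + u)) :=
      pow_le_pow_right₀ hn1 (by omega)
    exact b.trans (le_mul_of_one_le_left (by positivity) hK)
  refine ⟨L, lam ^ 2, hgeom, hgrid, ?_, ?_⟩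
  · intro hlt hac
    have : lam ^ 2 ≤ L := by
      refine le_of_tendsto_of_tendsto' hgrid hgeom fun n => ?_
      refine Real.rpow_le_rpow (by positivity) ?_ (by positivity)
      exact_mod_cast gridCount_le_geomCount M hM hconn hac n
    linarith
  · intro hcyc
    refine hLlt (fun v => x (gproj v)) (fun v => hx0 _) lam hlam ?_
      (fun e v => ∃ f, IsRay (rowColGraph M) f ∧ f 0 = gproj (trOth ga gb e v) ∧ f 1 = gproj v)
      ?_ ?_
    · intro v
      refine le_of_eq ?_
      rw [← half_sum (M := M) x lam h1 h2 v]
    · rintro e v ⟨f, hf, hf0, hf1⟩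
      obtain ⟨e', he1, he2, he3⟩ := half_lift (M := M) v (f 2) (by rw [← hf1]; exact hf.1 1)
      refine ⟨e', ?_, he1, fun n => f (n + 1), hf.shift, ?_, ?_⟩
      · rintro rfl
        exact hf.2 0 (hf0.trans (Eq.trans (by congr!) he2))
      · exact hf1.trans (congrArg gproj (Eq.trans he3.symm (by congr!)))
      · exact he2.symm.trans (by congr!)
    · intro v
      obtain ⟨f, hf, hf0⟩ := exists_ray hconn hcyc (gproj v)
      obtain ⟨e', he1, he2, he3⟩ := half_lift (M := M) v (f 1) (by rw [← hf0]; exact hf.1 0)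
      refine ⟨e', he1, f, hf, ?_, ?_⟩
      · exact hf0.trans (congrArg gproj (Eq.trans he3.symm (by congr!)))
      · exact he2.symm.trans (by congr!)
end
end

section
/- Let G be a finite connected simple graph and let H be a proper subgraph of G having at least one vertex (a subgraph of G with H ≠ G). Then the matching polynomials μ_H and μ_G each have at least one real root, and the greatest real root of μ_H is strictly smaller than the greatest real root of μ_G; that is, λ(H) < λ(G). -/
noncomputable section

/-- `m_k(G)`: the number of `k`-matchings of `G` (sets of `k` edges, pairwise disjoint). -/
def matchingNumber {V : Type*} [Fintype V] [DecidableEq V] (G : SimpleGraph V) (k : ℕ) : ℕ :=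
  Nat.card {s : Finset (Sym2 V) // s.card = k ∧ (∀ e ∈ s, e ∈ G.edgeSet) ∧
    ∀ e ∈ s, ∀ f ∈ s, e ≠ f → ∀ v : V, ¬(v ∈ e ∧ v ∈ f)}

/-- The matching polynomial `μ_G(z) = Σ_k (-1)^k m_k(G) z^(n-2k)`. -/
def matchingPoly {V : Type*} [Fintype V] [DecidableEq V] (G : SimpleGraph V) : Polynomial ℝ :=
  ∑ k ∈ Finset.range (Fintype.card V / 2 + 1),
    Polynomial.C ((-1 : ℝ) ^ k * (matchingNumber G k : ℝ)) *
      Polynomial.X ^ (Fintype.card V - 2 * k)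

/-- The matching polynomial of a subgraph `H` of `G` (viewed as a simple graph on its
vertex set). -/
def matchingPolySub {V : Type*} [Fintype V] [DecidableEq V] {G : SimpleGraph V}
    (H : G.Subgraph) : Polynomial ℝ :=
  letI : Fintype ↥H.verts := Fintype.ofFinite ↥H.verts
  matchingPoly H.coe

open Classical in
/-- Signed generating function of independent sets (w.r.t. the conflict relation `r`) inside `S`. -/
def indSum {E : Type*} (r : E → E → Prop) (S : Finset E) (t : ℝ) : ℝ :=
  ∑ M ∈ S.powerset, if (∀ e ∈ M, ∀ f ∈ M, e ≠ f → ¬ r e f) then (-t) ^ M.card else 0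

open Classical in
lemma indSum_insert {E : Type*} (r : E → E → Prop) (hr : ∀ a b, r a b → r b a)
    (S : Finset E) (e : E) (he : e ∉ S) (t : ℝ) :
    indSum r (insert e S) t = indSum r S t - t * indSum r (S.filter (fun f => ¬ r e f)) t := by
  unfold indSum
  rw [Finset.sum_powerset_insert he, sub_eq_add_neg]
  congr 1
  have hsub : (S.filter (fun f => ¬ r e f)).powerset ⊆ S.powerset :=
    Finset.powerset_mono.2 (Finset.filter_subset _ _)
  rw [← neg_mul, Finset.mul_sum, ← Finset.sum_subset hsub]
  · apply Finset.sum_congr rfl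
    intro M hM
    rw [Finset.mem_powerset] at hM
    have heM : e ∉ M := fun h => he (Finset.mem_filter.1 (hM h)).1
    have h1 : ∀ f ∈ M, ¬ r e f := fun f hf => (Finset.mem_filter.1 (hM hf)).2
    have key : (∀ a ∈ insert e M, ∀ f ∈ insert e M, a ≠ f → ¬ r a f) ↔
        (∀ a ∈ M, ∀ f ∈ M, a ≠ f → ¬ r a f) := by
      constructor
      · intro h a ha f hf
        exact h a (Finset.mem_insert_of_mem ha) f (Finset.mem_insert_of_mem hf)
      · intro h a ha f hf hne
        rcases Finset.mem_insert.1 ha with rfl | ha2 <;> rcases Finset.mem_insert.1 hf with rfl | hf2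
        · exact absurd rfl hne
        · exact h1 f hf2
        · exact fun h' => h1 a ha2 (hr _ _ h')
        · exact h a ha2 f hf2 hne
    by_cases hh : (∀ a ∈ M, ∀ f ∈ M, a ≠ f → ¬ r a f)
    · rw [if_pos (key.2 hh), if_pos hh, Finset.card_insert_of_notMem heM, pow_succ]
      ring
    · rw [if_neg (fun h => hh (key.1 h)), if_neg hh, mul_zero]
  · intro M hM hM'
    rw [Finset.mem_powerset] at hM hM'
    rw [if_neg]
    intro h
    apply hM'
    intro f hf
    refine Finset.mem_filter.2 ⟨hM hf, ?_⟩
    refine h e (Finset.mem_insert_self _ _) f (Finset.mem_insert_of_mem hf) ?_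
    rintro rfl
    exact he (hM hf)

lemma indSum_empty {E : Type*} (r : E → E → Prop) (t : ℝ) : indSum r ∅ t = 1 := by
  simp [indSum]

lemma indSum_zero {E : Type*} (r : E → E → Prop) (S : Finset E) : indSum r S 0 = 1 := by
  unfold indSum
  rw [Finset.sum_eq_single ∅]
  · simp
  · intro M _ hM
    have : M.card ≠ 0 := by simpa using hM
    simp [this]
  · simp

lemma indSum_continuous {E : Type*} (r : E → E → Prop) (S : Finset E) :
    Continuous (indSum r S) := by
  unfold indSum
  refine continuous_finsetSum _ fun M _ => ?_
  split_ifs <;> fun_prop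

/-- The smallest positive root. -/
lemma indSum_exists_root {E : Type*} (r : E → E → Prop) (hr : ∀ a b, r a b → r b a)
    (S : Finset E) (hS : S.Nonempty) :
    ∃ β : ℝ, 0 < β ∧ indSum r S β = 0 ∧ (∀ T ⊆ S, 0 ≤ indSum r T β) ∧
      ∀ T ⊆ S, ∀ t, 0 ≤ t → t < β → 0 < indSum r T t := by
  classical
  let B : Set ℝ := ⋃ T ∈ (S.powerset : Set (Finset E)), {t : ℝ | 0 ≤ t ∧ indSum r T t ≤ 0}
  have hBc : IsClosed B := by
    apply Set.Finite.isClosed_biUnion (Finset.finite_toSet _)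
    intro T _
    exact (isClosed_le continuous_const continuous_id).inter
      (isClosed_le (indSum_continuous r T) continuous_const)
  have memB : ∀ t, t ∈ B ↔ ∃ T ⊆ S, 0 ≤ t ∧ indSum r T t ≤ 0 := by
    intro t
    simp only [B, Set.mem_iUnion, Finset.mem_coe, Finset.mem_powerset, exists_prop]
    rfl
  have hBne : B.Nonempty := by
    obtain ⟨e, he⟩ := hS
    refine ⟨1, (memB 1).2 ⟨{e}, by simpa using he, zero_le_one, ?_⟩⟩
    have := indSum_insert r hr ∅ e (by simp) 1
    simp [indSum_empty] at this
    simp [this]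
  have hBb : BddBelow B := ⟨0, fun t ht => by
    obtain ⟨T, _, h, _⟩ := (memB t).1 ht
    exact h⟩
  have hβ := hBc.csInf_mem hBne hBb
  set β := sInf B with hβd
  obtain ⟨T0, hT0, hβ0, hT0'⟩ := (memB β).1 hβ
  have hlt : ∀ T ⊆ S, ∀ t, 0 ≤ t → t < β → 0 < indSum r T t := by
    intro T hT t ht htβ
    by_contra h
    exact absurd (csInf_le hBb ((memB t).2 ⟨T, hT, ht, not_lt.1 h⟩)) (not_le.2 htβ)
  have hpos : 0 < β := by
    rcases hβ0.lt_or_eq with h | h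
    · exact h
    · rw [← h, indSum_zero] at hT0'
      linarith
  have hnn : ∀ T ⊆ S, 0 ≤ indSum r T β := by
    intro T hT
    have h1 : Filter.Tendsto (indSum r T) (nhdsWithin β (Set.Iio β)) (nhds (indSum r T β)) :=
      ((indSum_continuous r T).tendsto β).mono_left nhdsWithin_le_nhds
    refine ge_of_tendsto h1 ?_
    filter_upwards [Ioo_mem_nhdsLT hpos] with t ht
    exact (hlt T hT t ht.1.le ht.2).le
  refine ⟨β, hpos, ?_, hnn, hlt⟩
  have up : ∀ U : Finset E, T0 ∪ U ⊆ S → indSum r (T0 ∪ U) β ≤ 0 := by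
    intro U
    induction U using Finset.induction_on with
    | empty => intro _; simpa using hT0'
    | insert a U ha ih =>
      intro h
      rw [Finset.union_insert] at h ⊢
      have h' : T0 ∪ U ⊆ S := (Finset.subset_insert _ _).trans h
      by_cases hmem : a ∈ T0 ∪ U
      · rw [Finset.insert_eq_of_mem hmem]; exact ih h'
      · rw [indSum_insert r hr _ _ hmem]
        have := hnn ((T0 ∪ U).filter (fun f => ¬ r a f)) ((Finset.filter_subset _ _).trans h')
        have := mul_nonneg hpos.le this
        have := ih h'
        linarith
  have := up S (Finset.union_subset hT0 (Finset.Subset.refl _))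
  rw [Finset.union_eq_right.2 hT0] at this
  exact le_antisymm this (hnn S (Finset.Subset.refl _))

/-- Strictness in the connected case. -/
lemma indSum_strict {E : Type*} (r : E → E → Prop) (hr : ∀ a b, r a b → r b a)
    (S : Finset E)
    (hconn : ∀ T ⊆ S, T.Nonempty → T ≠ S → ∃ e ∈ S, e ∉ T ∧ ∃ f ∈ T, r e f)
    (β : ℝ) (hβ : 0 < β) (hnn : ∀ T ⊆ S, 0 ≤ indSum r T β) :
    ∀ T ⊆ S, T ≠ S → 0 < indSum r T β := by
  classical
  have main : ∀ T : Finset E, T ⊆ S → T ≠ S → 0 < indSum r T β := by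
    intro T
    induction T using Finset.strongInduction with
    | H T ih =>
      intro hT hne
      rcases T.eq_empty_or_nonempty with rfl | hTn
      · rw [indSum_empty]; exact one_pos
      obtain ⟨e, heS, heT, f, hfT, hef⟩ := hconn T hT hTn hne
      have hss : T.filter (fun f => ¬ r e f) ⊂ T := by
        refine Finset.filter_ssubset.2 ⟨f, hfT, by simpa using hef⟩
      have h1 := ih _ hss (hss.subset.trans hT) (fun h => by
        rw [h] at hss
        exact absurd hT (not_subset_of_ssubset hss))
      have h2 := hnn (insert e T) (Finset.insert_subset heS hT)
      rw [indSum_insert r hr _ _ heT] at h2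
      have := mul_pos hβ h1
      linarith
  exact main

/-- Conflict of edges. -/
def edgeRel (V : Type*) (e f : Sym2 V) : Prop := ∃ v, v ∈ e ∧ v ∈ f

lemma edgeRel_symm (V : Type*) (a b : Sym2 V) (h : edgeRel V a b) : edgeRel V b a := by
  obtain ⟨v, h1, h2⟩ := h
  exact ⟨v, h2, h1⟩

lemma indSum_map {E F : Type*} (r : E → E → Prop) (s : F → F → Prop) (φ : E ↪ F)
    (h : ∀ a b, s (φ a) (φ b) ↔ r a b) (S : Finset E) (t : ℝ) :
    indSum s (S.map φ) t = indSum r S t := by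
  classical
  unfold indSum
  symm
  refine Finset.sum_bij (fun M _ => M.map φ) ?_ ?_ ?_ ?_
  · intro M hM
    simpa using hM
  · intro M _ N _ h
    exact Finset.map_injective φ h
  · intro N hN
    obtain ⟨M, hM, rfl⟩ := Finset.subset_map_iff.1 (Finset.mem_powerset.1 hN)
    exact ⟨M, Finset.mem_powerset.2 hM, rfl⟩
  · intro M _
    simp [h]

open Classical in
lemma matching_card_le {V : Type*} [Fintype V] (M : Finset (Sym2 V))
    (hd : ∀ e ∈ M, ¬ e.IsDiag)
    (h : ∀ e ∈ M, ∀ f ∈ M, e ≠ f → ¬ edgeRel V e f) : M.card ≤ Fintype.card V / 2 := by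
  have h1 : (M.biUnion (fun e => e.toFinset)).card = ∑ e ∈ M, e.toFinset.card := by
    apply Finset.card_biUnion
    intro e he f hf hne
    refine Finset.disjoint_left.2 ?_
    intro v hv hv'
    exact h e he f hf hne ⟨v, by simpa using hv, by simpa using hv'⟩
  have h2 : ∑ e ∈ M, e.toFinset.card = ∑ e ∈ M, 2 :=
    Finset.sum_congr rfl fun e he => Sym2.card_toFinset_of_not_isDiag e (hd e he)
  have h3 := Finset.card_le_univ (M.biUnion (fun e => e.toFinset))
  rw [h1, h2, Finset.sum_const, smul_eq_mul] at h3
  omega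

open Classical in
lemma matchingNumber_eq {V : Type*} [Fintype V] [DecidableEq V] (G : SimpleGraph V)
    (S : Finset (Sym2 V)) (hS : ∀ e, e ∈ S ↔ e ∈ G.edgeSet) (k : ℕ) :
    matchingNumber G k =
      (S.powerset.filter (fun M => (∀ e ∈ M, ∀ f ∈ M, e ≠ f → ¬ edgeRel V e f) ∧ M.card = k)).card := by
  unfold matchingNumber
  apply Nat.subtype_card
  intro M
  simp only [Finset.mem_filter, Finset.mem_powerset, edgeRel, not_exists]
  constructor
  · rintro ⟨h1, h2, h3⟩
    exact ⟨h3, fun e he => (hS e).1 (h1 he), h2⟩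
  · rintro ⟨h1, h2, h3⟩
    exact ⟨fun e he => (hS e).2 (h2 e he), h3, h1⟩

open Classical in
lemma matchingPoly_eval {V : Type*} [Fintype V] [DecidableEq V] (G : SimpleGraph V)
    (S : Finset (Sym2 V)) (hS : ∀ e, e ∈ S ↔ e ∈ G.edgeSet) (x : ℝ) (hx : x ≠ 0) :
    (matchingPoly G).eval x = x ^ Fintype.card V * indSum (edgeRel V) S ((x ^ 2)⁻¹) := by
  unfold matchingPoly indSum
  rw [Polynomial.eval_finsetSum]
  have hI := Finset.sum_filter (s := S.powerset)
    (fun M => ∀ e ∈ M, ∀ f ∈ M, e ≠ f → ¬ edgeRel V e f) (fun M => (-(x ^ 2)⁻¹) ^ M.card)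
  refine Eq.trans ?_ (congrArg (fun y => x ^ Fintype.card V * y) (hI.trans ?_))
  swap
  · exact Finset.sum_congr rfl fun M _ => by congr
  beta_reduce
  have hmaps : ∀ M ∈ S.powerset.filter (fun M => ∀ e ∈ M, ∀ f ∈ M, e ≠ f → ¬ edgeRel V e f),
      M.card ∈ Finset.range (Fintype.card V / 2 + 1) := by
    intro M hM
    obtain ⟨h1, h2⟩ := Finset.mem_filter.1 hM
    rw [Finset.mem_range, Nat.lt_succ_iff]
    exact matching_card_le M (fun e he => G.not_isDiag_of_mem_edgeSet
      ((hS e).1 (Finset.mem_powerset.1 h1 he))) h2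
  rw [← Finset.sum_fiberwise_of_maps_to hmaps, Finset.mul_sum]
  apply Finset.sum_congr rfl
  intro k hk
  rw [Finset.mem_range] at hk
  rw [Finset.filter_filter, Finset.sum_congr rfl (g := fun _ => (-(x ^ 2)⁻¹) ^ k)
    (fun M hM => by rw [(Finset.mem_filter.1 hM).2.2]), Finset.sum_const,
    ← matchingNumber_eq G S hS, nsmul_eq_mul]
  have h2 : Fintype.card V = (Fintype.card V - 2 * k) + 2 * k := by omega
  conv_rhs => rw [h2]
  have h3 : (-(x ^ 2)⁻¹) ^ k * x ^ (2 * k) = (-1) ^ k := by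
    rw [pow_mul, ← mul_pow]
    congr 1
    field_simp
  simp only [Polynomial.eval_mul, Polynomial.eval_C, Polynomial.eval_pow, Polynomial.eval_X]
  rw [pow_add, ← h3]
  ring

lemma matchingPoly_has_root {V : Type*} [Fintype V] [DecidableEq V] [Nonempty V]
    (G : SimpleGraph V) (S : Finset (Sym2 V)) (hS : ∀ e, e ∈ S ↔ e ∈ G.edgeSet) :
    ∃ x, (matchingPoly G).IsRoot x := by
  classical
  rcases S.eq_empty_or_nonempty with rfl | hn
  · have h : matchingPoly G = Polynomial.X ^ Fintype.card V := by
      apply Polynomial.eq_of_infinite_eval_eq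
      apply Set.Infinite.mono (s := Set.Ioi (0 : ℝ))
      · intro x hx
        have hx' : x ≠ 0 := (Set.mem_Ioi.1 hx).ne'
        simp only [Set.mem_ofPred_eq]
        rw [matchingPoly_eval G ∅ hS x hx', indSum_empty]
        simp
      · exact Set.Ioi_infinite 0
    exact ⟨0, by simp [h, Polynomial.IsRoot, Fintype.card_ne_zero]⟩
  · obtain ⟨β, hβ, h0, -⟩ := indSum_exists_root (edgeRel V) (edgeRel_symm V) S hn
    have hx : (Real.sqrt β)⁻¹ ≠ 0 := inv_ne_zero (Real.sqrt_pos.2 hβ).ne'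
    refine ⟨(Real.sqrt β)⁻¹, ?_⟩
    have h2 : ((Real.sqrt β)⁻¹ ^ 2)⁻¹ = β := by rw [inv_pow, inv_inv, Real.sq_sqrt hβ.le]
    rw [Polynomial.IsRoot, matchingPoly_eval G S hS _ hx, h2, h0, mul_zero]

/-- If `H` is a proper subgraph (with at least one vertex) of a finite connected simple
graph `G`, then `μ_H` and `μ_G` each have a greatest real root, and `λ(H) < λ(G)`. -/
theorem matching_root_strictly_monotone {V : Type*} [Fintype V] [DecidableEq V]
    (G : SimpleGraph V) (hG : G.Connected) (H : G.Subgraph)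
    (hne : H.verts.Nonempty) (hproper : H ≠ ⊤) :
    ∃ a b : ℝ,
      IsGreatest {x : ℝ | (matchingPolySub H).IsRoot x} a ∧
      IsGreatest {x : ℝ | (matchingPoly G).IsRoot x} b ∧
      a < b := by
  classical
  unfold matchingPolySub
  letI : Fintype ↥H.verts := Fintype.ofFinite ↥H.verts
  haveI : Nonempty ↥H.verts := hne.to_subtype
  -- cut property of connected graphs
  have cut : ∀ A : Set V, A.Nonempty → A ≠ Set.univ → ∃ u ∈ A, ∃ v, v ∉ A ∧ G.Adj u v := by
    intro A hA hA'
    by_contra hcon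
    push Not at hcon
    apply hA'
    obtain ⟨u, hu⟩ := hA
    ext w
    simp only [Set.mem_univ, iff_true]
    obtain ⟨p⟩ := hG.preconnected u w
    induction p with
    | nil => exact hu
    | cons h p ih =>
      apply ih
      by_contra hv
      exact hcon _ hu _ hv h
  set S : Finset (Sym2 V) := G.edgeSet.toFinite.toFinset with hSd
  have hS : ∀ e, e ∈ S ↔ e ∈ G.edgeSet := by intro e; simp [hSd]
  set T' : Finset (Sym2 H.verts) := H.coe.edgeSet.toFinite.toFinset with hTd
  have hT' : ∀ e, e ∈ T' ↔ e ∈ H.coe.edgeSet := by intro e; simp [hTd]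
  let φ : Sym2 H.verts ↪ Sym2 V := ⟨Sym2.map Subtype.val, Sym2.map.injective Subtype.val_injective⟩
  have hφ : ∀ a b, edgeRel V (φ a) (φ b) ↔ edgeRel H.verts a b := by
    intro a b
    simp only [edgeRel, φ, Function.Embedding.coeFn_mk, Sym2.mem_map]
    constructor
    · rintro ⟨v, ⟨x, hx, rfl⟩, ⟨y, hy, hxy⟩⟩
      have : y = x := Subtype.ext hxy
      subst this
      exact ⟨y, hx, hy⟩
    · rintro ⟨x, hx, hy⟩
      exact ⟨x.1, ⟨x, hx, rfl⟩, ⟨x, hy, rfl⟩⟩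
  have hTmem : ∀ a b, s(a, b) ∈ T'.map φ → H.Adj a b := by
    intro a b hab
    obtain ⟨e, he, heq⟩ := Finset.mem_map.1 hab
    rw [hT'] at he
    induction e with
    | _ x y =>
      have hxy : H.Adj x.1 y.1 := by simpa using he
      simp only [φ, Function.Embedding.coeFn_mk, Sym2.map_mk, Sym2.eq_iff] at heq
      rcases heq with ⟨rfl, rfl⟩ | ⟨rfl, rfl⟩
      · exact hxy
      · exact hxy.symm
  have hTS : T'.map φ ⊆ S := by
    intro e he
    induction e with
    | _ a b => exact (hS _).2 (H.adj_sub (hTmem a b he))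
  have hTne : T'.map φ ≠ S := by
    intro heq
    have hadj : ∀ a b, G.Adj a b → H.Adj a b := fun a b hab =>
      hTmem a b (heq ▸ (hS s(a, b)).2 hab)
    apply hproper
    have hv : H.verts = Set.univ := by
      by_contra hv
      obtain ⟨u, _, v, hv', huv⟩ := cut _ hne hv
      exact hv' (H.edge_vert (hadj u v huv).symm)
    ext a b
    · simp [hv]
    · simpa using ⟨fun h => H.adj_sub h, hadj a b⟩
  have hSn : S.Nonempty := by
    by_contra hcon
    rw [Finset.not_nonempty_iff_eq_empty] at hcon
    apply hTne
    rw [hcon] at hTS ⊢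
    exact Finset.subset_empty.1 hTS
  have hconn : ∀ T ⊆ S, T.Nonempty → T ≠ S →
      ∃ e ∈ S, e ∉ T ∧ ∃ f ∈ T, edgeRel V e f := by
    intro T hT hTn hTne
    by_contra hcon
    push Not at hcon
    let A : Set V := {v | ∃ f ∈ T, v ∈ f}
    have hA : A.Nonempty := by
      obtain ⟨f, hf⟩ := hTn
      induction f with
      | _ a b => exact ⟨a, _, hf, by simp⟩
    have hAu : A = Set.univ := by
      by_contra hA'
      obtain ⟨u, ⟨f, hf, huf⟩, v, hv, huv⟩ := cut A hA hA'
      refine hcon s(u, v) ((hS _).2 huv) (fun h => hv ⟨_, h, by simp⟩) f hf ⟨u, by simp, huf⟩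
    apply hTne
    refine Finset.Subset.antisymm hT fun e he => ?_
    by_contra heT
    induction e with
    | _ a b =>
      obtain ⟨f, hf, haf⟩ : a ∈ A := hAu ▸ Set.mem_univ a
      exact hcon _ he heT f hf ⟨a, by simp, haf⟩
  obtain ⟨β, hβ, h0, hnn, hlt⟩ := indSum_exists_root (edgeRel V) (edgeRel_symm V) S hSn
  have hstrict := indSum_strict (edgeRel V) (edgeRel_symm V) S hconn β hβ hnn
  have hsq := Real.sqrt_pos.2 hβ
  set b := (Real.sqrt β)⁻¹ with hb
  have hbpos : 0 < b := inv_pos.2 hsq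
  have hb2 : (b ^ 2)⁻¹ = β := by rw [hb, inv_pow, inv_inv, Real.sq_sqrt hβ.le]
  have hgt : ∀ x, b < x → (x ^ 2)⁻¹ < β := by
    intro x hx
    rw [← hb2]
    have : b ^ 2 < x ^ 2 := by gcongr
    have hbb : 0 < b ^ 2 := pow_pos hbpos 2
    exact (inv_lt_inv₀ (hbb.trans this) hbb).2 this
  have hH : ∀ x, b ≤ x → 0 < (matchingPoly H.coe).eval x := by
    intro x hx
    have hx0 : 0 < x := hbpos.trans_le hx
    rw [matchingPoly_eval H.coe T' hT' x hx0.ne', ← indSum_map _ (edgeRel V) φ hφ]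
    apply mul_pos (by positivity)
    rcases hx.eq_or_lt with h | h
    · rw [← h, hb2]
      exact hstrict _ hTS hTne
    · exact hlt _ hTS _ (by positivity) (hgt x h)
  have hHne : matchingPoly H.coe ≠ 0 := by
    intro h
    have := hH b le_rfl
    simp [h] at this
  have hfin : {x : ℝ | (matchingPoly H.coe).IsRoot x}.Finite :=
    Polynomial.finite_setOfPred_isRoot hHne
  obtain ⟨a, ha, hamax⟩ := Set.exists_max_image _ id hfin (matchingPoly_has_root H.coe T' hT')
  refine ⟨a, b, ⟨ha, fun x hx => hamax x hx⟩, ⟨?_, ?_⟩, ?_⟩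
  · show (matchingPoly G).eval b = 0
    rw [matchingPoly_eval G S hS b hbpos.ne', hb2, h0, mul_zero]
  · intro x hx
    by_contra hxb
    rw [not_le] at hxb
    have hx0 : 0 < x := hbpos.trans hxb
    have hx' : (matchingPoly G).eval x = 0 := hx
    rw [matchingPoly_eval G S hS x hx0.ne'] at hx'
    have := mul_pos (pow_pos hx0 (Fintype.card V))
      (hlt S (Finset.Subset.refl _) _ (by positivity) (hgt x hxb))
    linarith
  · by_contra hab
    have h1 := hH a (not_lt.1 hab)
    have h2 : (matchingPoly H.coe).eval a = 0 := ha
    linarith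
end
end

section
/- Let (A_n)_{n≥1} be a sequence of nonempty finite sets of nonnegative real numbers, and set ℓ_n = min A_n, u_n = max A_n, Δ_n = u_n − ℓ_n, and δ_n = δ(A_n), the largest gap of A_n. Suppose the sequence (u_n) is bounded, β > 1, and for every n, δ_n ≤ Σ_{i=1}^{∞} Δ_{n+i} β^{−i}. Then { Σ_{n=1}^{∞} a_n β^{−n} : a_n ∈ A_n for all n } = [ Σ_{n=1}^{∞} ℓ_n β^{−n}, Σ_{n=1}^{∞} u_n β^{−n} ]. -/
noncomputable section

/-- The largest gap of a finite set of reals: the maximum of `b - a` over pairs `a < b` of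
elements with no element strictly between them (`0` for a singleton). -/
def largestGap (s : Finset ℝ) : ℝ :=
  sSup {d : ℝ | ∃ a ∈ s, ∃ b ∈ s, a < b ∧ (∀ x ∈ s, ¬(a < x ∧ x < b)) ∧ d = b - a}

theorem gap_step (s : Finset ℝ) (hs : s.Nonempty) (L U z : ℝ) (hg : largestGap s ≤ U - L)
    (h1 : s.min' hs + L ≤ z) (h2 : z ≤ s.max' hs + U) :
    ∃ a ∈ s, L ≤ z - a ∧ z - a ≤ U := by
  classical
  have hF : (s.filter (fun x => x + L ≤ z)).Nonempty :=
    ⟨s.min' hs, Finset.mem_filter.2 ⟨s.min'_mem hs, h1⟩⟩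
  obtain ⟨a, haF, hamax⟩ := Finset.exists_max_image _ id hF
  obtain ⟨has, haz⟩ := Finset.mem_filter.1 haF
  refine ⟨a, has, by linarith, ?_⟩
  by_cases hG : (s.filter (fun x => a < x)).Nonempty
  · obtain ⟨b, hbG, hbmin⟩ := Finset.exists_min_image _ id hG
    obtain ⟨hbs, hab⟩ := Finset.mem_filter.1 hbG
    have hbz : z < b + L := by
      by_contra hcon
      have := hamax b (Finset.mem_filter.2 ⟨hbs, not_lt.1 hcon⟩)
      simp only [id] at this
      linarith
    have hle : b - a ≤ largestGap s := by
      apply le_csSup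
      · refine ⟨s.max' hs - s.min' hs, ?_⟩
        rintro d ⟨p, hp, q, hq, -, -, rfl⟩
        have := s.le_max' q hq
        have := s.min'_le p hp
        linarith
      · refine ⟨a, has, b, hbs, hab, ?_, rfl⟩
        rintro x hx ⟨hax, hxb⟩
        have := hbmin x (Finset.mem_filter.2 ⟨hx, hax⟩)
        simp only [id] at this
        linarith
    linarith
  · have : s.max' hs ≤ a := by
      by_contra hcon
      exact hG ⟨s.max' hs, Finset.mem_filter.2 ⟨s.max'_mem hs, not_le.1 hcon⟩⟩
    linarith

theorem summable_geo (β : ℝ) (hβ : 1 < β) (C : ℝ) : Summable (fun n : ℕ => C / β ^ (n + 1)) := by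
  have h : Summable (fun n : ℕ => (β⁻¹) ^ n) :=
    summable_geometric_of_lt_one (by positivity) (inv_lt_one_of_one_lt₀ hβ)
  have := h.mul_left (C / β)
  refine this.congr fun n => ?_
  have : β ≠ 0 := by positivity
  rw [inv_pow, pow_succ]
  field_simp

theorem summable_exp (β : ℝ) (hβ : 1 < β) (C : ℝ) (f : ℕ → ℝ) (h0 : ∀ n, 0 ≤ f n)
    (h1 : ∀ n, f n ≤ C) : Summable (fun n : ℕ => f n / β ^ (n + 1)) := by
  have hb : 0 < β := by linarith
  refine Summable.of_nonneg_of_le (fun n => div_nonneg (h0 n) (by positivity)) (fun n => ?_)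
    (summable_geo β hβ C)
  have := h1 n
  gcongr

/-- Tail recursion for expansions. -/
theorem tail_rec (β : ℝ) (hβ : 1 < β) (C : ℝ) (f : ℕ → ℝ) (h0 : ∀ n, 0 ≤ f n)
    (h1 : ∀ n, f n ≤ C) (n : ℕ) :
    β * ∑' i : ℕ, f (n + i) / β ^ (i + 1) = f n + ∑' i : ℕ, f (n + 1 + i) / β ^ (i + 1) := by
  have hb : β ≠ 0 := by positivity
  rw [(summable_exp β hβ C (fun i => f (n + i)) (fun _ => h0 _) (fun _ => h1 _)).tsum_eq_zero_add,
    mul_add, ← tsum_mul_left]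
  congr 1
  · simp
    field_simp
  · refine tsum_congr fun i => ?_
    rw [show n + (i + 1) = n + 1 + i by ring, pow_succ β (i + 1)]
    field_simp

/-- Expansions in a non-integer base `β` with the `n`-th digit drawn from the set `A n`
(here `A n` is the set of allowed `(n+1)`-st digits, weighted by `β^-(n+1)`).  If the
maxima are bounded and `β` satisfies the gap inequalities, then the set of representable
numbers is exactly the closed interval from the smallest to the largest representable
value. -/
theorem expansions_form_interval (A : ℕ → Finset ℝ) (hne : ∀ n, (A n).Nonempty)
    (hnonneg : ∀ n, ∀ x ∈ A n, 0 ≤ x) (C : ℝ)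
    (hbd : ∀ n, (A n).max' (hne n) ≤ C) (β : ℝ) (hβ : 1 < β)
    (hgap : ∀ n, largestGap (A n) ≤
      ∑' i : ℕ,
        ((A (n + i + 1)).max' (hne (n + i + 1)) - (A (n + i + 1)).min' (hne (n + i + 1))) /
          β ^ (i + 1)) :
    {x : ℝ | ∃ a : ℕ → ℝ, (∀ n, a n ∈ A n) ∧ x = ∑' n : ℕ, a n / β ^ (n + 1)} =
      Set.Icc (∑' n : ℕ, (A n).min' (hne n) / β ^ (n + 1))
        (∑' n : ℕ, (A n).max' (hne n) / β ^ (n + 1)) := by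
  have hb : 0 < β := by linarith
  have hle : ∀ n, ∀ x ∈ A n, x ≤ C := fun n x hx => ((A n).le_max' x hx).trans (hbd n)
  have hsum : ∀ a : ℕ → ℝ, (∀ n, a n ∈ A n) → Summable (fun n : ℕ => a n / β ^ (n + 1)) :=
    fun a ha => summable_exp β hβ C a (fun n => hnonneg n _ (ha n)) (fun n => hle n _ (ha n))
  obtain ⟨l, hl⟩ : ∃ l : ℕ → ℝ, ∀ n, l n = (A n).min' (hne n) := ⟨_, fun _ => rfl⟩
  obtain ⟨u, hu⟩ : ∃ u : ℕ → ℝ, ∀ n, u n = (A n).max' (hne n) := ⟨_, fun _ => rfl⟩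
  have hlm : ∀ n, l n ∈ A n := fun n => hl n ▸ (A n).min'_mem _
  have hum : ∀ n, u n ∈ A n := fun n => hu n ▸ (A n).max'_mem _
  simp only [← hl, ← hu] at hgap ⊢
  have hl0 : ∀ n, 0 ≤ l n := fun n => hnonneg n _ (hlm n)
  have hu0 : ∀ n, 0 ≤ u n := fun n => hnonneg n _ (hum n)
  have hlC : ∀ n, l n ≤ C := fun n => hle n _ (hlm n)
  have huC : ∀ n, u n ≤ C := fun n => hle n _ (hum n)
  ext x
  simp only [Set.mem_setOf_eq, Set.mem_Icc]
  constructor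
  · rintro ⟨a, ha, rfl⟩
    constructor
    · refine (hsum l hlm).tsum_le_tsum (fun n => ?_) (hsum a ha)
      have : l n ≤ a n := hl n ▸ (A n).min'_le _ (ha n)
      gcongr
    · refine (hsum a ha).tsum_le_tsum (fun n => ?_) (hsum u hum)
      have : a n ≤ u n := hu n ▸ (A n).le_max' _ (ha n)
      gcongr
  · rintro ⟨hx1, hx2⟩
    obtain ⟨L, hL⟩ : ∃ L : ℕ → ℝ, ∀ n, L n = ∑' i : ℕ, l (n + i) / β ^ (i + 1) := ⟨_, fun _ => rfl⟩
    obtain ⟨U, hU⟩ : ∃ U : ℕ → ℝ, ∀ n, U n = ∑' i : ℕ, u (n + i) / β ^ (i + 1) := ⟨_, fun _ => rfl⟩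
    have hLrec : ∀ n, β * L n = l n + L (n + 1) := fun n => by
      rw [hL, hL]; exact tail_rec β hβ C l hl0 hlC n
    have hUrec : ∀ n, β * U n = u n + U (n + 1) := fun n => by
      rw [hU, hU]; exact tail_rec β hβ C u hu0 huC n
    have hgap2 : ∀ n, largestGap (A n) ≤ U (n + 1) - L (n + 1) := fun n => by
      refine (hgap n).trans (le_of_eq ?_)
      rw [hL, hU, ← Summable.tsum_sub
        (summable_exp β hβ C (fun i => u (n + 1 + i)) (fun _ => hu0 _) (fun _ => huC _))
        (summable_exp β hβ C (fun i => l (n + 1 + i)) (fun _ => hl0 _) (fun _ => hlC _))]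
      refine tsum_congr fun i => ?_
      rw [show n + i + 1 = n + 1 + i by ring, sub_div]
    have hstep : ∀ n y, ∃ a, a ∈ A n ∧ (L n ≤ y ∧ y ≤ U n →
        L (n + 1) ≤ β * y - a ∧ β * y - a ≤ U (n + 1)) := by
      intro n y
      by_cases hy : L n ≤ y ∧ y ≤ U n
      · have e1 := mul_le_mul_of_nonneg_left hy.1 hb.le
        have e2 := mul_le_mul_of_nonneg_left hy.2 hb.le
        rw [hLrec, hl] at e1
        rw [hUrec, hu] at e2
        obtain ⟨a, ha, h⟩ := gap_step (A n) (hne n) _ _ _ (hgap2 n) e1 e2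
        exact ⟨a, ha, fun _ => h⟩
      · exact ⟨l n, hlm n, fun h => absurd h hy⟩
    choose g hgA hg using hstep
    obtain ⟨y, hy0, hys⟩ : ∃ y : ℕ → ℝ, y 0 = x ∧ ∀ n, y (n + 1) = β * y n - g n (y n) :=
      ⟨fun n => Nat.rec x (fun n y => β * y - g n y) n, rfl, fun _ => rfl⟩
    have hyI : ∀ n, L n ≤ y n ∧ y n ≤ U n := by
      intro n
      induction n with
      | zero =>
        rw [hy0, hL, hU]
        simpa using And.intro hx1 hx2
      | succ n ih => rw [hys]; exact hg n _ ih
    refine ⟨fun n => g n (y n), fun n => hgA n _, ?_⟩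
    have hpart : ∀ n, ∑ i ∈ Finset.range n, g i (y i) / β ^ (i + 1) = x - y n / β ^ n := by
      intro n
      induction n with
      | zero => simp [hy0]
      | succ n ih =>
        rw [Finset.sum_range_succ, ih, hys, pow_succ]
        field_simp
        ring
    have hL0 : ∀ n, 0 ≤ L n := fun n => by
      rw [hL]; exact tsum_nonneg fun i => div_nonneg (hl0 _) (by positivity)
    have hUK : ∀ n, U n ≤ ∑' i : ℕ, C / β ^ (i + 1) := fun n => by
      rw [hU]
      refine (summable_exp β hβ C (fun i => u (n + i)) (fun _ => hu0 _)
        (fun _ => huC _)).tsum_le_tsum (fun i => ?_) (summable_geo β hβ C)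
      have := huC (n + i)
      gcongr
    have hlim : Filter.Tendsto (fun n => y n / β ^ n) Filter.atTop (nhds 0) := by
      refine squeeze_zero (g := fun n => (∑' i : ℕ, C / β ^ (i + 1)) / β ^ n) (fun n => ?_)
        (fun n => ?_) ?_
      · exact div_nonneg ((hL0 n).trans (hyI n).1) (by positivity)
      · have := (hyI n).2.trans (hUK n)
        gcongr
      · exact (tendsto_pow_atTop_atTop_of_one_lt hβ).const_div_atTop _
    have h1 := (hsum (fun n => g n (y n)) (fun n => hgA n _)).hasSum.tendsto_sum_nat
    have h2 : Filter.Tendsto (fun n => x - y n / β ^ n) Filter.atTop (nhds (x - 0)) :=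
      hlim.const_sub x
    simp only [hpart] at h1
    rw [sub_zero] at h2
    exact tendsto_nhds_unique h2 h1
end
end
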